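/- arXiv:1510.00316 — 3 statements merged into one kernel-verified Lean document; each statement's English description precedes it below -/
import Mathlib

section
/- Fix N ≥ 1 and 1 < p_min ≤ p_max < ∞. There exists μ̃ = μ̃(N, p_min, p_max) > 0 such that for every μ ≥ μ̃, every L > 0, D > 0 and A₀ > 0 there exists r̃ = r̃(p_min, p_max, L, D, A₀, μ) > 0 with the following property: for every Lipschitz p : ℝ^N → ℝ with p_min ≤ p(x) ≤ p_max and ‖∇p‖_{L^∞} ≤ L, every x₀ ∈ ℝ^N, every 0 < δ ≤ r̃ and every A with δ ≤ A ≤ A₀, the function ψ(x) = A (e^{−μ|x−x₀|²/δ²} − e^{−μ}) / (e^{−μ/16} − e^{−μ}) satisfies Δ_{p(x)} ψ ≥ D in the annulus B_δ(x₀) \ closure(B_{δ/4}(x₀)), in the weak sense: ∫ |∇ψ(x)|^{p(x)−2} ⟨∇ψ(x), ∇φ(x)⟩ dx ≤ −D ∫ φ(x) dx for every nonnegative φ ∈ C_c^∞(B_δ(x₀) \ closure(B_{δ/4}(x₀))). -/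
/-!
With `r = |x - x₀|` and `ℓ(r) = log |∇ψ|`, the flux `|∇ψ|^{p-2} ∇ψ` is `-E(x) (x - x₀)`, where
`E = exp ((p - 1) ℓ(r) - log r)`. Formally `-div (E(x) (x - x₀))` is `E` times
`-N + 1 - r (∂_r p) ℓ + (p - 1) (2 μ r²/δ² - 1)`. The last summand is at least `N + 1` on the
annulus if `μ` is large, the exponent term is at most `L δ |ℓ| ≤ L δ (log (A₀/δ) + C(μ))`, which is
small with `δ`, and `E ≥ c(μ, p_max)/δ` exceeds `D` for small `δ`.

As `p` is only Lipschitz, `div` is replaced by a difference quotient along dilations about `x₀`: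
`⟨x - x₀, ∇φ⟩` is the derivative at `t = 0` of `φ(x₀ + e^t (x - x₀))`, and the change of variables
`x ↦ x₀ + e^{-t} (x - x₀)` moves the dilation onto `E` (`dilation_le`). The above computation then
becomes an inequality for the increment of `log E` over a finite step (`radial_estimate`), where
`e^b - e^a ≥ e^a (b - a)` passes from the logarithm to `E`, and no differentiability of `p` is
needed.
-/

open MeasureTheory Metric Set Filter Topology Asymptotics RealInnerProductSpace

noncomputable section

abbrev Euc (N : ℕ) : Type := EuclideanSpace ℝ (Fin N)

/-- `φ` is an admissible test function on `Ω`: smooth with compact support contained in `Ω`. -/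
def IsTest {N : ℕ} (Ω : Set (Euc N)) (φ : Euc N → ℝ) : Prop :=
  ContDiff ℝ (⊤ : ℕ∞) φ ∧ HasCompactSupport φ ∧ tsupport φ ⊆ Ω

/-- `u ∈ C¹(Ω)` is a weak solution of `Δ_{q(x)} u = g` in `Ω`:
`∫_Ω |∇u|^{q(x)-2} ⟨∇u, ∇φ⟩ = -∫_Ω g φ` for all test functions `φ`. -/
def IsWeakSol {N : ℕ} (Ω : Set (Euc N)) (q u g : Euc N → ℝ) : Prop :=
  ContDiffOn ℝ 1 u Ω ∧
    ∀ φ : Euc N → ℝ, IsTest Ω φ →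
      (∫ x in Ω, ‖gradient u x‖ ^ (q x - 2) * ⟪gradient u x, gradient φ x⟫)
        = - ∫ x in Ω, g x * φ x

/-- The structural hypotheses on `β`: Lipschitz, positive exactly on `(0,1)`, with integral `M > 0`. -/
structure IsBeta (β : ℝ → ℝ) (M : ℝ) : Prop where
  lipschitz : ∃ K : NNReal, LipschitzWith K β
  pos : ∀ s ∈ Set.Ioo (0:ℝ) 1, 0 < β s
  vanish : ∀ s ∉ Set.Ioo (0:ℝ) 1, β s = 0
  integral : (∫ s in (0:ℝ)..1, β s) = M
  M_pos : 0 < M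

/-- `β_ε(s) = (1/ε) β(s/ε)`. -/
def betaEps (β : ℝ → ℝ) (ε s : ℝ) : ℝ := (1 / ε) * β (s / ε)

/-- A nonnegative `u ∈ C¹(Ω)` solving `Δ_{p_ε(x)} u = β_ε(u) + f` weakly in `Ω`,
i.e. a solution of `P_ε(f, p_ε)` in `Ω`. -/
def IsSolPe {N : ℕ} (Ω : Set (Euc N)) (β : ℝ → ℝ) (ε : ℝ) (pe f u : Euc N → ℝ) : Prop :=
  (∀ x ∈ Ω, 0 ≤ u x) ∧ IsWeakSol Ω pe u (fun x => betaEps β ε (u x) + f x)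

/-- The barrier `ψ(x) = A (e^{-μ|x-x₀|²/δ²} - e^{-μ}) / (e^{-μ/16} - e^{-μ})`. -/
def psiFun {N : ℕ} (A μ δ : ℝ) (x₀ : Euc N) : Euc N → ℝ :=
  fun x => A * ((Real.exp (-μ * ‖x - x₀‖ ^ 2 / δ ^ 2) - Real.exp (-μ)) /
    (Real.exp (-μ / 16) - Real.exp (-μ)))

/-! ### Integration by parts along dilations -/

/-- A weak form of `div (E(x) (x - x₀)) ≤ -D`: if the rescaled field `e^{-Nt} E(x₀ + e^{-t}(x - x₀))`
grows from `E x` at rate at least `D` for small `t > 0`, at every point where `φ ≠ 0`, then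
`∫ E ⟨x - x₀, ∇φ⟩ ≥ D ∫ φ`, although `E` is only continuous. -/
lemma dilation_le {N : ℕ} {x₀ : Euc N} {δ D t₀ : ℝ} (ht₀ : 0 < t₀) {E φ : Euc N → ℝ}
    (hE : Continuous E) (hφ : IsTest (ball x₀ δ) φ) (hφ0 : ∀ x, 0 ≤ φ x)
    (h : ∀ x, φ x ≠ 0 → ∀ t, 0 < t → t ≤ t₀ →
      D * t ≤ Real.exp (-(N * t)) * E (x₀ + Real.exp (-t) • (x - x₀)) - E x) :
    D * ∫ x, φ x ≤ ∫ x, E x * ⟪x - x₀, gradient φ x⟫ := by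
  obtain ⟨hsm, hcs, hsupp⟩ := hφ
  have hsm1 : ContDiff ℝ 1 φ := hsm.of_le (by exact_mod_cast le_top)
  have hφc : Continuous φ := hsm.continuous
  obtain ⟨K, hK⟩ := hsm1.lipschitzWith_of_hasCompactSupport hcs one_ne_zero
  have hzero : ∀ x, x ∉ closedBall x₀ δ → φ x = 0 := fun x hx =>
    image_eq_zero_of_notMem_tsupport fun hx' => hx (ball_subset_closedBall (hsupp hx'))
  obtain ⟨M, hM⟩ := (isCompact_closedBall x₀ δ).exists_bound_of_continuousOn hE.continuousOn
  have hz2 : ∀ t, 0 ≤ t → ∀ x, x ∉ closedBall x₀ δ →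
      φ (x₀ + Real.exp t • (x - x₀)) = 0 := by
    intro t ht x hx
    apply hzero
    rw [mem_closedBall, dist_eq_norm, not_le] at hx ⊢
    rw [add_sub_cancel_left, norm_smul, Real.norm_eq_abs, abs_of_pos (Real.exp_pos t)]
    have := Real.one_le_exp ht
    nlinarith [norm_nonneg (x - x₀)]
  have hint : ∀ f : Euc N → ℝ, Continuous f → (∀ x, x ∉ closedBall x₀ δ → f x = 0) →
      Integrable f := fun f hf hf0 =>
    hf.integrable_of_hasCompactSupport (HasCompactSupport.intro (isCompact_closedBall x₀ δ) hf0)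
  have hcd : ∀ t : ℝ, Continuous fun x : Euc N => φ (x₀ + Real.exp t • (x - x₀)) := fun t =>
    hφc.comp (by fun_prop)
  have hlim : Tendsto (fun t : ℝ => ∫ x, E x * (t⁻¹ * (φ (x₀ + Real.exp t • (x - x₀)) - φ x)))
      (𝓝[>] 0) (𝓝 (∫ x, E x * ⟪x - x₀, gradient φ x⟫)) := by
    refine tendsto_integral_filter_of_dominated_convergence
      ((closedBall x₀ δ).indicator fun _ => M * (K * (2 * δ))) ?_ ?_ ?_ ?_
    · exact Eventually.of_forall fun t =>
        (hE.mul (continuous_const.mul ((hcd t).sub hφc))).aestronglyMeasurable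
    · filter_upwards [Ioo_mem_nhdsGT (show (0:ℝ) < 1 by norm_num)] with t ht
      refine Eventually.of_forall fun x => ?_
      by_cases hx : x ∈ closedBall x₀ δ
      · rw [indicator_of_mem hx, norm_mul]
        refine mul_le_mul (hM x hx) ?_ (norm_nonneg _) ((norm_nonneg _).trans (hM x hx))
        have h1 := hK.dist_le_mul (x₀ + Real.exp t • (x - x₀)) x
        have h2 : x₀ + Real.exp t • (x - x₀) - x = (Real.exp t - 1) • (x - x₀) := by module
        rw [dist_eq_norm, dist_eq_norm, h2, norm_smul, Real.norm_eq_abs (Real.exp t - 1)] at h1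
        have h3 := Real.abs_exp_sub_one_le (x := t) (by rw [abs_of_pos ht.1]; exact ht.2.le)
        rw [abs_of_pos ht.1] at h3
        rw [mem_closedBall, dist_eq_norm] at hx
        rw [norm_mul, norm_inv, Real.norm_eq_abs t, abs_of_pos ht.1, inv_mul_le_iff₀ ht.1]
        calc _ ≤ _ := h1
          _ ≤ K * ((2 * t) * δ) := by
            have := ht.1
            gcongr
          _ = _ := by ring
      · rw [indicator_of_notMem hx, hz2 t ht.1.le x hx, hzero x hx]; simp
    · exact (integrable_indicator_iff measurableSet_closedBall).2
        (integrableOn_const (isCompact_closedBall x₀ δ).measure_lt_top.ne)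
    · refine Eventually.of_forall fun x => Tendsto.const_mul _ ?_
      have hd : HasDerivAt (fun t : ℝ => φ (x₀ + Real.exp t • (x - x₀)))
          ⟪x - x₀, gradient φ x⟫ 0 := by
        have h1 : HasDerivAt (fun t : ℝ => x₀ + Real.exp t • (x - x₀)) (x - x₀) 0 := by
          simpa using ((Real.hasDerivAt_exp 0).smul_const (x - x₀)).const_add x₀
        have h2 : HasFDerivAt φ (fderiv ℝ φ x) (x₀ + Real.exp 0 • (x - x₀)) := by
          have : x₀ + Real.exp 0 • (x - x₀) = x := by simp
          rw [this]
          exact (hsm1.differentiable one_ne_zero x).hasFDerivAt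
        have h3 := h2.comp_hasDerivAt (0:ℝ) h1
        have h4 : fderiv ℝ φ x (x - x₀) = ⟪x - x₀, gradient φ x⟫ := by
          rw [real_inner_comm, gradient, InnerProductSpace.toDual_symm_apply]
        rw [h4] at h3
        exact h3
      have h5 := hd.tendsto_slope_zero_right
      simpa using h5
  have hkey : ∀ t, 0 < t → t ≤ t₀ →
      D * ∫ x, φ x ≤ ∫ x, E x * (t⁻¹ * (φ (x₀ + Real.exp t • (x - x₀)) - φ x)) := by
    intro t ht htt
    set E' : Euc N → ℝ := fun x => Real.exp (-(N * t)) * E (x₀ + Real.exp (-t) • (x - x₀)) with hE'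
    have hE'c : Continuous E' := continuous_const.mul (hE.comp (by fun_prop))
    have hcov : ∫ x, E x * φ (x₀ + Real.exp t • (x - x₀)) = ∫ x, E' x * φ x := by
      rw [← integral_add_right_eq_self (fun x => E x * φ (x₀ + Real.exp t • (x - x₀))) x₀,
        ← integral_add_right_eq_self (fun x => E' x * φ x) x₀]
      have h1 := Measure.integral_comp_smul (volume : Measure (Euc N))
        (fun z => E (x₀ + Real.exp (-t) • z) * φ (x₀ + z)) (Real.exp t)
      have h2 : |(Real.exp t ^ Module.finrank ℝ (Euc N))⁻¹| = Real.exp (-(N * t)) := by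
        rw [finrank_euclideanSpace_fin, ← Real.exp_nat_mul, ← Real.exp_neg, Real.abs_exp]
      rw [h2, smul_eq_mul, ← integral_const_mul] at h1
      refine (integral_congr_ae (Eventually.of_forall fun z => ?_)).trans
        (h1.trans (integral_congr_ae (Eventually.of_forall fun z => ?_)))
      · simp only [add_sub_cancel_right, smul_smul]
        rw [← Real.exp_add, neg_add_cancel, Real.exp_zero, one_smul, add_comm]
      · simp only [hE', add_sub_cancel_right]
        rw [add_comm z x₀]; ring
    have hi1 : Integrable fun x => E x * φ (x₀ + Real.exp t • (x - x₀)) :=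
      hint _ (hE.mul (hcd t)) fun x hx => by rw [hz2 t ht.le x hx, mul_zero]
    have hi2 : Integrable fun x => E x * φ x :=
      hint _ (hE.mul hφc) fun x hx => by rw [hzero x hx, mul_zero]
    have hi3 : Integrable fun x => E' x * φ x :=
      hint _ (hE'c.mul hφc) fun x hx => by rw [hzero x hx, mul_zero]
    have hrw : ∫ x, E x * (t⁻¹ * (φ (x₀ + Real.exp t • (x - x₀)) - φ x))
        = ∫ x, t⁻¹ * ((E' x - E x) * φ x) := by
      calc _ = ∫ x, t⁻¹ * (E x * φ (x₀ + Real.exp t • (x - x₀)) - E x * φ x) := by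
            congr 1; ext x; ring
        _ = t⁻¹ * ((∫ x, E' x * φ x) - ∫ x, E x * φ x) := by
            rw [integral_const_mul, integral_sub hi1 hi2, hcov]
        _ = ∫ x, t⁻¹ * ((E' x - E x) * φ x) := by
            rw [integral_const_mul, ← integral_sub hi3 hi2]
            congr 2; ext x; ring
    rw [hrw, ← integral_const_mul]
    refine integral_mono ((hint _ hφc hzero).const_mul D) ?_ fun x => ?_
    · refine hint _ (continuous_const.mul ((hE'c.sub hE).mul hφc)) fun x hx => ?_
      rw [hzero x hx]; ring
    · by_cases hx : φ x = 0
      · simp [hx]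
      · have h1 := mul_le_mul_of_nonneg_right (h x hx t ht htt) (hφ0 x)
        have h2 : D * φ x = t⁻¹ * (D * t * φ x) := by field_simp
        simp only
        rw [h2]
        exact mul_le_mul_of_nonneg_left h1 (inv_nonneg.2 ht.le)
  refine ge_of_tendsto hlim ?_
  filter_upwards [Ioo_mem_nhdsGT ht₀] with t ht using hkey t ht.1 ht.2.le

/-! ### Radial estimates -/

/-- The logarithm `ℓ(r)` of `|∇ψ|` at distance `r > 0` from the centre, split into terms that are
bounded for `r/δ` bounded above and away from `0`, plus `log (A / δ)`. -/
def logGrad (A μ δ r : ℝ) : ℝ :=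
  Real.log (A / δ) + Real.log (2 * μ / (Real.exp (-μ / 16) - Real.exp (-μ)))
    + Real.log (r / δ) - μ * (r / δ) ^ 2

/-- A bound, depending on `μ` only, for `|ℓ(r) - log (A / δ)|` when `δ/8 ≤ r ≤ δ`. -/
def logBound (μ : ℝ) : ℝ :=
  |Real.log (2 * μ / (Real.exp (-μ / 16) - Real.exp (-μ)))| + Real.log 8 + μ

lemma logGrad_bounds {A A₀ μ δ r : ℝ} (hμ : 0 < μ) (hδ : 0 < δ) (hA : δ ≤ A) (hA₀ : A ≤ A₀)
    (hr : δ / 8 ≤ r) (hr' : r ≤ δ) :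
    -logBound μ ≤ logGrad A μ δ r ∧ |logGrad A μ δ r| ≤ Real.log (A₀ / δ) + logBound μ := by
  have hs : 1 / 8 ≤ r / δ := by rw [le_div_iff₀ hδ]; linarith
  have hs' : r / δ ≤ 1 := by rw [div_le_one hδ]; exact hr'
  have h1 : 0 ≤ Real.log (A / δ) := Real.log_nonneg (by rwa [one_le_div hδ])
  have h2 : Real.log (A / δ) ≤ Real.log (A₀ / δ) :=
    Real.log_le_log (div_pos (hδ.trans_le hA) hδ) (by gcongr)
  have h3 : -Real.log 8 ≤ Real.log (r / δ) := by
    have := Real.log_le_log (by norm_num) hs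
    rwa [one_div, Real.log_inv] at this
  have h4 : Real.log (r / δ) ≤ 0 := Real.log_nonpos (by linarith) hs'
  have h5 : μ * (r / δ) ^ 2 ≤ μ := by nlinarith [pow_le_one₀ (n := 2) (by linarith) hs']
  have h6 : 0 ≤ μ * (r / δ) ^ 2 := by positivity
  have h7 : 0 ≤ Real.log 8 := Real.log_nonneg (by norm_num)
  set c := Real.log (2 * μ / (Real.exp (-μ / 16) - Real.exp (-μ))) with hc
  have h8 := le_abs_self c
  have h9 := neg_abs_le c
  simp only [logGrad, logBound, ← hc]
  refine ⟨by linarith, abs_le.2 ⟨by linarith, by linarith⟩⟩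

/-- The pointwise heart of the argument, with `q = p(x)` and `q' = p(x₀ + e^{-t}(x - x₀))`. In the
logarithm of the rescaled flux coefficient, the increment of `(q - 1) ℓ` contributes at least
`(N + 1) t` by the choice of `μ`, the Jacobian `e^{-Nt}` costs `N t`, the factor `1 / r` gains `t`,
and the variation of the exponent costs at most `L δ |ℓ| t ≤ t`. Since the coefficient itself is at
least `D`, its increment is at least `D t`. -/
lemma radial_estimate {N : ℕ} {pmin pmax μ L D A₀ A δ r t q q' : ℝ} (hp1 : 1 < pmin)
    (hμ : 16 * (1 + (N + 1) / (pmin - 1)) ≤ μ) (hL : 0 < L) (hD : 0 < D) (hδ : 0 < δ)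
    (hsmall : L * δ * (Real.log (A₀ / δ) + logBound μ) ≤ 1)
    (hsmall' : D * δ ≤ Real.exp (-((pmax - 1) * logBound μ)))
    (hA : δ ≤ A) (hA₀ : A ≤ A₀) (hr : δ / 4 ≤ r) (hr' : r ≤ δ)
    (ht : 0 < t) (ht' : t ≤ 1 / 2) (hq : pmin ≤ q) (hq' : q ≤ pmax)
    (hqq : |q' - q| ≤ L * (δ * t)) :
    D * t ≤ Real.exp (-(N * t)) *
        Real.exp ((q' - 1) * logGrad A μ δ (Real.exp (-t) * r) - Real.log (Real.exp (-t) * r))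
      - Real.exp ((q - 1) * logGrad A μ δ r - Real.log r) := by
  have hp0 : 0 < pmin - 1 := by linarith
  have hN : (0:ℝ) ≤ N := N.cast_nonneg
  have hr0 : 0 < r := by linarith
  have hμ0 : 0 < μ := lt_of_lt_of_le (by positivity) hμ
  have he : 1 - t ≤ Real.exp (-t) := by linarith [Real.add_one_le_exp (-t)]
  have he1 : Real.exp (-t) ≤ 1 := Real.exp_le_one_iff.2 (by linarith)
  obtain ⟨-, hb'⟩ := logGrad_bounds (r := Real.exp (-t) * r) hμ0 hδ hA hA₀
    (by nlinarith) (by nlinarith)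
  obtain ⟨hb, -⟩ := logGrad_bounds (r := r) hμ0 hδ hA hA₀ (by linarith) hr'
  have hB : 0 ≤ logBound μ := by
    have : 0 ≤ Real.log 8 := Real.log_nonneg (by norm_num)
    simp only [logBound]; positivity
  have hlogr : Real.log (Real.exp (-t) * r) = -t + Real.log r := by
    rw [Real.log_mul (Real.exp_pos _).ne' hr0.ne', Real.log_exp]
  have hdiff : logGrad A μ δ (Real.exp (-t) * r) - logGrad A μ δ r
      = -t + μ * (r / δ) ^ 2 * (1 - Real.exp (-t) ^ 2) := by
    have : Real.log (Real.exp (-t) * r / δ) = -t + Real.log (r / δ) := by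
      rw [mul_div_assoc, Real.log_mul (Real.exp_pos _).ne' (div_pos hr0 hδ).ne', Real.log_exp]
    simp only [logGrad, this]
    ring
  -- `e^{-2t} ≤ (1 + t)⁻² ≤ 1 - t` for `0 ≤ t ≤ 1/2`, as `(1 - t) (1 + t)² ≥ 1` there
  have he2 : t ≤ 1 - Real.exp (-t) ^ 2 := by
    have h1 : Real.exp (-t) * Real.exp t = 1 := by rw [← Real.exp_add]; simp
    have h2 := Real.add_one_le_exp t
    have h3 := Real.exp_pos (-t)
    have h4 : Real.exp (-t) * (1 + t) ≤ 1 := by nlinarith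
    have h5 : (Real.exp (-t) * (1 + t)) ^ 2 ≤ 1 := pow_le_one₀ (by positivity) h4
    nlinarith [sq_nonneg (Real.exp (-t)), mul_nonneg ht.le (sub_nonneg.2 ht'),
      mul_nonneg (sq_nonneg t) (sub_nonneg.2 ht')]
  have hs2 : 1 / 16 ≤ (r / δ) ^ 2 := by
    have : 1 / 4 ≤ r / δ := by rw [le_div_iff₀ hδ]; linarith
    nlinarith
  have hdiff' : t * (μ / 16 - 1) ≤ logGrad A μ δ (Real.exp (-t) * r) - logGrad A μ δ r := by
    rw [hdiff]
    have : μ * (1 / 16) * t ≤ μ * (r / δ) ^ 2 * (1 - Real.exp (-t) ^ 2) := by gcongr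
    linarith
  have hμN : N + 1 ≤ (pmin - 1) * (μ / 16 - 1) := by
    have h1 : (N + 1) / (pmin - 1) ≤ μ / 16 - 1 := by linarith
    rw [div_le_iff₀ hp0] at h1
    linarith
  have hμ16 : 0 ≤ μ / 16 - 1 := by
    have : 0 ≤ ((N:ℝ) + 1) / (pmin - 1) := by positivity
    linarith
  have hmain : t * (N + 1) ≤ (q - 1) *
      (logGrad A μ δ (Real.exp (-t) * r) - logGrad A μ δ r) := by
    calc t * (N + 1) ≤ t * ((pmin - 1) * (μ / 16 - 1)) := by gcongr
      _ = (pmin - 1) * (t * (μ / 16 - 1)) := by ring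
      _ ≤ _ := by
        refine mul_le_mul (by linarith) hdiff' (mul_nonneg ht.le hμ16) (by linarith)
  have herr : |(q' - q) * logGrad A μ δ (Real.exp (-t) * r)| ≤ t := by
    rw [abs_mul]
    calc _ ≤ L * (δ * t) * (Real.log (A₀ / δ) + logBound μ) := by gcongr
      _ = t * (L * δ * (Real.log (A₀ / δ) + logBound μ)) := by ring
      _ ≤ t * 1 := by gcongr
      _ = t := mul_one t
  have hlow : D ≤ Real.exp ((q - 1) * logGrad A μ δ r - Real.log r) := by
    rw [Real.exp_sub, Real.exp_log hr0, le_div_iff₀ hr0]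
    calc D * r ≤ D * δ := by gcongr
      _ ≤ _ := hsmall'
      _ ≤ _ := by
        apply Real.exp_le_exp.2
        nlinarith [mul_le_mul_of_nonneg_left hb (show 0 ≤ q - 1 by linarith),
          mul_le_mul_of_nonneg_right hq' hB]
  set a := (q - 1) * logGrad A μ δ r - Real.log r with ha
  rw [← Real.exp_add, hlogr]
  set b := -(N * t) + ((q' - 1) * logGrad A μ δ (Real.exp (-t) * r) - (-t + Real.log r)) with hbd
  have hba : t ≤ b - a := by
    have h1 := (abs_le.1 herr).1
    have h2 : b - a = -(N * t) + t + (q' - q) * logGrad A μ δ (Real.exp (-t) * r)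
        + (q - 1) * (logGrad A μ δ (Real.exp (-t) * r) - logGrad A μ δ r) := by
      rw [ha, hbd]; ring
    rw [h2]
    linarith
  have h1 : Real.exp b = Real.exp a * Real.exp (b - a) := by rw [← Real.exp_add]; ring_nf
  have h2 := Real.add_one_le_exp (b - a)
  calc D * t ≤ Real.exp a * (b - a) := by gcongr
    _ ≤ Real.exp a * (Real.exp (b - a) - 1) :=
        mul_le_mul_of_nonneg_left (by linarith) (Real.exp_pos a).le
    _ = _ := by rw [h1]; ring

/-- The two smallness conditions on `δ`; the first holds because `δ log δ → 0`. -/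
lemma exists_radius {L D A₀ B c : ℝ} (hA₀ : 0 < A₀) (hc : 0 < c) :
    ∃ rt : ℝ, 0 < rt ∧ ∀ δ, 0 < δ → δ ≤ rt →
      L * δ * (Real.log (A₀ / δ) + B) ≤ 1 ∧ D * δ ≤ c := by
  have hid : Tendsto (fun δ : ℝ => δ) (𝓝[>] 0) (𝓝 0) := tendsto_nhdsWithin_of_tendsto_nhds tendsto_id
  have hlog : Tendsto (fun δ : ℝ => Real.log δ * δ) (𝓝[>] 0) (𝓝 0) := by
    simpa using tendsto_log_mul_rpow_nhdsGT_zero (r := 1) one_pos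
  have h1 : Tendsto (fun δ : ℝ => L * ((Real.log A₀ + B) * δ - Real.log δ * δ)) (𝓝[>] 0) (𝓝 0) := by
    simpa using ((hid.const_mul (Real.log A₀ + B)).sub hlog).const_mul L
  have h2 : Tendsto (fun δ : ℝ => D * δ) (𝓝[>] 0) (𝓝 0) := by simpa using hid.const_mul D
  obtain ⟨u, hu, hsub⟩ := mem_nhdsGT_iff_exists_Ioc_subset.1
    ((h1.eventually (ge_mem_nhds one_pos)).and (h2.eventually (ge_mem_nhds hc)))
  refine ⟨u, hu, fun δ hδ hδu => ?_⟩
  obtain ⟨h3, h4⟩ := hsub ⟨hδ, hδu⟩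
  refine ⟨?_, h4⟩
  rw [Real.log_div hA₀.ne' hδ.ne']
  linarith

/-! ### The flux of the barrier -/

lemma gradient_psiFun {N : ℕ} (A μ δ : ℝ) (x₀ x : Euc N) :
    gradient (psiFun A μ δ x₀) x =
      (-(A / δ * (2 * μ / (Real.exp (-μ / 16) - Real.exp (-μ))) / δ *
        Real.exp (-(μ * (‖x - x₀‖ / δ) ^ 2)))) • (x - x₀) := by
  apply HasGradientAt.gradient
  rw [hasGradientAt_iff_hasFDerivAt]
  have h1 : HasFDerivAt (fun y : Euc N => ‖y - x₀‖ ^ 2)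
      (2 • (innerSL ℝ (x - x₀)).comp (ContinuousLinearMap.id ℝ (Euc N))) x :=
    ((hasFDerivAt_id x).sub_const x₀).norm_sq
  have h2 := ((((((h1.const_mul (-μ)).mul_const (δ ^ 2)⁻¹).exp).sub_const
    (Real.exp (-μ))).mul_const (Real.exp (-μ / 16) - Real.exp (-μ))⁻¹)).const_mul A
  simp only [← div_eq_mul_inv] at h2
  refine h2.congr_fderiv ?_
  ext v
  have h3 : -μ * ‖x - x₀‖ ^ 2 / δ ^ 2 = -(μ * (‖x - x₀‖ / δ) ^ 2) := by ring
  rw [h3]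
  simp
  ring

/-- The coefficient of `-(x - x₀)` in `|∇ψ|^{q-2} ∇ψ`, at `|x - x₀| = r`, is
`exp ((q - 1) ℓ(r) - log r)`. -/
lemma flux_eq {A μ δ q r : ℝ} (hμ : 0 < μ) (hδ : 0 < δ) (hA : 0 < A) (hr : 0 < r) :
    (A / δ * (2 * μ / (Real.exp (-μ / 16) - Real.exp (-μ))) / δ *
        Real.exp (-(μ * (r / δ) ^ 2)) * r) ^ (q - 2) *
      (A / δ * (2 * μ / (Real.exp (-μ / 16) - Real.exp (-μ))) / δ *
        Real.exp (-(μ * (r / δ) ^ 2))) =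
    Real.exp ((q - 1) * logGrad A μ δ r - Real.log r) := by
  have hden : 0 < Real.exp (-μ / 16) - Real.exp (-μ) :=
    sub_pos.2 (Real.exp_lt_exp.2 (by linarith))
  set k := 2 * μ / (Real.exp (-μ / 16) - Real.exp (-μ)) with hk
  have hk0 : 0 < k := by positivity
  have h1 : A / δ * k / δ * Real.exp (-(μ * (r / δ) ^ 2)) * r
      = Real.exp (logGrad A μ δ r) := by
    simp only [logGrad, ← hk]
    rw [sub_eq_add_neg, Real.exp_add, Real.exp_add, Real.exp_add, Real.exp_log (by positivity),
      Real.exp_log hk0, Real.exp_log (by positivity)]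
    ring
  have h2 : A / δ * k / δ * Real.exp (-(μ * (r / δ) ^ 2))
      = Real.exp (logGrad A μ δ r - Real.log r) := by
    rw [Real.exp_sub, Real.exp_log hr, ← h1]
    field_simp
  rw [h1, h2, ← Real.exp_mul, ← Real.exp_add]
  ring_nf

/-- **Lemma 2.2** (barrier lemma): `Δ_{p(x)} ψ ≥ D` weakly in `B_δ(x₀) \ closure (B_{δ/4}(x₀))`. -/
theorem barrier_lemma (N : ℕ) (hN : 1 ≤ N) (pmin pmax : ℝ)
    (hp1 : 1 < pmin) (hp2 : pmin ≤ pmax) :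
    ∃ μt : ℝ, 0 < μt ∧
      ∀ μ : ℝ, μt ≤ μ →
        ∀ L D A₀ : ℝ, 0 < L → 0 < D → 0 < A₀ →
          ∃ rt : ℝ, 0 < rt ∧
            ∀ p : Euc N → ℝ,
              (∀ x, pmin ≤ p x ∧ p x ≤ pmax) →
              LipschitzWith (Real.toNNReal L) p →
              ∀ (x₀ : Euc N) (δ A : ℝ), 0 < δ → δ ≤ rt → δ ≤ A → A ≤ A₀ →
                ∀ φ : Euc N → ℝ,
                  IsTest (ball x₀ δ \ closedBall x₀ (δ / 4)) φ →
                  (∀ x, 0 ≤ φ x) →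
                  (∫ x in ball x₀ δ \ closedBall x₀ (δ / 4),
                      ‖gradient (psiFun A μ δ x₀) x‖ ^ (p x - 2) *
                        ⟪gradient (psiFun A μ δ x₀) x, gradient φ x⟫)
                    ≤ - (D * ∫ x in ball x₀ δ \ closedBall x₀ (δ / 4), φ x) := by
  have hp0 : 0 < pmin - 1 := by linarith
  have hμt : (0:ℝ) < 16 * (1 + (N + 1) / (pmin - 1)) := by positivity
  refine ⟨16 * (1 + (N + 1) / (pmin - 1)), hμt, fun μ hμ L D A₀ hL hD hA₀ => ?_⟩
  have hμ0 : 0 < μ := hμt.trans_le hμ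
  obtain ⟨rt, hrt, hsmall⟩ := exists_radius (L := L) (D := D) (B := logBound μ) hA₀
    (Real.exp_pos (-((pmax - 1) * logBound μ)))
  refine ⟨rt, hrt, fun p hp hpL x₀ δ A hδ hδr hA hAA φ hφ hφ0 => ?_⟩
  obtain ⟨hs1, hs2⟩ := hsmall δ hδ hδr
  have hA0 : 0 < A := hδ.trans_le hA
  obtain ⟨hsm, hcs, hsupp⟩ := hφ
  have hmem : ∀ x ∈ ball x₀ δ \ closedBall x₀ (δ / 4), δ / 4 < ‖x - x₀‖ ∧ ‖x - x₀‖ < δ := by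
    intro x hx
    rw [Set.mem_sdiff, mem_ball, mem_closedBall, dist_eq_norm, not_le] at hx
    exact ⟨hx.2, hx.1⟩
  -- Flooring the radius at `δ / 8` makes the flux coefficient continuous on all of `ℝ^N` without
  -- changing it on the annulus or on its slight contractions.
  set ρ : Euc N → ℝ := fun x => max ‖x - x₀‖ (δ / 8) with hρ
  have hρ0 : ∀ x, 0 < ρ x := fun x => lt_max_of_lt_right (by linarith)
  have hρc : Continuous ρ := by fun_prop
  set E : Euc N → ℝ := fun x =>
    Real.exp ((p x - 1) * logGrad A μ δ (ρ x) - Real.log (ρ x)) with hE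
  have hEc : Continuous E := by
    have h1 : Continuous fun x => Real.log (ρ x) := hρc.log fun x => (hρ0 x).ne'
    have h2 : Continuous fun x => Real.log (ρ x / δ) :=
      (hρc.div_const δ).log fun x => (div_pos (hρ0 x) hδ).ne'
    have h3 := hpL.continuous
    simp only [hE, logGrad]
    fun_prop
  have hgrad0 : ∀ x, x ∉ tsupport φ → gradient φ x = 0 := by
    intro x hx
    have : fderiv ℝ φ x = 0 := by
      by_contra h
      exact hx (support_fderiv_subset ℝ h)
    simp [gradient, this]
  have hflux : ∀ x ∈ ball x₀ δ \ closedBall x₀ (δ / 4),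
      ‖gradient (psiFun A μ δ x₀) x‖ ^ (p x - 2) *
        ⟪gradient (psiFun A μ δ x₀) x, gradient φ x⟫ = -(E x * ⟪x - x₀, gradient φ x⟫) := by
    intro x hx
    obtain ⟨hx1, hx2⟩ := hmem x hx
    have hρx : ρ x = ‖x - x₀‖ := max_eq_left (by linarith)
    have hden : 0 < Real.exp (-μ / 16) - Real.exp (-μ) :=
      sub_pos.2 (Real.exp_lt_exp.2 (by linarith))
    simp only [hE]
    rw [hρx, ← flux_eq hμ0 hδ hA0 (by linarith), gradient_psiFun, norm_smul, norm_neg,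
      Real.norm_of_nonneg (by positivity), inner_smul_left]
    simp
    ring
  have hmeas : MeasurableSet (ball x₀ δ \ closedBall x₀ (δ / 4)) :=
    measurableSet_ball.diff measurableSet_closedBall
  rw [setIntegral_congr_fun hmeas hflux, integral_neg, neg_le_neg_iff,
    setIntegral_eq_integral_of_forall_compl_eq_zero, setIntegral_eq_integral_of_forall_compl_eq_zero]
  · refine dilation_le (δ := δ) (t₀ := 1 / 2) (by norm_num) hEc
      ⟨hsm, hcs, hsupp.trans sdiff_subset⟩ hφ0 fun x hx t ht ht' => ?_
    obtain ⟨hx1, hx2⟩ := hmem x (hsupp (subset_tsupport φ hx))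
    have he : 1 - t ≤ Real.exp (-t) := by linarith [Real.add_one_le_exp (-t)]
    have he1 : Real.exp (-t) ≤ 1 := Real.exp_le_one_iff.2 (by linarith)
    have hρx : ρ x = ‖x - x₀‖ := max_eq_left (by linarith)
    have hρx' : ρ (x₀ + Real.exp (-t) • (x - x₀)) = Real.exp (-t) * ‖x - x₀‖ := by
      simp only [hρ, add_sub_cancel_left, norm_smul, Real.norm_eq_abs, Real.abs_exp]
      exact max_eq_left (by nlinarith)
    have hpp : |p (x₀ + Real.exp (-t) • (x - x₀)) - p x| ≤ L * (δ * t) := by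
      have h1 := hpL.dist_le_mul (x₀ + Real.exp (-t) • (x - x₀)) x
      have h2 : x₀ + Real.exp (-t) • (x - x₀) - x = (-(1 - Real.exp (-t))) • (x - x₀) := by module
      rw [Real.dist_eq, dist_eq_norm, h2, norm_smul, norm_neg,
        Real.norm_of_nonneg (by linarith), Real.coe_toNNReal L hL.le] at h1
      refine h1.trans (mul_le_mul_of_nonneg_left ?_ hL.le)
      rw [mul_comm δ]
      exact mul_le_mul (by linarith) hx2.le (norm_nonneg _) ht.le
    simp only [hE]
    rw [hρx, hρx']
    exact radial_estimate hp1 hμ hL hD hδ hs1 hs2 hA hAA hx1.le hx2.le ht ht' (hp x).1 (hp x).2 hpp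
  · intro x hx
    rw [hgrad0 x fun h => hx (hsupp h), inner_zero_right, mul_zero]
  · intro x hx
    exact image_eq_zero_of_notMem_tsupport fun h => hx (hsupp h)
end
end

section
/- Let Ω ⊆ ℝ^N be a domain, p : Ω → ℝ Lipschitz with 1 < p_min ≤ p(x) ≤ p_max < ∞, g ∈ L^∞(Ω), and let v be a continuous, nonnegative, locally Lipschitz function on Ω such that Δ_{p(x)} v = g weakly in the open set {v > 0}, i.e. ∫_Ω |∇v(x)|^{p(x)−2} ⟨∇v(x), ∇φ(x)⟩ dx = −∫_Ω g(x) φ(x) dx for every φ ∈ C_c^∞(Ω) with supp φ ⊆ {v > 0}. Then the distribution λ_v := Δ_{p(x)} v − g χ_{{v>0}} is nonnegative and supported on Ω ∩ ∂{v > 0}; explicitly: (i) for every nonnegative φ ∈ C_c^∞(Ω), ∫_Ω |∇v(x)|^{p(x)−2} ⟨∇v(x), ∇φ(x)⟩ dx + ∫_{{v>0}} g(x) φ(x) dx ≤ 0; (ii) for every φ ∈ C_c^∞(Ω) whose support is disjoint from Ω ∩ ∂{v > 0}, ∫_Ω |∇v(x)|^{p(x)−2} ⟨∇v(x), ∇φ(x)⟩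 dx + ∫_{{v>0}} g(x) φ(x) dx = 0. -/
/-!
Write `F = |∇v|^{p-2} ∇v` for the flux and `U = {v > 0}`. The flux is bounded on compact subsets of
`Ω` (`exists_bound_flux`), and it vanishes at every point of `Ω \ U`, since such a point is a minimum
of `v` (`flux_eq_zero`). Hence only what happens in `U` contributes to `∫ ⟨F, ∇φ⟩`.

If the support of `φ` misses the free boundary, then `φ χ_U` is a smooth test function supported in
`U` (`isTest_indicator`), and the equation in `U` tested with it is the identity (ii).

For the inequality (i), the equation is tested with `φ H_n(v)`, where `H_n` is a smooth nondecreasing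
cutoff vanishing near `0` and increasing to `χ_{(0,∞)}`. Since
`⟨F, ∇(φ H_n(v))⟩ = H_n(v) ⟨F, ∇φ⟩ + φ H_n'(v) |∇v|^p` and the last term is nonnegative,
`∫ H_n(v) ⟨F, ∇φ⟩ ≤ -∫ g φ H_n(v)` (`cutoff_inequality`), and dominated convergence gives (i).
The function `φ H_n(v)` is only Lipschitz, so the equation must first be extended to Lipschitz test
functions. This is done by mollification in `weak_eq_of_lipschitz`, where Rademacher's theorem
identifies the gradient of the mollified function with the mollified gradient.
-/

open MeasureTheory Metric Set Filter Topology Asymptotics RealInnerProductSpace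

noncomputable section

/-! ### Lipschitz test functions -/

lemma integrable_indicator_const {N : ℕ} {Ω K : Set (Euc N)} (hK : IsCompact K) (C : ℝ) :
    IntegrableOn (K.indicator fun _ => C) Ω :=
  ((integrable_indicator_iff hK.measurableSet).2
    (integrableOn_const hK.measure_lt_top.ne)).mono_measure Measure.restrict_le_self

lemma integrable_of_bounded {N : ℕ} {Ω K : Set (Euc N)} (hK : IsCompact K)
    {f : Euc N → ℝ} {C : ℝ} (hm : AEStronglyMeasurable f (volume.restrict Ω))
    (h0 : ∀ x ∉ K, f x = 0) (hC : ∀ x ∈ K, |f x| ≤ C) : IntegrableOn f Ω := by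
  refine (integrable_indicator_const hK C).mono' hm (Eventually.of_forall fun x => ?_)
  by_cases hx : x ∈ K
  · simpa [hx] using hC x hx
  · simp [hx, h0 x hx]

/-- Dominated convergence for uniformly bounded functions vanishing outside a fixed compact set. -/
lemma tendsto_setIntegral_of_bounded {N : ℕ} {Ω K : Set (Euc N)} (hK : IsCompact K)
    {f : ℕ → Euc N → ℝ} {f₀ : Euc N → ℝ} {C : ℝ}
    (hm : ∀ n, AEStronglyMeasurable (f n) (volume.restrict Ω))
    (h0 : ∀ n, ∀ x ∉ K, f n x = 0) (hC : ∀ n, ∀ x ∈ K, |f n x| ≤ C)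
    (hlim : ∀ᵐ x ∂(volume.restrict Ω), Tendsto (fun n => f n x) atTop (𝓝 (f₀ x))) :
    Tendsto (fun n => ∫ x in Ω, f n x) atTop (𝓝 (∫ x in Ω, f₀ x)) := by
  refine tendsto_integral_of_dominated_convergence (K.indicator fun _ => C) hm
    (integrable_indicator_const hK C) (fun n => Eventually.of_forall fun x => ?_) hlim
  by_cases hx : x ∈ K
  · simpa [hx] using hC n x hx
  · simp [hx, h0 n x hx]

/-- Differentiation under the integral sign: mollification commutes with the a.e. derivative of a
Lipschitz function. -/
lemma hasFDerivAt_mollify {N : ℕ} (ρ : ContDiffBump (0 : Euc N)) {ψ : Euc N → ℝ} {c : NNReal}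
    (hψ : LipschitzWith c ψ) (x : Euc N) :
    HasFDerivAt (convolution (ρ.normed volume) ψ (ContinuousLinearMap.lsmul ℝ ℝ) volume)
      (convolution (ρ.normed volume) (fderiv ℝ ψ) (ContinuousLinearMap.lsmul ℝ ℝ) volume x) x := by
  have hρ : Continuous (ρ.normed volume) := ρ.continuous_normed
  have hae : ∀ᵐ t : Euc N, DifferentiableAt ℝ ψ (x - t) :=
    (quasiMeasurePreserving_sub_left volume x).ae hψ.ae_differentiableAt
  have key := hasFDerivAt_integral_of_dominated_loc_of_lip (μ := (volume : Measure (Euc N)))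
    (𝕜 := ℝ) (F := fun y t => ρ.normed volume t • ψ (y - t))
    (F' := fun t => ρ.normed volume t • fderiv ℝ ψ (x - t)) (x₀ := x) (s := univ)
    (bound := fun t => ρ.normed volume t * c) univ_mem ?_ ?_ ?_ ?_ ?_ ?_
  · exact key.2
  · refine Eventually.of_forall fun y => Continuous.aestronglyMeasurable ?_
    exact hρ.smul (hψ.continuous.comp (by fun_prop))
  · refine Continuous.integrable_of_hasCompactSupport
      (hρ.smul (hψ.continuous.comp (by fun_prop))) ?_
    have hc : HasCompactSupport (ρ.normed (volume : Measure (Euc N))) :=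
      ρ.hasCompactSupport_normed
    refine hc.mono fun t ht h => ht ?_
    change ρ.normed volume t * _ = 0
    rw [h, zero_mul]
  · have h1 : Measurable fun t => fderiv ℝ ψ (x - t) :=
      (measurable_fderiv ℝ ψ).comp (measurable_const.sub measurable_id)
    exact hρ.aestronglyMeasurable.smul h1.aestronglyMeasurable
  · refine Eventually.of_forall fun t => LipschitzWith.lipschitzOnWith ?_
    refine LipschitzWith.of_dist_le_mul fun y z => ?_
    have h1 := hψ.dist_le_mul (y - t) (z - t)
    have h2 : 0 ≤ ρ.normed volume t := ρ.nonneg_normed t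
    rw [dist_sub_right] at h1
    rw [dist_smul₀, Real.norm_of_nonneg h2, Real.coe_nnabs, abs_of_nonneg (by positivity), mul_assoc]
    exact mul_le_mul_of_nonneg_left h1 h2
  · exact ρ.integrable_normed.mul_const _
  · filter_upwards [hae] with t ht
    have h1 : HasFDerivAt (fun y => ψ (y - t)) (fderiv ℝ ψ (x - t)) x := by
      exact (hasFDerivAt_comp_sub t).2 ht.hasFDerivAt
    exact h1.const_smul (ρ.normed volume t)

/-- A weak equation `div F = g` in `U` that holds against smooth test functions also holds against
Lipschitz ones with compact support in `U`: mollify the test function. The gradients converge almost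
everywhere and stay bounded, all on one compact subset of `U`. -/
lemma weak_eq_of_lipschitz {N : ℕ} {Ω U : Set (Euc N)} (hU : IsOpen U) (hUΩ : U ⊆ Ω)
    {F : Euc N → Euc N} (hF : AEStronglyMeasurable F (volume.restrict Ω))
    (hFb : ∀ K : Set (Euc N), IsCompact K → K ⊆ Ω → ∃ C : ℝ, ∀ x ∈ K, ‖F x‖ ≤ C)
    {g : Euc N → ℝ} (hgm : Measurable g) (hgb : ∃ C : ℝ, ∀ x ∈ Ω, |g x| ≤ C)
    (hsol : ∀ φ : Euc N → ℝ, IsTest Ω φ → tsupport φ ⊆ U →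
      (∫ x in Ω, fderiv ℝ φ x (F x)) = - ∫ x in Ω, g x * φ x)
    {ψ : Euc N → ℝ} {c : NNReal} (hψ : LipschitzWith c ψ) (hψc : HasCompactSupport ψ)
    (hψU : tsupport ψ ⊆ U) :
    (∫ x in Ω, fderiv ℝ ψ x (F x)) = - ∫ x in Ω, g x * ψ x := by
  obtain ⟨δ, hδ, hδU⟩ := IsCompact.exists_cthickening_subset_open hψc hU hψU
  set K := cthickening δ (tsupport ψ) with hKdef
  have hK : IsCompact K := IsCompact.cthickening hψc
  obtain ⟨C, hC⟩ := hFb K hK (hδU.trans hUΩ)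
  obtain ⟨G, hG⟩ := hgb
  obtain ⟨B, hB⟩ := hψc.exists_bound_of_continuous hψ.continuous
  have hB0 : 0 ≤ B := (norm_nonneg _).trans (hB 0)
  let ρ : ℕ → ContDiffBump (0 : Euc N) := fun n =>
    ⟨δ / 2 * (1 / ((n : ℝ) + 1)), δ * (1 / ((n : ℝ) + 1)), by positivity, by
      have : 0 < 1 / ((n : ℝ) + 1) := by positivity
      nlinarith [mul_pos hδ this]⟩
  have hρδ : ∀ n, (ρ n).rOut ≤ δ := fun n => by
    have : 1 / ((n : ℝ) + 1) ≤ 1 := by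
      rw [div_le_one (by positivity)]; linarith [n.cast_nonneg (α := ℝ)]
    exact mul_le_of_le_one_right hδ.le this
  have hρ0 : Tendsto (fun n => (ρ n).rOut) atTop (𝓝 0) := by
    rw [← mul_zero δ]
    exact (tendsto_one_div_add_atTop_nhds_zero_nat (𝕜 := ℝ)).const_mul δ
  let φ : ℕ → Euc N → ℝ := fun n =>
    convolution ((ρ n).normed volume) ψ (ContinuousLinearMap.lsmul ℝ ℝ) volume
  have hφd : ∀ n, ContDiff ℝ (⊤ : ℕ∞) (φ n) := fun n =>
    (ρ n).hasCompactSupport_normed.contDiff_convolution_left _ (ρ n).contDiff_normed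
      hψ.continuous.locallyIntegrable
  have hφK : ∀ n, tsupport (φ n) ⊆ K := fun n => by
    refine closure_minimal ?_ isClosed_cthickening
    intro x hx
    obtain ⟨a, ha, b, hb, rfl⟩ := Set.mem_add.1 (support_convolution_subset _ hx)
    rw [(ρ n).support_normed_eq, mem_ball_zero_iff] at ha
    refine mem_cthickening_of_dist_le _ b _ _ (subset_tsupport _ hb) ?_
    simpa using ha.le.trans (hρδ n)
  have hφ0 : ∀ n, ∀ x ∉ K, φ n x = 0 := fun n x hx =>
    image_eq_zero_of_notMem_tsupport fun h => hx (hφK n h)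
  have hφ'0 : ∀ n, ∀ x ∉ K, fderiv ℝ (φ n) x = 0 := fun n x hx =>
    fderiv_of_notMem_tsupport _ fun h => hx (hφK n h)
  have hφ' : ∀ n x, fderiv ℝ (φ n) x = convolution ((ρ n).normed volume) (fderiv ℝ ψ)
      (ContinuousLinearMap.lsmul ℝ ℝ) volume x := fun n x =>
    (hasFDerivAt_mollify (ρ n) hψ x).fderiv
  -- The derivatives of the mollifications inherit the Lipschitz bound of `ψ`.
  have hφ'c : ∀ n x, ‖fderiv ℝ (φ n) x‖ ≤ c := fun n x => by
    rw [hφ', convolution_def]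
    have h1 : Integrable (fun t => (ρ n).normed volume t * (c : ℝ)) (volume : Measure (Euc N)) :=
      (ρ n).integrable_normed.mul_const _
    refine (norm_integral_le_of_norm_le h1 (Eventually.of_forall fun t => ?_)).trans ?_
    · rw [ContinuousLinearMap.lsmul_apply, norm_smul,
        Real.norm_of_nonneg ((ρ n).nonneg_normed t)]
      exact mul_le_mul_of_nonneg_left (norm_fderiv_le_of_lipschitz ℝ hψ) ((ρ n).nonneg_normed t)
    · rw [integral_mul_const, (ρ n).integral_normed, one_mul]
  have hφb : ∀ n x, |φ n x| ≤ 3 * B := fun n x => by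
    have h1 : dist (φ n x) (ψ x) ≤ 2 * B :=
      ContDiffBump.dist_normed_convolution_le hψ.continuous.aestronglyMeasurable fun y _ => by
        rw [dist_eq_norm]
        linarith [norm_sub_le (ψ y) (ψ x), hB x, hB y]
    have h2 := hB x
    rw [Real.dist_eq] at h1
    rw [Real.norm_eq_abs] at h2
    have h3 := abs_add_le (φ n x - ψ x) (ψ x)
    rw [sub_add_cancel] at h3
    linarith
  have hloc : LocallyIntegrable (fderiv ℝ ψ) (volume : Measure (Euc N)) := by
    refine (locallyIntegrable_const (c : ℝ)).mono
      (measurable_fderiv ℝ ψ).aestronglyMeasurable (Eventually.of_forall fun x => ?_)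
    simpa using norm_fderiv_le_of_lipschitz ℝ hψ
  have hlim' : ∀ᵐ x : Euc N, Tendsto (fun n => fderiv ℝ (φ n) x) atTop (𝓝 (fderiv ℝ ψ x)) := by
    have := ContDiffBump.ae_convolution_tendsto_right_of_locallyIntegrable (φ := ρ) (l := atTop)
      (K := 2) hρ0 (Eventually.of_forall fun n => le_of_eq (by
        change δ * _ = 2 * (δ / 2 * _); ring)) hloc
    filter_upwards [this] with x hx
    simpa only [hφ'] using hx
  have hlim : ∀ x, Tendsto (fun n => φ n x) atTop (𝓝 (ψ x)) := fun x =>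
    ContDiffBump.convolution_tendsto_right_of_continuous hρ0 hψ.continuous x
  have T1 : Tendsto (fun n => ∫ x in Ω, fderiv ℝ (φ n) x (F x)) atTop
      (𝓝 (∫ x in Ω, fderiv ℝ ψ x (F x))) := by
    refine tendsto_setIntegral_of_bounded (C := c * C) hK (fun n => ?_) (fun n x hx => ?_)
      (fun n x hx => ?_) (ae_restrict_of_ae ?_)
    · exact isBoundedBilinearMap_apply.continuous.comp_aestronglyMeasurable
        ((measurable_fderiv ℝ (φ n)).aestronglyMeasurable.prodMk hF)
    · simp [hφ'0 n x hx]
    · exact ((fderiv ℝ (φ n) x).le_opNorm _).trans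
        (mul_le_mul (hφ'c n x) (hC x hx) (norm_nonneg _) c.2)
    · filter_upwards [hlim'] with x hx
      exact ((ContinuousLinearMap.apply ℝ ℝ (F x)).continuous.tendsto _).comp hx
  have T2 : Tendsto (fun n => ∫ x in Ω, g x * φ n x) atTop (𝓝 (∫ x in Ω, g x * ψ x)) := by
    refine tendsto_setIntegral_of_bounded (C := G * (3 * B)) hK (fun n => ?_) (fun n x hx => ?_)
      (fun n x hx => ?_) (Eventually.of_forall fun x => (hlim x).const_mul _)
    · exact (hgm.mul (hφd n).continuous.measurable).aestronglyMeasurable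
    · simp [hφ0 n x hx]
    · rw [abs_mul]
      have hx' := hG x (hUΩ (hδU hx))
      exact mul_le_mul hx' (hφb n x) (abs_nonneg _) ((abs_nonneg _).trans hx')
  refine tendsto_nhds_unique T1 (T2.neg.congr fun n => (hsol (φ n) ⟨hφd n, ?_, ?_⟩ ?_).symm)
  · exact hK.of_isClosed_subset (isClosed_tsupport _) (hφK n)
  · exact (hφK n).trans (hδU.trans hUΩ)
  · exact (hφK n).trans hδU

lemma exists_lipschitzWith_smoothTransition :
    ∃ L : NNReal, LipschitzWith L Real.smoothTransition := by
  obtain ⟨L, hL⟩ := (Real.smoothTransition.contDiff (n := 1)).contDiffOn.exists_lipschitzOnWith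
    (by simp) (convex_Icc (0 : ℝ) 1) isCompact_Icc
  refine ⟨L, LipschitzWith.of_dist_le_mul fun x y => ?_⟩
  rw [← Real.smoothTransition.projIcc (x := x), ← Real.smoothTransition.projIcc (x := y)]
  refine (hL.dist_le_mul _ (Subtype.prop _) _ (Subtype.prop _)).trans ?_
  have := (LipschitzWith.projIcc (zero_le_one (α := ℝ))).dist_le_mul x y
  rw [NNReal.coe_one, one_mul] at this
  exact mul_le_mul_of_nonneg_left this L.2

lemma exists_lipschitzWith_mul {N : ℕ} {a b : Euc N → ℝ} {A B : ℝ} {Ka Kb : NNReal}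
    (ha : LipschitzWith Ka a) (hb : LipschitzWith Kb b) (hA : ∀ x, |a x| ≤ A)
    (hB : ∀ x, |b x| ≤ B) : ∃ c : NNReal, LipschitzWith c fun x => a x * b x := by
  have hA0 := (abs_nonneg _).trans (hA 0)
  have hB0 := (abs_nonneg _).trans (hB 0)
  refine ⟨⟨A * Kb + B * Ka, by positivity⟩, LipschitzWith.of_dist_le_mul fun x y => ?_⟩
  have h1 := ha.dist_le_mul x y
  have h2 := hb.dist_le_mul x y
  rw [Real.dist_eq] at h1 h2 ⊢
  calc |a x * b x - a y * b y| = |a x * (b x - b y) + b y * (a x - a y)| := by ring_nf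
    _ ≤ |a x| * |b x - b y| + |b y| * |a x - a y| := by
        rw [← abs_mul, ← abs_mul]; exact abs_add_le _ _
    _ ≤ A * (Kb * dist x y) + B * (Ka * dist x y) :=
        add_le_add (mul_le_mul (hA x) h2 (abs_nonneg _) hA0)
          (mul_le_mul (hB y) h1 (abs_nonneg _) hB0)
    _ = (A * Kb + B * Ka) * dist x y := by ring

/-! ### The flux and the cutoffs -/

/-- The flux `|∇v|^{q-2} ∇v`. Where `∇v = 0`, in particular where `v` is not differentiable, the
flux is `0` whatever the value of `0 ^ (q - 2)`. -/
def flux {N : ℕ} (q v : Euc N → ℝ) (x : Euc N) : Euc N :=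
  ‖gradient v x‖ ^ (q x - 2) • gradient v x

lemma flux_pairing {N : ℕ} (q v φ : Euc N → ℝ) (x : Euc N) :
    ‖gradient v x‖ ^ (q x - 2) * ⟪gradient v x, gradient φ x⟫ = fderiv ℝ φ x (flux q v x) := by
  rw [real_inner_comm, inner_gradient_left, flux, map_smul, smul_eq_mul]

lemma fderiv_flux_nonneg {N : ℕ} (q v : Euc N → ℝ) (x : Euc N) :
    0 ≤ fderiv ℝ v x (flux q v x) := by
  rw [← flux_pairing]
  exact mul_nonneg (Real.rpow_nonneg (norm_nonneg _) _) real_inner_self_nonneg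

/-- A zero of a nonnegative function is a minimum, so the flux vanishes there. -/
lemma flux_eq_zero {N : ℕ} {Ω : Set (Euc N)} (hΩ : IsOpen Ω) {q v : Euc N → ℝ}
    (hv0 : ∀ x ∈ Ω, 0 ≤ v x) {x : Euc N} (hx : x ∈ Ω) (hvx : v x = 0) : flux q v x = 0 := by
  have hmin : IsLocalMin v x := by
    filter_upwards [hΩ.mem_nhds hx] with y hy
    rw [hvx]
    exact hv0 y hy
  have : gradient v x = 0 := by
    rw [gradient, hmin.fderiv_eq_zero, map_zero]
  rw [flux, this, smul_zero]

lemma aestronglyMeasurable_flux {N : ℕ} {Ω : Set (Euc N)} (hΩ : IsOpen Ω) {q : Euc N → ℝ}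
    (hq : ContinuousOn q Ω) (v : Euc N → ℝ) :
    AEStronglyMeasurable (flux q v) (volume.restrict Ω) := by
  have hg : Measurable (gradient v) :=
    (InnerProductSpace.toDual ℝ (Euc N)).symm.continuous.measurable.comp (measurable_fderiv ℝ v)
  have hqm : AEMeasurable q (volume.restrict Ω) := hq.aemeasurable hΩ.measurableSet
  exact ((hg.norm.aemeasurable.pow (hqm.sub_const 2)).smul hg.aemeasurable).aestronglyMeasurable

lemma exists_bound_flux {N : ℕ} {Ω : Set (Euc N)} (hΩ : IsOpen Ω) {q v : Euc N → ℝ}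
    {pmin pmax : ℝ} (hp1 : 1 < pmin) (hq : ∀ x ∈ Ω, pmin ≤ q x ∧ q x ≤ pmax)
    (hvl : ∀ K : Set (Euc N), IsCompact K → K ⊆ Ω → ∃ c : NNReal, LipschitzOnWith c v K)
    (K : Set (Euc N)) (hK : IsCompact K) (hKΩ : K ⊆ Ω) : ∃ C : ℝ, ∀ x ∈ K, ‖flux q v x‖ ≤ C := by
  obtain ⟨L, hL, hKL, hLΩ⟩ := exists_compact_between hK hΩ hKΩ
  obtain ⟨c, hc⟩ := hvl L hL hLΩ
  refine ⟨(max 1 (c : ℝ)) ^ (pmax - 1), fun x hx => ?_⟩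
  have hgc : ‖gradient v x‖ ≤ c := by
    rw [gradient, LinearIsometryEquiv.norm_map]
    exact norm_fderiv_le_of_lipschitzOn ℝ (mem_interior_iff_mem_nhds.1 (hKL hx)) hc
  obtain ⟨h1, h2⟩ := hq x (hKΩ hx)
  have hm : (1 : ℝ) ≤ max 1 (c : ℝ) := le_max_left _ _
  rw [flux, norm_smul, Real.norm_of_nonneg (Real.rpow_nonneg (norm_nonneg _) _)]
  rcases eq_or_lt_of_le (norm_nonneg (gradient v x)) with h | h
  · rw [← h, mul_zero]
    positivity
  · calc ‖gradient v x‖ ^ (q x - 2) * ‖gradient v x‖ = ‖gradient v x‖ ^ (q x - 1) := by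
          rw [← Real.rpow_add_one h.ne']; ring_nf
      _ ≤ (max 1 (c : ℝ)) ^ (q x - 1) :=
          Real.rpow_le_rpow h.le (hgc.trans (le_max_right _ _)) (by linarith)
      _ ≤ (max 1 (c : ℝ)) ^ (pmax - 1) := Real.rpow_le_rpow_of_exponent_le hm (by linarith)

/-- If `tsupport φ` misses the free boundary, then `φ χ_{{v>0}}` is itself a test function supported
in `{v > 0}`. -/
lemma isTest_indicator {N : ℕ} {Ω U : Set (Euc N)} (hU : IsOpen U)
    {φ : Euc N → ℝ} (hφ : IsTest Ω φ) (hd : Disjoint (tsupport φ) (Ω ∩ frontier U)) :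
    IsTest Ω (U.indicator φ) ∧ tsupport (U.indicator φ) ⊆ U := by
  obtain ⟨h1, h2, h3⟩ := hφ
  have hsub : tsupport (U.indicator φ) ⊆ tsupport φ ∩ closure U := by
    refine closure_minimal (fun x hx => ?_) ((isClosed_tsupport φ).inter isClosed_closure)
    rw [Set.support_indicator] at hx
    exact ⟨subset_tsupport _ hx.2, subset_closure hx.1⟩
  have hsubU : tsupport (U.indicator φ) ⊆ U := fun x hx => by
    obtain ⟨hx1, hx2⟩ := hsub hx
    by_contra hxU
    refine Set.disjoint_left.1 hd hx1 ⟨h3 hx1, ?_⟩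
    rw [hU.frontier_eq]
    exact ⟨hx2, hxU⟩
  refine ⟨⟨contDiff_iff_contDiffAt.2 fun x => ?_, ?_, fun x hx => h3 (hsub hx).1⟩, hsubU⟩
  · by_cases hx : x ∈ tsupport (U.indicator φ)
    · refine h1.contDiffAt.congr_of_eventuallyEq ?_
      filter_upwards [hU.mem_nhds (hsubU hx)] with y hy
      exact Set.indicator_of_mem hy φ
    · exact contDiffAt_const.congr_of_eventuallyEq (notMem_tsupport_iff_eventuallyEq.1 hx)
  · exact IsCompact.of_isClosed_subset h2 (isClosed_tsupport _) fun x hx => (hsub hx).1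

/-- Smooth nondecreasing cutoffs on `ℝ`, equal to `0` for `(n + 1) s ≤ 1` and to `1` for
`(n + 1) s ≥ 2`; on `[0, ∞)` they converge pointwise to the characteristic function of `(0, ∞)`. -/
def cutoff (n : ℕ) (s : ℝ) : ℝ := Real.smoothTransition (((n : ℝ) + 1) * s - 1)

lemma cutoff_zero (n : ℕ) : cutoff n 0 = 0 :=
  Real.smoothTransition.zero_of_nonpos (by simp)

lemma abs_cutoff_le (n : ℕ) (s : ℝ) : |cutoff n s| ≤ 1 := by
  rw [cutoff, abs_of_nonneg (Real.smoothTransition.nonneg _)]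
  exact Real.smoothTransition.le_one _

lemma eventually_cutoff_eq_one {s : ℝ} (hs : 0 < s) : ∀ᶠ n : ℕ in atTop, cutoff n s = 1 := by
  obtain ⟨m, hm⟩ := exists_nat_gt (2 / s)
  filter_upwards [eventually_ge_atTop m] with n hn
  refine Real.smoothTransition.one_of_one_le ?_
  have h1 : (m : ℝ) ≤ n := by exact_mod_cast hn
  rw [div_lt_iff₀ hs] at hm
  nlinarith

lemma one_le_mul_of_cutoff_ne_zero {n : ℕ} {s : ℝ} (h : cutoff n s ≠ 0) :
    1 ≤ ((n : ℝ) + 1) * s := by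
  by_contra hlt
  exact h (Real.smoothTransition.zero_of_nonpos (by linarith))

lemma differentiable_cutoff (n : ℕ) : Differentiable ℝ (cutoff n) :=
  ((Real.smoothTransition.contDiff (n := 1)).differentiable (by simp)).comp (by fun_prop)

lemma deriv_cutoff_nonneg (n : ℕ) (s : ℝ) : 0 ≤ deriv (cutoff n) s := by
  refine Monotone.deriv_nonneg fun a b hab => Real.smoothTransition.monotone ?_
  have : (0 : ℝ) ≤ (n : ℝ) + 1 := by positivity
  linarith [mul_le_mul_of_nonneg_left hab this]

lemma exists_lipschitzWith_cutoff (n : ℕ) : ∃ L : NNReal, LipschitzWith L (cutoff n) := by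
  obtain ⟨L, hL⟩ := exists_lipschitzWith_smoothTransition
  refine ⟨L * ⟨(n : ℝ) + 1, by positivity⟩, hL.comp (LipschitzWith.of_dist_le_mul fun a b => ?_)⟩
  rw [Real.dist_eq, Real.dist_eq, sub_sub_sub_cancel_right, ← mul_sub, abs_mul,
    abs_of_nonneg (by positivity : (0 : ℝ) ≤ (n : ℝ) + 1)]
  rfl

/-- Testing against `φ · cutoff n v`: the term containing `∇(cutoff n v)` has a sign, and discarding
it leaves an inequality for `∇φ` alone. Here `w` is a globally Lipschitz function agreeing with `v`
near the support of `φ`. -/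
lemma cutoff_inequality {N : ℕ} {Ω U L : Set (Euc N)} (hU : IsOpen U) (hUΩ : U ⊆ Ω)
    {q g v w φ : Euc N → ℝ} (hF : AEStronglyMeasurable (flux q v) (volume.restrict Ω))
    (hFb : ∀ K : Set (Euc N), IsCompact K → K ⊆ Ω → ∃ C : ℝ, ∀ x ∈ K, ‖flux q v x‖ ≤ C)
    (hgm : Measurable g) (hgb : ∃ C : ℝ, ∀ x ∈ Ω, |g x| ≤ C)
    (hsol : ∀ φ : Euc N → ℝ, IsTest Ω φ → tsupport φ ⊆ U →
      (∫ x in Ω, fderiv ℝ φ x (flux q v x)) = - ∫ x in Ω, g x * φ x)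
    (hφ : IsTest Ω φ) (hφ0 : ∀ x, 0 ≤ φ x) {c : NNReal} (hw : LipschitzWith c w)
    (hL : tsupport φ ⊆ interior L) (hwv : EqOn v w L)
    (hUv : ∀ x ∈ Ω, 0 < v x → x ∈ U) (n : ℕ) :
    (∫ x in Ω, cutoff n (w x) * fderiv ℝ φ x (flux q v x))
      ≤ - ∫ x in Ω, g x * (φ x * cutoff n (w x)) := by
  obtain ⟨h1, h2, h3⟩ := hφ
  obtain ⟨Cφ, hCφ⟩ := h2.exists_bound_of_continuous h1.continuous
  obtain ⟨Kφ, hKφ⟩ := ContDiff.lipschitzWith_of_hasCompactSupport h2 h1 (by simp)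
  obtain ⟨Kc, hKc⟩ := exists_lipschitzWith_cutoff n
  obtain ⟨M, hM⟩ := exists_lipschitzWith_mul hKφ (hKc.comp hw) hCφ fun x => abs_cutoff_le n (w x)
  simp only [Function.comp_apply] at hM
  obtain ⟨C, hC⟩ := hFb _ h2 h3
  have hsupp : tsupport (fun x => φ x * cutoff n (w x)) ⊆
      tsupport φ ∩ {x | 1 ≤ ((n : ℝ) + 1) * w x} := by
    refine closure_minimal (fun x hx => ?_) ((isClosed_tsupport φ).inter
      (isClosed_le continuous_const (continuous_const.mul hw.continuous)))
    rw [Function.mem_support, mul_ne_zero_iff] at hx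
    exact ⟨subset_tsupport _ hx.1, one_le_mul_of_cutoff_ne_zero hx.2⟩
  have hψc : HasCompactSupport (fun x => φ x * cutoff n (w x)) :=
    IsCompact.of_isClosed_subset h2 (isClosed_tsupport _) fun x hx => (hsupp hx).1
  have hψU : tsupport (fun x => φ x * cutoff n (w x)) ⊆ U := fun x hx => by
    obtain ⟨hx1, hx2⟩ := hsupp hx
    refine hUv x (h3 hx1) ?_
    rw [hwv (interior_subset (hL hx1))]
    have : (0 : ℝ) < (n : ℝ) + 1 := by positivity
    exact (pos_iff_pos_of_mul_pos (zero_lt_one.trans_le hx2)).1 this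
  rw [← weak_eq_of_lipschitz hU hUΩ hF hFb hgm hgb hsol hM hψc hψU]
  have happ : ∀ ξ : Euc N → ℝ,
      AEStronglyMeasurable (fun x => fderiv ℝ ξ x (flux q v x)) (volume.restrict Ω) := fun ξ =>
    isBoundedBilinearMap_apply.continuous.comp_aestronglyMeasurable
      ((measurable_fderiv ℝ ξ).aestronglyMeasurable.prodMk hF)
  have hb : ∀ {ξ : Euc N → ℝ} {D : NNReal}, LipschitzWith D ξ → ∀ x ∈ tsupport φ,
      |fderiv ℝ ξ x (flux q v x)| ≤ D * C := fun {ξ D} hξ x hx =>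
    ((fderiv ℝ ξ x).le_opNorm _).trans
      (mul_le_mul (norm_fderiv_le_of_lipschitz ℝ hξ) (hC x hx) (norm_nonneg _) D.2)
  have hcm : Continuous fun x => cutoff n (w x) := hKc.continuous.comp hw.continuous
  refine integral_mono_ae ?_ ?_ (ae_restrict_of_ae ?_)
  · refine integrable_of_bounded (C := Kφ * C) h2 (hcm.aestronglyMeasurable.mul (happ φ))
      (fun x hx => ?_) (fun x hx => ?_)
    · simp [fderiv_of_notMem_tsupport ℝ hx]
    · rw [abs_mul]
      exact (mul_le_of_le_one_left (abs_nonneg _) (abs_cutoff_le n _)).trans (hb hKφ x hx)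
  · refine integrable_of_bounded (C := M * C) h2 (happ _) (fun x hx => ?_) (fun x hx => hb hM x hx)
    rw [fderiv_of_notMem_tsupport ℝ fun h => hx (hsupp h).1]
    rfl
  · filter_upwards [hw.ae_differentiableAt] with x hx
    by_cases hxK : x ∈ tsupport φ
    · have hcd : HasFDerivAt (fun y => cutoff n (w y)) (deriv (cutoff n) (w x) • fderiv ℝ w x) x :=
        ((differentiable_cutoff n (w x)).hasDerivAt).comp_hasFDerivAt x hx.hasFDerivAt
      have hφd := ((h1.differentiable (by simp)) x).hasFDerivAt
      have hwd : fderiv ℝ w x = fderiv ℝ v x := by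
        refine Filter.EventuallyEq.fderiv_eq ?_
        filter_upwards [mem_interior_iff_mem_nhds.1 (hL hxK)] with y hy
        exact (hwv hy).symm
      simp only [(hφd.fun_mul hcd).fderiv, hwd, _root_.add_apply,
        _root_.smul_apply, smul_eq_mul]
      have := mul_nonneg (hφ0 x)
        (mul_nonneg (deriv_cutoff_nonneg n (w x)) (fderiv_flux_nonneg q v x))
      linarith
    · rw [fderiv_of_notMem_tsupport ℝ hxK, fderiv_of_notMem_tsupport ℝ fun h => hxK (hsupp h).1]
      simp

/-! ### The sign and the support of `λ_v` -/

/-- **Lemma 3.2**: `λ_v = Δ_{p(x)} v - g χ_{{v>0}}` is a nonnegative distribution supported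
on `Ω ∩ ∂{v > 0}`. -/
theorem measure_lemma (N : ℕ) (hN : 1 ≤ N) (Ω : Set (Euc N))
    (hΩ : IsOpen Ω) (hΩc : IsConnected Ω)
    (pmin pmax : ℝ) (hp1 : 1 < pmin) (hp2 : pmin ≤ pmax)
    (p : Euc N → ℝ) (hp : ∀ x ∈ Ω, pmin ≤ p x ∧ p x ≤ pmax)
    (hpl : ∃ K : NNReal, LipschitzOnWith K p Ω)
    (g : Euc N → ℝ) (hgm : Measurable g) (hgb : ∃ C : ℝ, ∀ x ∈ Ω, |g x| ≤ C)
    (v : Euc N → ℝ) (hvc : ContinuousOn v Ω) (hv0 : ∀ x ∈ Ω, 0 ≤ v x)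
    (hvl : ∀ K : Set (Euc N), IsCompact K → K ⊆ Ω → ∃ c : NNReal, LipschitzOnWith c v K)
    (hsol : ∀ φ : Euc N → ℝ, IsTest Ω φ → tsupport φ ⊆ {x | x ∈ Ω ∧ 0 < v x} →
      (∫ x in Ω, ‖gradient v x‖ ^ (p x - 2) * ⟪gradient v x, gradient φ x⟫)
        = - ∫ x in Ω, g x * φ x) :
    (∀ φ : Euc N → ℝ, IsTest Ω φ → (∀ x, 0 ≤ φ x) →
      (∫ x in Ω, ‖gradient v x‖ ^ (p x - 2) * ⟪gradient v x, gradient φ x⟫)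
        + (∫ x in {x | x ∈ Ω ∧ 0 < v x}, g x * φ x) ≤ 0) ∧
    (∀ φ : Euc N → ℝ, IsTest Ω φ →
      Disjoint (tsupport φ) (Ω ∩ frontier {x | x ∈ Ω ∧ 0 < v x}) →
      (∫ x in Ω, ‖gradient v x‖ ^ (p x - 2) * ⟪gradient v x, gradient φ x⟫)
        + (∫ x in {x | x ∈ Ω ∧ 0 < v x}, g x * φ x) = 0) := by
  set U : Set (Euc N) := {x | x ∈ Ω ∧ 0 < v x} with hUdef
  have hU : IsOpen U := hvc.isOpen_inter_preimage hΩ isOpen_Ioi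
  have hUΩ : U ⊆ Ω := fun x hx => hx.1
  have hvU : ∀ x ∈ Ω, x ∉ U → v x = 0 := fun x hx hxU =>
    le_antisymm (not_lt.1 fun h => hxU ⟨hx, h⟩) (hv0 x hx)
  have hind : ∀ φ : Euc N → ℝ,
      (∫ x in U, g x * φ x) = ∫ x in Ω, g x * U.indicator φ x := fun φ => by
    rw [← Set.inter_eq_right.2 hUΩ, ← setIntegral_indicator hU.measurableSet,
      Set.inter_eq_right.2 hUΩ]
    refine integral_congr_ae (Eventually.of_forall fun x => ?_)
    by_cases hx : x ∈ U <;> simp [hx]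
  simp only [flux_pairing] at hsol ⊢
  constructor
  · intro φ hφ hφ0
    obtain ⟨K, hpK⟩ := hpl
    have hF := aestronglyMeasurable_flux hΩ hpK.continuousOn v
    have hFb := exists_bound_flux hΩ hp1 hp hvl
    obtain ⟨L, hL, hφL, hLΩ⟩ := exists_compact_between hφ.2.1 hΩ hφ.2.2
    obtain ⟨c, hc⟩ := hvl L hL hLΩ
    obtain ⟨w, hw, hwv⟩ := hc.extend_real
    have hineq := cutoff_inequality hU hUΩ hF hFb hgm hgb hsol hφ hφ0 hw hφL hwv
      (fun x hx h => ⟨hx, h⟩)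
    obtain ⟨h1, h2, h3⟩ := hφ
    obtain ⟨Cφ, hCφ⟩ := h2.exists_bound_of_continuous h1.continuous
    obtain ⟨Kφ, hKφ⟩ := ContDiff.lipschitzWith_of_hasCompactSupport h2 h1 (by simp)
    obtain ⟨C, hC⟩ := hFb _ h2 h3
    obtain ⟨G, hG⟩ := hgb
    have hcm : ∀ n, Continuous fun x => cutoff n (w x) := fun n => by
      obtain ⟨Kc, hKc⟩ := exists_lipschitzWith_cutoff n
      exact hKc.continuous.comp hw.continuous
    have hone : ∀ x ∈ tsupport φ, x ∈ U → ∀ᶠ n : ℕ in atTop, cutoff n (w x) = 1 :=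
      fun x hx hxU => by
        rw [← hwv (interior_subset (hφL hx))]
        exact eventually_cutoff_eq_one hxU.2
    have T1 : Tendsto (fun n => ∫ x in Ω, cutoff n (w x) * fderiv ℝ φ x (flux p v x)) atTop
        (𝓝 (∫ x in Ω, fderiv ℝ φ x (flux p v x))) := by
      refine tendsto_setIntegral_of_bounded (C := Kφ * C) h2 (fun n => ?_) (fun n x hx => ?_)
        (fun n x hx => ?_) ((ae_restrict_iff' hΩ.measurableSet).2
          (Eventually.of_forall fun x hx => ?_))
      · exact (hcm n).aestronglyMeasurable.mul
          (isBoundedBilinearMap_apply.continuous.comp_aestronglyMeasurable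
            ((measurable_fderiv ℝ φ).aestronglyMeasurable.prodMk hF))
      · simp [fderiv_of_notMem_tsupport ℝ hx]
      · rw [abs_mul]
        exact (mul_le_of_le_one_left (abs_nonneg _) (abs_cutoff_le n _)).trans
          (((fderiv ℝ φ x).le_opNorm _).trans
            (mul_le_mul (norm_fderiv_le_of_lipschitz ℝ hKφ) (hC x hx) (norm_nonneg _) Kφ.2))
      · by_cases hxK : x ∈ tsupport φ
        · by_cases hxU : x ∈ U
          · refine tendsto_const_nhds.congr' ?_
            filter_upwards [hone x hxK hxU] with n hn
            rw [hn, one_mul]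
          · simp [flux_eq_zero hΩ hv0 hx (hvU x hx hxU)]
        · simp [fderiv_of_notMem_tsupport ℝ hxK]
    have T2 : Tendsto (fun n => ∫ x in Ω, g x * (φ x * cutoff n (w x))) atTop
        (𝓝 (∫ x in Ω, g x * U.indicator φ x)) := by
      refine tendsto_setIntegral_of_bounded (C := G * Cφ) h2 (fun n => ?_) (fun n x hx => ?_)
        (fun n x hx => ?_) ((ae_restrict_iff' hΩ.measurableSet).2
          (Eventually.of_forall fun x hx => ?_))
      · exact (hgm.mul (h1.continuous.mul (hcm n)).measurable).aestronglyMeasurable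
      · simp [image_eq_zero_of_notMem_tsupport hx]
      · rw [abs_mul, abs_mul]
        have hGx := hG x (h3 hx)
        exact mul_le_mul hGx ((mul_le_of_le_one_right (abs_nonneg _) (abs_cutoff_le n _)).trans
          (hCφ x)) (by positivity) ((abs_nonneg _).trans hGx)
      · refine Tendsto.const_mul _ ?_
        by_cases hxK : x ∈ tsupport φ
        · by_cases hxU : x ∈ U
          · refine tendsto_const_nhds.congr' ?_
            filter_upwards [hone x hxK hxU] with n hn
            rw [hn, mul_one, Set.indicator_of_mem hxU]
          · have : w x = 0 := by rw [← hwv (interior_subset (hφL hxK)), hvU x hx hxU]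
            simp [this, cutoff_zero, hxU]
        · have : φ x = 0 := image_eq_zero_of_notMem_tsupport hxK
          by_cases hxU : x ∈ U <;> simp [this, hxU]
    have := le_of_tendsto_of_tendsto' T1 T2.neg hineq
    rw [hind]
    linarith
  · intro φ hφ hd
    obtain ⟨ht, htU⟩ := isTest_indicator hU hφ hd
    have h1 := hsol _ ht htU
    have h2 : (∫ x in Ω, fderiv ℝ φ x (flux p v x))
        = ∫ x in Ω, fderiv ℝ (U.indicator φ) x (flux p v x) := by
      refine setIntegral_congr_fun hΩ.measurableSet fun x hx => ?_
      by_cases hxU : x ∈ U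
      · have : U.indicator φ =ᶠ[𝓝 x] φ := by
          filter_upwards [hU.mem_nhds hxU] with y hy
          exact Set.indicator_of_mem hy φ
        simp only [this.fderiv_eq]
      · simp [flux_eq_zero hΩ hv0 hx (hvU x hx hxU)]
    rw [hind, h2, h1]
    ring
end
end

section
/- Under the limit hypotheses below, set B_ε(s) = ∫₀^s β_ε(τ) dτ. Then there exist a subsequence ε'_j → 0 and a function χ ∈ L¹_loc(Ω) with 0 ≤ χ ≤ M such that ∫_K |B_{ε'_j}(u^{ε'_j}(x)) − χ(x)| dx → 0 for every compact K ⊆ Ω; moreover χ = M a.e. on the open set {u > 0} and χ(x) ∈ {0, M} for a.e. x ∈ Ω. If, in addition, f = 0 a.e. on the interior of {u = 0}, then on every connected component of the interior of {u = 0} either χ = M a.e. or χ = 0 a.e. -/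
/-!
# Limits of the primitives `B_ε(u^ε)`

**Uniform bounds.** Test the equation `Δ_{p_ε(x)} u^ε = β_ε(u^ε) + f^ε` with `(1 + B_ε(u^ε)) η`, where
`η` is a cutoff function. Since `B_ε' = β_ε ≥ 0` and `0 ≤ B_ε ≤ M`, this gives
(`IsBoundedSol.reaction_energy_le`)

  `∫ β_ε(u^ε) (1 + |∇u^ε|^{p_ε}) η ≤ (1 + M) ∫ |∇u^ε|^{p_ε - 1} |∇η| - ∫ f^ε (1 + B_ε(u^ε)) η`.

The right-hand side is bounded by the Caccioppoli estimate (`IsBoundedSol.exists_energy_bound`).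
Test functions depending on `u^ε` are only `C¹`, hence the mollification argument of
`IsBoundedSol.weak_C1`.

**Compactness.** As `|∇(B_ε(u^ε))| = β_ε(u^ε) |∇u^ε| ≤ β_ε(u^ε) (1 + |∇u^ε|^{p_ε})`, the functions
`B_ε(u^ε)` have gradients bounded in `L¹_loc`, so a subsequence converges a.e. and in `L¹_loc` to some
`χ` (`exists_subseq_ae_tendsto`, `LimitHyp.exists_subseq`).

**Values of the limit.** Where `u > 0`, eventually `u^ε ≥ ε` and `B_ε(u^ε) = M`. In general
`∫_K β(u^ε / ε) = ε ∫_K β_ε(u^ε) → 0`, whereas at a point with `0 < χ < M` the quotients `u^ε / ε`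
eventually stay in a compact subset of `(0,1)`, where `β` is bounded below; by Fatou's lemma such
points form a null set (`LimitHyp.ae_zero_or_M`).

**Components of the interior of `{u = 0}`.** There `u^ε → 0` uniformly on compact sets, so the energy
and hence the flux `|∇u^ε|^{p_ε - 1}` tend to zero in `L¹_loc` (`LimitHyp.tendsto_flux`). If moreover
`f = 0`, the weak-* convergence of `f^ε` against the strongly convergent `(1 + B_ε(u^ε)) η` shows that
the whole right-hand side above tends to zero (`LimitHyp.tendsto_phase_energy`). Hence
`∇(B_ε(u^ε)) → 0` in `L¹_loc`, and `χ` is locally constant with values in `{0, M}`.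
-/

open MeasureTheory Metric Set Filter Topology Asymptotics RealInnerProductSpace

noncomputable section

/-- `B_ε(s) = ∫₀^s β_ε(τ) dτ`. -/
def Bfun (β : ℝ → ℝ) (ε s : ℝ) : ℝ := ∫ τ in (0:ℝ)..s, betaEps β ε τ

/-- The limit hypotheses: `u^{ε_j}` are uniformly bounded solutions of `P_{ε_j}(f^{ε_j}, p_{ε_j})`
in `Ω` with uniformly Lipschitz exponents, `ε_j → 0⁺`, `u^{ε_j} → u` uniformly on compact subsets
of `Ω`, `f^{ε_j} → f` *-weakly in `L^∞(Ω)` and `p_{ε_j} → p` uniformly on compact subsets of `Ω`. -/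
structure LimitHyp {N : ℕ} (Ω : Set (Euc N)) (β : ℝ → ℝ)
    (M pmin pmax L L1 L2 : ℝ) (ε : ℕ → ℝ) (pe fe ue : ℕ → Euc N → ℝ)
    (u f p : Euc N → ℝ) : Prop where
  open_Ω : IsOpen Ω
  conn_Ω : IsConnected Ω
  beta : IsBeta β M
  h_pmin : 1 < pmin
  h_pminmax : pmin ≤ pmax
  h_L : 0 < L
  eps_pos : ∀ j, 0 < ε j
  eps_lim : Tendsto ε atTop (𝓝 0)
  pe_bd : ∀ j, ∀ x ∈ Ω, pmin ≤ pe j x ∧ pe j x ≤ pmax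
  pe_lip : ∀ j, LipschitzOnWith (Real.toNNReal L) (pe j) Ω
  fe_meas : ∀ j, Measurable (fe j)
  fe_bd : ∀ j, ∀ x ∈ Ω, |fe j x| ≤ L2
  ue_bd : ∀ j, ∀ x ∈ Ω, |ue j x| ≤ L1
  sol : ∀ j, IsSolPe Ω β (ε j) (pe j) (fe j) (ue j)
  u_lim : ∀ K : Set (Euc N), IsCompact K → K ⊆ Ω →
    TendstoUniformlyOn (fun j => ue j) u atTop K
  f_meas : Measurable f
  f_lim : ∀ g : Euc N → ℝ, IntegrableOn g Ω →
    Tendsto (fun j => ∫ x in Ω, fe j x * g x) atTop (𝓝 (∫ x in Ω, f x * g x))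
  p_lim : ∀ K : Set (Euc N), IsCompact K → K ⊆ Ω →
    TendstoUniformlyOn (fun j => pe j) p atTop K

/-! ### Translations and compactness in `L¹_loc` -/

/-- Translation estimate: for `F ∈ C¹(Ω)`, the `L¹(K)` norm of `F(· + h) - F` is at most `|h|` times
the `L¹` norm of `∇F` on the `δ`-neighbourhood of `K`. The points `x + t h` with `t ∈ [0,1]` stay in
that neighbourhood, so the fundamental theorem of calculus and Tonelli's theorem apply. -/
theorem lintegral_translate_sub_le {N : ℕ} {Ω : Set (Euc N)} (hΩ : IsOpen Ω) {F : Euc N → ℝ}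
    (hF : ContDiffOn ℝ 1 F Ω) {K : Set (Euc N)} {δ : ℝ}
    (hKδ : cthickening δ K ⊆ Ω) {h : Euc N} (hh : ‖h‖ ≤ δ) :
    ∫⁻ x in K, ‖F (x + h) - F x‖ₑ
      ≤ ‖h‖ₑ * ∫⁻ x in cthickening δ K, ‖fderiv ℝ F x‖ₑ := by
  classical
  have hcl : IsClosed (cthickening δ K) := isClosed_cthickening
  have hdc : ContinuousOn (fderiv ℝ F) Ω := hF.continuousOn_fderiv_of_isOpen hΩ le_rfl
  set G : Euc N → ENNReal := (cthickening δ K).indicator (fun x => ‖fderiv ℝ F x‖ₑ) with hG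
  have hGm : Measurable G := by
    have h1 : Measurable ((cthickening δ K).indicator (fun x => fderiv ℝ F x)) := by
      rw [← Set.piecewise_eq_indicator]
      exact (hdc.mono hKδ).measurable_piecewise continuousOn_const hcl.measurableSet
    have h2 : G = fun x => ‖(cthickening δ K).indicator (fun x => fderiv ℝ F x) x‖ₑ := by
      funext x
      by_cases hx : x ∈ cthickening δ K
      · simp [hG, hx]
      · simp only [hG, indicator_of_notMem hx]
        exact (enorm_zero (E := StrongDual ℝ (Euc N))).symm
    rw [h2]
    exact h1.enorm
  have hmem : ∀ x ∈ K, ∀ t ∈ Icc (0:ℝ) 1, x + t • h ∈ cthickening δ K := by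
    intro x hx t ht
    refine mem_cthickening_of_dist_le _ x _ _ hx ?_
    rw [dist_eq_norm, add_sub_cancel_left, norm_smul, Real.norm_of_nonneg ht.1]
    calc t * ‖h‖ ≤ 1 * ‖h‖ := by gcongr; exact ht.2
      _ ≤ δ := by simpa using hh
  have hpt : ∀ x ∈ K, ‖F (x + h) - F x‖ₑ
      ≤ ∫⁻ t in Icc (0:ℝ) 1, ‖h‖ₑ * G (x + t • h) := by
    intro x hx
    have hmaps : MapsTo (fun t : ℝ => x + t • h) (Icc (0:ℝ) 1) Ω :=
      fun t ht => hKδ (hmem x hx t ht)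
    have hder : ∀ t ∈ uIcc (0:ℝ) 1,
        HasDerivAt (fun t : ℝ => F (x + t • h)) (fderiv ℝ F (x + t • h) h) t := by
      intro t ht
      rw [uIcc_of_le zero_le_one] at ht
      have h1 : HasFDerivAt F (fderiv ℝ F (x + t • h)) (x + t • h) :=
        ((hF.differentiableOn (by simp)).differentiableAt
          (hΩ.mem_nhds (hmaps ht))).hasFDerivAt
      have h2 : HasDerivAt (fun t : ℝ => x + t • h) h t := by
        simpa using ((hasDerivAt_id t).smul_const h).const_add x
      exact h1.comp_hasDerivAt t h2
    have hcont : ContinuousOn (fun t : ℝ => fderiv ℝ F (x + t • h) h) (uIcc (0:ℝ) 1) := by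
      rw [uIcc_of_le zero_le_one]
      exact (hdc.comp (by fun_prop) hmaps).clm_apply continuousOn_const
    have hftc := intervalIntegral.integral_eq_sub_of_hasDerivAt hder hcont.intervalIntegrable
    simp only [one_smul, zero_smul, add_zero] at hftc
    rw [← hftc, intervalIntegral.integral_of_le zero_le_one, ← integral_Icc_eq_integral_Ioc]
    refine (enorm_integral_le_lintegral_enorm _).trans ?_
    refine setLIntegral_mono' measurableSet_Icc fun t ht => ?_
    have : G (x + t • h) = ‖fderiv ℝ F (x + t • h)‖ₑ := by simp [hG, hmem x hx t ht]
    rw [this, mul_comm]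
    exact ContinuousLinearMap.le_opENorm _ _
  calc ∫⁻ x in K, ‖F (x + h) - F x‖ₑ
      ≤ ∫⁻ x in K, ∫⁻ t in Icc (0:ℝ) 1, ‖h‖ₑ * G (x + t • h) := by
        have hm : Measurable fun x => ∫⁻ t in Icc (0:ℝ) 1, ‖h‖ₑ * G (x + t • h) := by
          refine Measurable.lintegral_prod_right' (f := fun z : Euc N × ℝ =>
            ‖h‖ₑ * G (z.1 + z.2 • h)) ?_
          exact (hGm.comp (by fun_prop)).const_mul _
        exact setLIntegral_mono hm hpt
    _ = ∫⁻ t in Icc (0:ℝ) 1, ∫⁻ x in K, ‖h‖ₑ * G (x + t • h) := by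
        refine lintegral_lintegral_swap ?_
        exact ((hGm.comp (by fun_prop : Measurable fun z : Euc N × ℝ => z.1 + z.2 • h)).const_mul
          _).aemeasurable
    _ ≤ ∫⁻ t in Icc (0:ℝ) 1, ‖h‖ₑ * ∫⁻ x in cthickening δ K, ‖fderiv ℝ F x‖ₑ := by
        refine lintegral_mono fun t => ?_
        calc ∫⁻ x in K, ‖h‖ₑ * G (x + t • h) ≤ ∫⁻ x, ‖h‖ₑ * G (x + t • h) :=
              setLIntegral_le_lintegral _ _
          _ = ‖h‖ₑ * ∫⁻ x, G (x + t • h) :=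
              lintegral_const_mul _ (hGm.comp (by fun_prop))
          _ = ‖h‖ₑ * ∫⁻ x, G x := by rw [lintegral_add_right_eq_self]
          _ = _ := by rw [hG, lintegral_indicator hcl.measurableSet]
    _ = _ := by simp

/-- A sequence of functions with values in `[0, M]` has a subsequence whose integrals against every
`L¹` function converge. This is the sequential Banach-Alaoglu theorem in the dual of `L¹`. -/
theorem exists_subseq_weak_cauchy {N : ℕ} {M : ℝ} (b : ℕ → Euc N → ℝ)
    (hm : ∀ j, Measurable (b j)) (hb : ∀ j x, 0 ≤ b j x ∧ b j x ≤ M) :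
    ∃ φ : ℕ → ℕ, StrictMono φ ∧ ∀ g : Euc N → ℝ, Integrable g →
      ∃ l, Tendsto (fun j => ∫ x, b (φ j) x * g x) atTop (𝓝 l) := by
  have : Fact ((1 : ENNReal) ≠ ⊤) := ⟨ENNReal.one_ne_top⟩
  have habs : ∀ j x, ‖b j x‖ ≤ M := fun j x => by
    rw [Real.norm_of_nonneg (hb j x).1]; exact (hb j x).2
  have hbint : ∀ j (g : Euc N → ℝ), Integrable g → Integrable (fun x => b j x * g x) :=
    fun j g hg => hg.bdd_mul (hm j).aestronglyMeasurable (Eventually.of_forall (habs j))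
  let T₀ : ℕ → (Lp ℝ 1 (volume : Measure (Euc N))) →ₗ[ℝ] ℝ := fun j =>
    { toFun := fun g => ∫ x, b j x * g x
      map_add' := by
        intro g k
        rw [← integral_add (hbint j g (L1.integrable_coeFn g)) (hbint j k (L1.integrable_coeFn k))]
        refine integral_congr_ae ?_
        filter_upwards [Lp.coeFn_add g k] with x hx
        rw [hx, Pi.add_apply, mul_add]
      map_smul' := by
        intro c g
        rw [RingHom.id_apply, smul_eq_mul, ← integral_const_mul]
        refine integral_congr_ae ?_
        filter_upwards [Lp.coeFn_smul c g] with x hx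
        rw [hx, Pi.smul_apply, smul_eq_mul]
        ring }
  have hbound : ∀ j g, ‖T₀ j g‖ ≤ M * ‖g‖ := by
    intro j g
    change ‖∫ x, b j x * g x‖ ≤ M * ‖g‖
    rw [L1.norm_eq_integral_norm, ← integral_const_mul]
    refine norm_integral_le_of_norm_le ((L1.integrable_coeFn g).norm.const_mul M) ?_
    refine Eventually.of_forall fun x => ?_
    rw [norm_mul]
    gcongr
    exact habs j x
  let T : ℕ → (Lp ℝ 1 (volume : Measure (Euc N))) →L[ℝ] ℝ := fun j =>
    (T₀ j).mkContinuous M (hbound j)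
  have hM : 0 ≤ M := (hb 0 0).1.trans (hb 0 0).2
  have hT : ∀ j, StrongDual.toWeakDual (T j) ∈ (WeakDual.toStrongDual ⁻¹'
      Metric.closedBall (0 : StrongDual ℝ (Lp ℝ 1 (volume : Measure (Euc N)))) M) := by
    intro j
    rw [mem_preimage, mem_closedBall, dist_zero_right]
    exact LinearMap.mkContinuous_norm_le _ hM (hbound j)
  obtain ⟨a, -, φ, hφ, hlim⟩ := WeakDual.isSeqCompact_closedBall ℝ _ _ _ hT
  refine ⟨φ, hφ, fun g hg => ⟨a (hg.toL1 g), ?_⟩⟩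
  have h1 := ((WeakDual.eval_continuous (𝕜 := ℝ) (hg.toL1 g)).tendsto a).comp hlim
  refine h1.congr fun j => ?_
  change ∫ x, b (φ j) x * (hg.toL1 g) x = _
  refine integral_congr_ae ?_
  filter_upwards [hg.coeFn_toL1] with x hx
  rw [hx]

theorem exists_compact_exhaustion {N : ℕ} {Ω : Set (Euc N)} (hΩ : IsOpen Ω) :
    ∃ K : ℕ → Set (Euc N), Monotone K ∧ (∀ n, IsCompact (K n) ∧ K n ⊆ Ω) ∧ ⋃ n, K n = Ω := by
  have : LocallyCompactSpace Ω := hΩ.locallyCompactSpace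
  let k := CompactExhaustion.choice Ω
  refine ⟨fun n => Subtype.val '' (k n), fun m n h => image_mono (k.subset h), fun n =>
    ⟨(k.isCompact n).image continuous_subtype_val, by rintro _ ⟨x, -, rfl⟩; exact x.2⟩, ?_⟩
  rw [← image_iUnion, k.iUnion_eq, image_univ, Subtype.range_coe]

/-- Local compactness in the style of Kolmogorov and Riesz: a sequence with values in `[0, M]` whose
translates satisfy a uniform local Lipschitz bound in `L¹` has a subsequence converging almost
everywhere in `Ω`. Along a weakly-* convergent subsequence the averages over a fixed small ball
converge pointwise; the translation bound makes the functions uniformly close to their averages, so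
the subsequence is Cauchy in `L¹` on compact sets. -/
theorem exists_subseq_ae_tendsto {N : ℕ} {Ω : Set (Euc N)} (hΩ : IsOpen Ω) {M : ℝ}
    (b : ℕ → Euc N → ℝ) (hm : ∀ j, Measurable (b j)) (hb : ∀ j x, 0 ≤ b j x ∧ b j x ≤ M)
    (htr : ∀ K : Set (Euc N), IsCompact K → K ⊆ Ω → ∃ δ : ℝ, 0 < δ ∧ ∃ C : NNReal,
      ∀ j, ∀ h : Euc N, ‖h‖ ≤ δ → ∫⁻ x in K, ‖b j (x + h) - b j x‖ₑ ≤ ‖h‖ₑ * C) :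
    ∃ φ : ℕ → ℕ, StrictMono φ ∧ ∃ χ : Euc N → ℝ, Measurable χ ∧ (∀ x, 0 ≤ χ x ∧ χ x ≤ M) ∧
      ∀ᵐ x ∂(volume.restrict Ω), Tendsto (fun j => b (φ j) x) atTop (𝓝 (χ x)) := by
  obtain ⟨φ, hφ, hweak⟩ := exists_subseq_weak_cauchy b hm hb
  have hM : 0 ≤ M := (hb 0 0).1.trans (hb 0 0).2
  have habs : ∀ j x, ‖b j x‖ ≤ M := fun j x => by
    rw [Real.norm_of_nonneg (hb j x).1]; exact (hb j x).2
  have hcauchy : ∀ K : Set (Euc N), IsCompact K → K ⊆ Ω → ∀ η : ENNReal, 0 < η →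
      ∃ J, ∀ i ≥ J, ∀ j ≥ J, ∫⁻ x in K, ‖b (φ i) x - b (φ j) x‖ₑ < η := by
    intro K hK hKΩ η hη
    obtain ⟨δ₀, hδ₀, C, hC⟩ := htr K hK hKΩ
    -- the averaging radius is chosen so that averaging moves each function by less than `η / 5`
    have hη5 : 0 < η / 5 := ENNReal.div_pos hη.ne' (by norm_num)
    obtain ⟨δ, hδ, hδδ, hδC⟩ : ∃ δ : ℝ, 0 < δ ∧ δ ≤ δ₀ ∧ ENNReal.ofReal δ * C < η / 5 := by
      have h1 : Tendsto (fun δ : ℝ => ENNReal.ofReal δ * C) (𝓝[>] 0) (𝓝 0) := by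
        have : Tendsto (fun δ : ℝ => ENNReal.ofReal δ * C) (𝓝 0) (𝓝 (ENNReal.ofReal 0 * C)) :=
          ENNReal.Tendsto.mul_const (ENNReal.continuous_ofReal.tendsto 0)
            (Or.inr ENNReal.coe_ne_top)
        simp only [ENNReal.ofReal_zero, zero_mul] at this
        exact this.mono_left nhdsWithin_le_nhds
      have h2 := h1.eventually (gt_mem_nhds hη5)
      have h3 : ∀ᶠ δ : ℝ in 𝓝[>] 0, δ ≤ δ₀ :=
        mem_of_superset (Ioc_mem_nhdsGT hδ₀) fun x hx => hx.2
      obtain ⟨δ, ⟨ha, hb'⟩, hc⟩ := ((h2.and h3).and self_mem_nhdsWithin).exists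
      exact ⟨δ, hc, hb', ha⟩
    let P : Measure (Euc N) := ProbabilityTheory.cond volume (ball 0 δ)
    have hVpos : volume (ball (0 : Euc N) δ) ≠ 0 := (measure_ball_pos _ _ hδ).ne'
    have : IsProbabilityMeasure P :=
      ProbabilityTheory.cond_isProbabilityMeasure_of_finite hVpos measure_ball_lt_top.ne
    have hPball : ∀ᵐ h ∂P, h ∈ ball (0 : Euc N) δ :=
      Measure.ae_smul_measure (ae_restrict_mem measurableSet_ball) _
    let A : ℕ → Euc N → ℝ := fun j x => ∫ h, b (φ j) (x + h) ∂P
    have hjm : ∀ j, Measurable fun z : Euc N × Euc N => b (φ j) (z.1 + z.2) := fun j =>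
      (hm _).comp (measurable_fst.add measurable_snd)
    have hAm : ∀ j, Measurable (A j) := fun j =>
      ((hjm j).stronglyMeasurable.integral_prod_right' (ν := P)).measurable
    have hbi : ∀ j x, Integrable (fun h => b (φ j) (x + h)) P := fun j x =>
      Integrable.of_bound ((hm _).comp (measurable_const_add x)).aestronglyMeasurable M
        (Eventually.of_forall fun h => habs _ _)
    have hAbd : ∀ j x, ‖A j x‖ ≤ M := by
      intro j x
      have := norm_integral_le_of_norm_le_const (μ := P)
        (Eventually.of_forall fun h => habs (φ j) (x + h))
      simpa using this
    have hclose : ∀ j, ∫⁻ x in K, ‖b (φ j) x - A j x‖ₑ ≤ η / 5 := by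
      intro j
      calc ∫⁻ x in K, ‖b (φ j) x - A j x‖ₑ
          ≤ ∫⁻ x in K, ∫⁻ h, ‖b (φ j) (x + h) - b (φ j) x‖ₑ ∂P := by
            refine lintegral_mono fun x => ?_
            have : A j x - b (φ j) x = ∫ h, (b (φ j) (x + h) - b (φ j) x) ∂P := by
              rw [integral_sub (hbi j x) (integrable_const _)]
              simp [A]
            rw [← enorm_neg, neg_sub, this]
            exact enorm_integral_le_lintegral_enorm _
        _ = ∫⁻ h, ∫⁻ x in K, ‖b (φ j) (x + h) - b (φ j) x‖ₑ ∂volume ∂P := by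
            refine lintegral_lintegral_swap ?_
            exact ((hjm j).sub ((hm _).comp measurable_fst)).enorm.aemeasurable
        _ ≤ ∫⁻ h, ENNReal.ofReal δ * C ∂P := by
            refine lintegral_mono_ae ?_
            filter_upwards [hPball] with h hh
            have hh' : ‖h‖ ≤ δ := by simpa using (mem_ball.1 hh).le
            refine (hC _ h (hh'.trans hδδ)).trans ?_
            gcongr
            rw [← ofReal_norm]
            exact ENNReal.ofReal_le_ofReal hh'
        _ ≤ η / 5 := by simpa using hδC.le
    have hAlim : ∀ x, ∃ l, Tendsto (fun j => A j x) atTop (𝓝 l) := by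
      intro x
      have hgi : Integrable ((ball x δ).indicator fun _ : Euc N =>
          ((volume (ball (0 : Euc N) δ))⁻¹).toReal) :=
        (integrable_indicator_iff measurableSet_ball).2
          (integrableOn_const measure_ball_lt_top.ne)
      obtain ⟨l, hl⟩ := hweak _ hgi
      refine ⟨l, hl.congr fun j => ?_⟩
      change _ = ∫ h, b (φ j) (x + h) ∂(_ • _)
      rw [integral_smul_measure, ← integral_indicator measurableSet_ball, smul_eq_mul,
        ← integral_const_mul, ← integral_add_left_eq_self _ x]
      congr 1 with h
      by_cases hh : h ∈ ball (0 : Euc N) δ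
      · have : x + h ∈ ball x δ := by simpa using hh
        simp only [indicator_of_mem hh, indicator_of_mem this, mul_comm]
      · have : x + h ∉ ball x δ := by simpa using hh
        simp [indicator_of_notMem hh, indicator_of_notMem this]
    choose a ha using hAlim
    have ham : Measurable a := measurable_of_tendsto_metrizable hAm (tendsto_pi_nhds.2 ha)
    have hlim : Tendsto (fun j => ∫⁻ x in K, ‖A j x - a x‖ₑ) atTop (𝓝 0) := by
      have hz : (0 : ENNReal) = ∫⁻ x in K, (0 : ENNReal) := by simp
      rw [hz]
      refine tendsto_lintegral_of_dominated_convergence (fun _ => ENNReal.ofReal (2 * M))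
        (fun j => ((hAm j).sub ham).enorm) ?_ ?_ ?_
      · intro j
        refine Eventually.of_forall fun x => ?_
        beta_reduce
        rw [← ofReal_norm]
        refine ENNReal.ofReal_le_ofReal ((norm_sub_le _ _).trans ?_)
        have : ‖a x‖ ≤ M := le_of_tendsto (ha x).norm (Eventually.of_forall fun j => hAbd j x)
        linarith [hAbd j x]
      · rw [lintegral_const, Measure.restrict_apply_univ]
        exact ENNReal.mul_ne_top ENNReal.ofReal_ne_top hK.measure_lt_top.ne
      · refine Eventually.of_forall fun x => ?_
        have h0 : Tendsto (fun j => A j x - a x) atTop (𝓝 0) := by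
          simpa using (ha x).sub_const (a x)
        have h1 := (continuous_enorm.tendsto (0:ℝ)).comp h0
        rw [enorm_zero] at h1
        exact h1
    obtain ⟨J, hJ⟩ := eventually_atTop.1 (hlim.eventually (gt_mem_nhds hη5))
    refine ⟨J, fun i hi j hj => ?_⟩
    have hsum : ∫⁻ x in K, ‖b (φ i) x - b (φ j) x‖ₑ ≤
        (∫⁻ x in K, ‖b (φ i) x - A i x‖ₑ) + (∫⁻ x in K, ‖A i x - a x‖ₑ)
        + ((∫⁻ x in K, ‖b (φ j) x - A j x‖ₑ) + (∫⁻ x in K, ‖A j x - a x‖ₑ)) := by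
      have m1 : ∀ k, Measurable fun x => ‖b (φ k) x - A k x‖ₑ := fun k =>
        ((hm _).sub (hAm _)).enorm
      have m2 : ∀ k, Measurable fun x => ‖A k x - a x‖ₑ := fun k => ((hAm _).sub ham).enorm
      rw [← lintegral_add_left (m1 i), ← lintegral_add_left (m1 j),
        ← lintegral_add_left (show Measurable fun x => ‖b (φ i) x - A i x‖ₑ + ‖A i x - a x‖ₑ
          from (m1 i).add (m2 i))]
      refine lintegral_mono fun x => ?_
      have e1 : b (φ i) x - b (φ j) x = ((b (φ i) x - A i x) + (A i x - a x))
          - ((b (φ j) x - A j x) + (A j x - a x)) := by ring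
      rw [e1]
      refine (enorm_sub_le).trans ?_
      gcongr <;> exact enorm_add_le _ _
    by_cases hηtop : η = ⊤
    · rw [hηtop]
      refine lt_of_le_of_lt (lintegral_mono (g := fun _ => ENNReal.ofReal (2 * M)) fun x => ?_) ?_
      · rw [← ofReal_norm]
        refine ENNReal.ofReal_le_ofReal ((norm_sub_le _ _).trans ?_)
        linarith [habs (φ i) x, habs (φ j) x]
      · rw [lintegral_const, Measure.restrict_apply_univ]
        exact ENNReal.mul_lt_top ENNReal.ofReal_lt_top hK.measure_lt_top
    calc _ ≤ _ := hsum
      _ ≤ η / 5 + η / 5 + (η / 5 + η / 5) := by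
        gcongr
        exacts [hclose i, (hJ i hi).le, hclose j, (hJ j hj).le]
      _ < η := by
        have h5 : η / 5 + η / 5 + (η / 5 + η / 5) = 4 * (η / 5) := by ring
        have h6 : η = 4 * (η / 5) + η / 5 := by
          calc η = 5 * (η / 5) := by rw [ENNReal.mul_div_cancel (by norm_num) (by norm_num)]
            _ = _ := by ring
        rw [h5]
        conv_rhs => rw [h6]
        refine ENNReal.lt_add_right ?_ hη5.ne'
        exact ENNReal.mul_ne_top (by norm_num) (ENNReal.div_ne_top hηtop (by norm_num))
  obtain ⟨K, hKmono, hKc, hKU⟩ := exists_compact_exhaustion hΩ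
  obtain ⟨ψ, hψ, hψP⟩ := extraction_forall_of_eventually'
    (P := fun n k => ∀ i ≥ k, ∀ j ≥ k, ∫⁻ x in K n, ‖b (φ i) x - b (φ j) x‖ₑ < (1 / 2) ^ n)
    (by
      intro n
      obtain ⟨J, hJ⟩ := hcauchy (K n) (hKc n).1 (hKc n).2 ((1 / 2) ^ n)
        (ENNReal.pow_pos (by simp) n)
      exact ⟨J, fun k hk i hi j hj => hJ i (hk.trans hi) j (hk.trans hj)⟩)
  have hae : ∀ᵐ x ∂(volume.restrict Ω), ∃ l, Tendsto (fun j => b (φ (ψ j)) x) atTop (𝓝 l) := by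
    rw [← hKU, ae_restrict_iUnion_iff]
    intro m
    have key := Lp.ae_tendsto_of_cauchy_eLpNorm (μ := volume.restrict (K m)) (p := 1)
      (f := fun n x => b (φ (ψ (n + m))) x) (B := fun n => (1 / 2) ^ (n + m))
      (fun n => (hm _).aestronglyMeasurable) le_rfl ?_ ?_
    · filter_upwards [key] with x hx
      obtain ⟨l, hl⟩ := hx
      exact ⟨l, (tendsto_add_atTop_iff_nat m).1 hl⟩
    · have : (∑' n : ℕ, (1 / 2 : ENNReal) ^ (n + m)) ≤ ∑' n : ℕ, (1 / 2 : ENNReal) ^ n := by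
        refine ENNReal.tsum_le_tsum fun n => ?_
        exact pow_le_pow_of_le_one (by simp) (by simp) (by omega)
      refine ne_top_of_le_ne_top ?_ this
      rw [ENNReal.tsum_geometric]
      simp
    · intro n i j hi hj
      rw [eLpNorm_one_eq_lintegral_enorm]
      refine lt_of_le_of_lt ?_ (hψP (n + m) (ψ (i + m)) (hψ.monotone (by omega)) (ψ (j + m))
        (hψ.monotone (by omega)))
      exact lintegral_mono_set (hKmono (by omega))
  obtain ⟨χ, hχm, hχ⟩ := measurable_limit_of_tendsto_metrizable_ae
    (fun j => ((hm (φ (ψ j))).aemeasurable)) hae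
  refine ⟨φ ∘ ψ, hφ.comp hψ, fun x => max 0 (min M (χ x)),
    measurable_const.max (measurable_const.min hχm), fun x => ⟨le_max_left _ _,
      max_le hM (min_le_left _ _)⟩, ?_⟩
  filter_upwards [hχ] with x hx
  have h0 : 0 ≤ χ x := ge_of_tendsto hx (Eventually.of_forall fun j => (hb _ x).1)
  have h1 : χ x ≤ M := le_of_tendsto hx (Eventually.of_forall fun j => (hb _ x).2)
  rw [min_eq_right h1, max_eq_right h0]
  exact hx

/-! ### Functions invariant under small translations -/

/-- If `b_j → χ` a.e. and `b_j(· + h) - b_j → 0` in `L¹(K)`, then `χ(· + h) = χ` a.e. on `K`, by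
Fatou's lemma. -/
theorem ae_translate_eq {N : ℕ} {U K : Set (Euc N)} (hK : MeasurableSet K)
    {b : ℕ → Euc N → ℝ} (hm : ∀ j, Measurable (b j)) {χ : Euc N → ℝ}
    (hlim : ∀ᵐ x ∂(volume.restrict U), Tendsto (fun j => b j x) atTop (𝓝 (χ x))) {h : Euc N}
    (hKU : K ⊆ U) (hKhU : ∀ x ∈ K, x + h ∈ U)
    (h0 : Tendsto (fun j => ∫⁻ x in K, ‖b j (x + h) - b j x‖ₑ) atTop (𝓝 0)) :
    ∀ᵐ x ∂(volume.restrict K), χ (x + h) = χ x := by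
  have hm' : ∀ j, Measurable fun x => ‖b j (x + h) - b j x‖ₑ := fun j =>
    (((hm j).comp (measurable_add_const h)).sub (hm j)).enorm
  have hli : Measurable fun x => liminf (fun j => ‖b j (x + h) - b j x‖ₑ) atTop :=
    Measurable.liminf hm'
  have hfatou := lintegral_liminf_le (μ := volume.restrict K) (u := atTop) hm'
  rw [h0.liminf_eq, nonpos_iff_eq_zero,
    lintegral_eq_zero_iff hli] at hfatou
  have h1 : ∀ᵐ x ∂(volume.restrict K), Tendsto (fun j => b j x) atTop (𝓝 (χ x)) :=
    ae_mono (Measure.restrict_mono hKU le_rfl) hlim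
  have h2 : ∀ᵐ x ∂(volume.restrict K), Tendsto (fun j => b j (x + h)) atTop (𝓝 (χ (x + h))) := by
    rw [ae_restrict_iff' hK]
    have h3 : ∀ᵐ x : Euc N, x ∈ (· + h) '' K → Tendsto (fun j => b j x) atTop (𝓝 (χ x)) := by
      have hK' : MeasurableSet ((· + h) '' K) :=
        (measurableEmbedding_addRight h).measurableSet_image.2 hK
      rw [← ae_restrict_iff' hK']
      refine ae_mono (Measure.restrict_mono ?_ le_rfl) hlim
      rintro _ ⟨x, hx, rfl⟩
      exact hKhU x hx
    have h4 := (measurePreserving_add_right volume h).quasiMeasurePreserving.ae h3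
    filter_upwards [h4] with x hx hxK
    exact hx ⟨x, hxK, rfl⟩
  filter_upwards [hfatou, h1, h2] with x hx hx1 hx2
  have h5 : Tendsto (fun j => ‖b j (x + h) - b j x‖ₑ) atTop (𝓝 ‖χ (x + h) - χ x‖ₑ) :=
    (continuous_enorm.tendsto _).comp (hx2.sub hx1)
  rw [h5.liminf_eq] at hx
  exact sub_eq_zero.1 (enorm_eq_zero.1 hx)

/-- A function invariant under all small translations, up to null sets depending on the translation,
is a.e. constant on a ball: by Fubini's theorem some single `x` in the ball satisfies
`χ (x + h) = χ x` for almost every `h`. -/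
theorem ae_const_closedBall {N : ℕ} {χ : Euc N → ℝ} (hχ : Measurable χ) {M : ℝ} {x₀ : Euc N}
    {r : ℝ} (hr : 0 < r)
    (htr : ∀ h : Euc N, ‖h‖ ≤ 2 * r →
      ∀ᵐ x ∂(volume.restrict (closedBall x₀ r)), χ (x + h) = χ x)
    (hval : ∀ᵐ x ∂(volume.restrict (closedBall x₀ r)), χ x = 0 ∨ χ x = M) :
    (∀ᵐ x ∂(volume.restrict (closedBall x₀ r)), χ x = M) ∨
      (∀ᵐ x ∂(volume.restrict (closedBall x₀ r)), χ x = 0) := by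
  have hms : MeasurableSet {z : Euc N × Euc N | χ (z.2 + z.1) = χ z.2} :=
    measurableSet_eq_fun (hχ.comp (measurable_snd.add measurable_fst)) (hχ.comp measurable_snd)
  have h1 : ∀ᵐ h ∂(volume.restrict (closedBall (0 : Euc N) (2 * r))),
      ∀ᵐ x ∂(volume.restrict (closedBall x₀ r)), χ (x + h) = χ x := by
    filter_upwards [ae_restrict_mem measurableSet_closedBall] with h hh
    exact htr h (by simpa using hh)
  have h2 := (Measure.ae_ae_comm (p := fun h x => χ (x + h) = χ x) hms).1 h1
  have : NeBot (ae (volume.restrict (closedBall x₀ r))) := by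
    rw [ae_neBot, Ne, Measure.restrict_eq_zero]
    exact (measure_closedBall_pos _ _ hr).ne'
  obtain ⟨x, ⟨hx1, hx2⟩, hx3⟩ := ((h2.and hval).and
    (ae_restrict_mem measurableSet_closedBall)).exists
  have key : ∀ᵐ y ∂(volume.restrict (closedBall x₀ r)), χ y = χ x := by
    rw [ae_restrict_iff' measurableSet_closedBall] at hx1 ⊢
    have h4 := (measurePreserving_add_right volume (-x)).quasiMeasurePreserving.ae hx1
    filter_upwards [h4] with y hy hyb
    have := hy (by
      rw [mem_closedBall, dist_zero_right, ← sub_eq_add_neg, ← dist_eq_norm]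
      calc dist y x ≤ dist y x₀ + dist x x₀ := dist_triangle_right _ _ _
        _ ≤ r + r := add_le_add hyb hx3
        _ = 2 * r := by ring)
    simpa using this
  rcases hx2 with h | h
  · exact Or.inr (by simpa only [h] using key)
  · exact Or.inl (by simpa only [h] using key)

/-- A function locally a.e. equal to one of two distinct constants is a.e. constant on connected
components: the two sets of points near which it takes a given value are open and disjoint. -/
theorem ae_const_component {N : ℕ} {χ : Euc N → ℝ} {M : ℝ} (hM : M ≠ 0) {U : Set (Euc N)}
    (hU : IsOpen U)
    (hloc : ∀ x ∈ U, ∃ r > 0, (∀ᵐ y ∂(volume.restrict (closedBall x r)), χ y = M) ∨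
      (∀ᵐ y ∂(volume.restrict (closedBall x r)), χ y = 0)) (x₀ : Euc N) :
    (∀ᵐ y ∂(volume.restrict (connectedComponentIn U x₀)), χ y = M) ∨
      (∀ᵐ y ∂(volume.restrict (connectedComponentIn U x₀)), χ y = 0) := by
  let A : ℝ → Set (Euc N) := fun c =>
    {x | ∃ r > 0, ∀ᵐ y ∂(volume.restrict (ball x r)), χ y = c}
  have hAopen : ∀ c, IsOpen (A c) := by
    intro c
    rw [Metric.isOpen_iff]
    rintro x ⟨r, hr, hx⟩
    refine ⟨r / 2, half_pos hr, fun y hy => ⟨r / 2, half_pos hr, ?_⟩⟩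
    refine ae_mono (Measure.restrict_mono (ball_subset_ball' ?_) le_rfl) hx
    have := (mem_ball.1 hy).le
    linarith
  have hdisj : A M ∩ A 0 = ∅ := by
    rw [eq_empty_iff_forall_notMem]
    rintro x ⟨⟨r, hr, h1⟩, ⟨s, hs, h2⟩⟩
    have hpos : 0 < min r s := lt_min hr hs
    have h1' : ∀ᵐ y ∂(volume.restrict (ball x (min r s))), χ y = M :=
      ae_mono (Measure.restrict_mono (ball_subset_ball (x := x) (min_le_left r s)) le_rfl) h1
    have h2' : ∀ᵐ y ∂(volume.restrict (ball x (min r s))), χ y = 0 :=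
      ae_mono (Measure.restrict_mono (ball_subset_ball (x := x) (min_le_right r s)) le_rfl) h2
    have : NeBot (ae (volume.restrict (ball x (min r s)))) := by
      rw [ae_neBot, Ne, Measure.restrict_eq_zero]
      exact (measure_ball_pos _ _ hpos).ne'
    obtain ⟨y, hy1, hy2⟩ := (h1'.and h2').exists
    exact hM (hy1.symm.trans hy2)
  have hcover : U ⊆ A M ∪ A 0 := by
    intro x hx
    obtain ⟨r, hr, h | h⟩ := hloc x hx
    · exact Or.inl ⟨r, hr, ae_mono (Measure.restrict_mono ball_subset_closedBall le_rfl) h⟩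
    · exact Or.inr ⟨r, hr, ae_mono (Measure.restrict_mono ball_subset_closedBall le_rfl) h⟩
  have hfin : ∀ c, connectedComponentIn U x₀ ⊆ A c →
      ∀ᵐ y ∂(volume.restrict (connectedComponentIn U x₀)), χ y = c := by
    intro c hc
    rw [ae_restrict_iff' hU.connectedComponentIn.measurableSet, ae_iff]
    refine measure_null_of_locally_null _ fun x hx => ?_
    simp only [mem_ofPred_eq, not_forall, exists_prop] at hx
    obtain ⟨r, hr, h⟩ := hc hx.1
    rw [ae_restrict_iff' measurableSet_ball, ae_iff] at h
    refine ⟨_, inter_mem_nhdsWithin _ (ball_mem_nhds x hr), measure_mono_null ?_ h⟩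
    rintro y ⟨hy1, hy2⟩
    simp only [mem_ofPred_eq, not_forall, exists_prop] at hy1 ⊢
    exact ⟨hy2, hy1.2⟩
  have hpre : IsPreconnected (connectedComponentIn U x₀) := isPreconnected_connectedComponentIn
  rcases isPreconnected_iff_subset_of_disjoint.1 hpre (A M) (A 0) (hAopen M) (hAopen 0)
    ((connectedComponentIn_subset U x₀).trans hcover) (by rw [hdisj, inter_empty]) with h | h
  · exact Or.inl (hfin M h)
  · exact Or.inr (hfin 0 h)

/-! ### Weak solutions and `C¹` test functions -/

/-- `u` is a weak solution of `Δ_{q(x)} u = b(u) + f` in `Ω` with `0 ≤ u ≤ L1` and `|f| ≤ L2`, where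
`b ≥ 0` is continuous and `1 < pmin ≤ q ≤ pmax`. No bound on `b` is recorded, so that estimates
stated in terms of `pmin`, `pmax`, `L1`, `L2` alone hold for `b = β_ε` uniformly in `ε`. -/
structure IsBoundedSol {N : ℕ} (Ω : Set (Euc N)) (pmin pmax L1 L2 : ℝ)
    (q u f : Euc N → ℝ) (b : ℝ → ℝ) : Prop where
  isOpen : IsOpen Ω
  one_lt : 1 < pmin
  q_cont : ContinuousOn q Ω
  q_bd : ∀ x ∈ Ω, pmin ≤ q x ∧ q x ≤ pmax
  b_cont : Continuous b
  b_nonneg : ∀ s, 0 ≤ b s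
  f_meas : Measurable f
  L2_nonneg : 0 ≤ L2
  f_bd : ∀ x ∈ Ω, |f x| ≤ L2
  u_bd : ∀ x ∈ Ω, 0 ≤ u x ∧ u x ≤ L1
  sol : IsWeakSol Ω q u (fun x => b (u x) + f x)

theorem integrableOn_mul_of_tsupport_subset {N : ℕ} {Ω : Set (Euc N)} {F k : Euc N → ℝ}
    (hF : ContinuousOn F Ω) (hk : Continuous k) (hc : HasCompactSupport k)
    (hs : tsupport k ⊆ Ω) : IntegrableOn (fun x => F x * k x) Ω := by
  have h1 : IntegrableOn (fun x => F x * k x) (tsupport k) :=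
    ((hF.mono hs).mul hk.continuousOn).integrableOn_compact hc
  have h2 : IntegrableOn (fun x => F x * k x) univ := by
    refine h1.of_forall_sdiff_eq_zero MeasurableSet.univ fun x hx => ?_
    rw [image_eq_zero_of_notMem_tsupport hx.2, mul_zero]
  exact h2.mono_set (subset_univ _)

theorem exists_cutoff {N : ℕ} {Ω K : Set (Euc N)} (hΩ : IsOpen Ω) (hK : IsCompact K)
    (hKΩ : K ⊆ Ω) : ∃ η : Euc N → ℝ, IsTest Ω η ∧ (∀ x, 0 ≤ η x ∧ η x ≤ 1) ∧
      ∀ x ∈ K, η x = 1 := by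
  obtain ⟨K', hK', h1, h2⟩ := exists_compact_between hK hΩ hKΩ
  obtain ⟨η, hη1, hη2, hη3⟩ := exists_contMDiffMap_one_nhds_of_subset_interior
    (n := (⊤ : ℕ∞)) (modelWithCornersSelf ℝ (Euc N)) hK.isClosed h1
  have hsub : tsupport η ⊆ K' := closure_minimal
    (fun x hx => by_contra fun h => hx (hη2 x h)) hK'.isClosed
  exact ⟨η, ⟨η.contMDiff.contDiff, hK'.of_isClosed_subset (isClosed_tsupport _) hsub,
    hsub.trans h2⟩, fun x => ⟨(hη3 x).1, (hη3 x).2⟩,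
    fun x hx => hη1.self_of_nhdsSet x hx⟩

theorem rpow_sub_two_mul_self {t r : ℝ} (ht : 0 ≤ t) (hr : 1 < r) :
    t ^ (r - 2) * t = t ^ (r - 1) := by
  rcases ht.eq_or_lt with rfl | h
  · rw [mul_zero, Real.zero_rpow (by linarith)]
  · rw [← Real.rpow_add_one h.ne']
    congr 1
    ring

theorem rpow_sub_two_mul_sq {t r : ℝ} (ht : 0 ≤ t) (hr : 1 < r) :
    t ^ (r - 2) * t ^ 2 = t ^ r := by
  rcases ht.eq_or_lt with rfl | h
  · rw [Real.zero_rpow (by linarith : r ≠ 0)]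
    simp
  · rw [← Real.rpow_add_natCast h.ne']
    congr 1
    push_cast
    ring

/-- The integrand `|∇u|^{q-2} ⟨∇u, ∇ψ⟩` of the weak formulation. -/
def fluxPairing {N : ℕ} (q u ψ : Euc N → ℝ) (x : Euc N) : ℝ :=
  ‖gradient u x‖ ^ (q x - 2) * fderiv ℝ ψ x (gradient u x)

namespace IsBoundedSol

variable {N : ℕ} {Ω : Set (Euc N)} {pmin pmax L1 L2 : ℝ} {q u f : Euc N → ℝ} {b : ℝ → ℝ}

theorem u_cont (S : IsBoundedSol Ω pmin pmax L1 L2 q u f b) : ContinuousOn u Ω :=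
  S.sol.1.continuousOn

theorem u_diffAt (S : IsBoundedSol Ω pmin pmax L1 L2 q u f b) {x : Euc N} (hx : x ∈ Ω) :
    DifferentiableAt ℝ u x :=
  (S.sol.1.differentiableOn (by simp)).differentiableAt (S.isOpen.mem_nhds hx)

theorem grad_cont (S : IsBoundedSol Ω pmin pmax L1 L2 q u f b) :
    ContinuousOn (gradient u) Ω :=
  (InnerProductSpace.toDual ℝ (Euc N)).symm.continuous.comp_continuousOn
    (S.sol.1.continuousOn_fderiv_of_isOpen S.isOpen le_rfl)

theorem one_lt_q (S : IsBoundedSol Ω pmin pmax L1 L2 q u f b) {x : Euc N} (hx : x ∈ Ω) :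
    1 < q x := S.one_lt.trans_le (S.q_bd x hx).1

theorem flux_cont (S : IsBoundedSol Ω pmin pmax L1 L2 q u f b) :
    ContinuousOn (fun x => ‖gradient u x‖ ^ (q x - 1)) Ω :=
  S.grad_cont.norm.rpow (S.q_cont.sub continuousOn_const)
    fun x hx => Or.inr (by linarith [S.one_lt_q hx])

theorem energy_cont (S : IsBoundedSol Ω pmin pmax L1 L2 q u f b) :
    ContinuousOn (fun x => ‖gradient u x‖ ^ q x) Ω :=
  S.grad_cont.norm.rpow S.q_cont fun x hx => Or.inr (by linarith [S.one_lt_q hx])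

theorem norm_fluxPairing_le (S : IsBoundedSol Ω pmin pmax L1 L2 q u f b) {x : Euc N}
    (hx : x ∈ Ω) (ψ : Euc N → ℝ) :
    ‖fluxPairing q u ψ x‖ ≤ ‖gradient u x‖ ^ (q x - 1) * ‖fderiv ℝ ψ x‖ := by
  rw [fluxPairing, norm_mul, Real.norm_of_nonneg (Real.rpow_nonneg (norm_nonneg _) _),
    ← rpow_sub_two_mul_self (norm_nonneg _) (S.one_lt_q hx), mul_assoc]
  gcongr
  rw [mul_comm]
  exact ContinuousLinearMap.le_opNorm _ _

theorem fluxPairing_meas (S : IsBoundedSol Ω pmin pmax L1 L2 q u f b) {ψ : Euc N → ℝ}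
    (hψ : ContDiff ℝ 1 ψ) :
    AEStronglyMeasurable (fluxPairing q u ψ) (volume.restrict Ω) := by
  have hm := S.isOpen.measurableSet
  refine AEStronglyMeasurable.mul ?_ ?_
  · have h1 : AEMeasurable (fun x => ‖gradient u x‖) (volume.restrict Ω) :=
      S.grad_cont.norm.aemeasurable hm
    have h2 : AEMeasurable (fun x => q x - 2) (volume.restrict Ω) :=
      (S.q_cont.sub continuousOn_const).aemeasurable hm
    exact (h1.pow h2).aestronglyMeasurable
  · exact ((hψ.continuous_fderiv one_ne_zero).continuousOn.clm_apply
      S.grad_cont).aestronglyMeasurable hm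

theorem fluxPairing_integrable (S : IsBoundedSol Ω pmin pmax L1 L2 q u f b) {ψ : Euc N → ℝ}
    (hψ : ContDiff ℝ 1 ψ) (hc : HasCompactSupport ψ) (hs : tsupport ψ ⊆ Ω) :
    IntegrableOn (fluxPairing q u ψ) Ω := by
  have h1 : IntegrableOn (fun x => ‖gradient u x‖ ^ (q x - 1) * ‖fderiv ℝ ψ x‖) Ω := by
    refine integrableOn_mul_of_tsupport_subset S.flux_cont
      (hψ.continuous_fderiv one_ne_zero).norm (hc.fderiv ℝ).norm ?_
    refine (closure_mono ?_).trans ((tsupport_fderiv_subset ℝ (f := ψ)).trans hs)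
    intro x hx
    simpa using hx
  refine h1.mono' (S.fluxPairing_meas hψ) ?_
  filter_upwards [ae_restrict_mem S.isOpen.measurableSet] with x hx
  exact S.norm_fluxPairing_le hx ψ

theorem f_mul_integrable (S : IsBoundedSol Ω pmin pmax L1 L2 q u f b) {F k : Euc N → ℝ}
    (hF : ContinuousOn F Ω) (hk : Continuous k) (hc : HasCompactSupport k)
    (hs : tsupport k ⊆ Ω) : IntegrableOn (fun x => f x * (F x * k x)) Ω := by
  refine (integrableOn_mul_of_tsupport_subset hF hk hc hs).bdd_mul (c := L2)
    S.f_meas.aestronglyMeasurable ?_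
  filter_upwards [ae_restrict_mem S.isOpen.measurableSet] with x hx
  exact S.f_bd x hx

/-- The weak formulation extends from smooth to `C¹` test functions with compact support: the
mollifications of a `C¹` function converge to it pointwise together with their gradients, with
uniform bounds and supports in a fixed compact subset of `Ω`. -/
theorem weak_C1 (S : IsBoundedSol Ω pmin pmax L1 L2 q u f b) {ψ : Euc N → ℝ}
    (hψ : ContDiff ℝ 1 ψ) (hc : HasCompactSupport ψ) (hs : tsupport ψ ⊆ Ω) :
    ∫ x in Ω, fluxPairing q u ψ x = - ∫ x in Ω, (b (u x) + f x) * ψ x := by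
  obtain ⟨δ, hδ, hδΩ⟩ := hc.exists_cthickening_subset_open S.isOpen hs
  set K := cthickening δ (tsupport ψ) with hKdef
  have hK : IsCompact K := hc.cthickening
  let ρ : ℕ → ContDiffBump (0 : Euc N) := fun n =>
    ⟨δ / (n + 2) / 2, δ / (n + 2), by positivity, half_lt_self (by positivity)⟩
  have hρ : Tendsto (fun n => (ρ n).rOut) atTop (𝓝 0) := by
    have : Tendsto (fun n : ℕ => δ / ((n : ℝ) + 2)) atTop (𝓝 0) :=
      tendsto_const_nhds.div_atTop
        (tendsto_atTop_add_const_right _ _ tendsto_natCast_atTop_atTop)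
    exact this
  have hρle : ∀ n, (ρ n).rOut ≤ δ := fun n => by
    change δ / ((n : ℝ) + 2) ≤ δ
    exact div_le_self hδ.le (by linarith [(Nat.cast_nonneg n : (0:ℝ) ≤ n)])
  let ψn : ℕ → Euc N → ℝ := fun n =>
    convolution ((ρ n).normed volume) ψ (ContinuousLinearMap.lsmul ℝ ℝ) volume
  have hcd : Continuous (fderiv ℝ ψ) := hψ.continuous_fderiv one_ne_zero
  have hsm : ∀ n, ContDiff ℝ (⊤ : ℕ∞) (ψn n) := fun n =>
    (ρ n).hasCompactSupport_normed.contDiff_convolution_left _ (ρ n).contDiff_normed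
      hψ.continuous.locallyIntegrable
  have hsupp : ∀ n, tsupport (ψn n) ⊆ K := by
    intro n
    refine closure_minimal ?_ isClosed_cthickening
    intro x hx
    obtain ⟨y, hy, z, hz, rfl⟩ := support_convolution_subset _ hx
    rw [(ρ n).support_normed_eq] at hy
    refine mem_cthickening_of_dist_le _ z _ _ (subset_tsupport _ hz) ?_
    have : ‖y‖ < (ρ n).rOut := by simpa using hy
    simpa using this.le.trans (hρle n)
  have htest : ∀ n, IsTest Ω (ψn n) := fun n =>
    ⟨hsm n, hK.of_isClosed_subset (isClosed_tsupport _) (hsupp n), (hsupp n).trans hδΩ⟩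
  have hfd : ∀ n x, fderiv ℝ (ψn n) x =
      convolution ((ρ n).normed volume) (fderiv ℝ ψ) (ContinuousLinearMap.lsmul ℝ ℝ) volume x := by
    intro n x
    have h1 := (hc.hasFDerivAt_convolution_right (ContinuousLinearMap.lsmul ℝ ℝ)
      (μ := volume) ((ρ n).continuous_normed (μ := volume)).locallyIntegrable hψ x).fderiv
    rw [h1]
    rfl
  have hlim0 : ∀ x, Tendsto (fun n => ψn n x) atTop (𝓝 (ψ x)) := fun x =>
    ContDiffBump.convolution_tendsto_right_of_continuous hρ hψ.continuous x
  have hlim1 : ∀ x, Tendsto (fun n => fderiv ℝ (ψn n) x) atTop (𝓝 (fderiv ℝ ψ x)) := fun x => by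
    simp only [hfd]
    exact ContDiffBump.convolution_tendsto_right_of_continuous hρ hcd x
  obtain ⟨C0, hC0⟩ := hc.exists_bound_of_continuous hψ.continuous
  obtain ⟨C1, hC1⟩ := (hc.fderiv ℝ).exists_bound_of_continuous hcd
  have hbd0 : ∀ n x, ‖ψn n x‖ ≤ 3 * C0 := by
    intro n x
    have h1 : dist (ψn n x) (ψ x) ≤ 2 * C0 :=
      (ρ n).dist_normed_convolution_le hψ.continuous.aestronglyMeasurable fun y _ =>
        (dist_le_norm_add_norm _ _).trans (by linarith [hC0 x, hC0 y])
    rw [dist_eq_norm] at h1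
    calc ‖ψn n x‖ = ‖(ψn n x - ψ x) + ψ x‖ := by rw [sub_add_cancel]
      _ ≤ 2 * C0 + C0 := (norm_add_le _ _).trans (add_le_add h1 (hC0 x))
      _ = _ := by ring
  have hbd1 : ∀ n x, ‖fderiv ℝ (ψn n) x‖ ≤ 3 * C1 := by
    intro n x
    have h1 : dist (fderiv ℝ (ψn n) x) (fderiv ℝ ψ x) ≤ 2 * C1 := by
      rw [hfd]
      exact (ρ n).dist_normed_convolution_le hcd.aestronglyMeasurable fun y _ =>
        (dist_le_norm_add_norm _ _).trans (by linarith [hC1 x, hC1 y])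
    rw [dist_eq_norm] at h1
    calc ‖fderiv ℝ (ψn n) x‖ = ‖(fderiv ℝ (ψn n) x - fderiv ℝ ψ x) + fderiv ℝ ψ x‖ := by
          rw [sub_add_cancel]
      _ ≤ 2 * C1 + C1 := (norm_add_le _ _).trans (add_le_add h1 (hC1 x))
      _ = _ := by ring
  have hind : ∀ {F : Euc N → ℝ} (C : ℝ), ContinuousOn F Ω →
      IntegrableOn (K.indicator fun x => F x * C) Ω := by
    intro F C hF
    have : IntegrableOn (K.indicator fun x => F x * C) univ :=
      ((((hF.mono hδΩ).mul continuousOn_const).integrableOn_compact hK).integrable_indicator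
        hK.measurableSet).integrableOn
    exact this.mono_set (subset_univ _)
  have hL : Tendsto (fun n => ∫ x in Ω, fluxPairing q u (ψn n) x) atTop
      (𝓝 (∫ x in Ω, fluxPairing q u ψ x)) := by
    refine tendsto_integral_of_dominated_convergence _
      (fun n => S.fluxPairing_meas ((hsm n).of_le (by exact_mod_cast le_top)))
      (hind (3 * C1) S.flux_cont) ?_ ?_
    · intro n
      filter_upwards [ae_restrict_mem S.isOpen.measurableSet] with x hx
      by_cases hxK : x ∈ K
      · rw [indicator_of_mem hxK]
        refine (S.norm_fluxPairing_le hx _).trans ?_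
        gcongr
        exact hbd1 n x
      · rw [indicator_of_notMem hxK, fluxPairing]
        have : fderiv ℝ (ψn n) x = 0 := image_eq_zero_of_notMem_tsupport
          fun h => hxK (hsupp n (tsupport_fderiv_subset ℝ h))
        simp [this]
    · refine Eventually.of_forall fun x => ?_
      refine Tendsto.const_mul _ ?_
      exact ((ContinuousLinearMap.apply ℝ ℝ (gradient u x)).continuous.tendsto _).comp (hlim1 x)
  have hR : Tendsto (fun n => ∫ x in Ω, (b (u x) + f x) * ψn n x) atTop
      (𝓝 (∫ x in Ω, (b (u x) + f x) * ψ x)) := by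
    have hbu : ContinuousOn (fun x => b (u x)) Ω := S.b_cont.comp_continuousOn S.u_cont
    refine tendsto_integral_of_dominated_convergence _ (fun n => ?_)
      (hind (F := fun x => b (u x) + L2) (3 * C0) (hbu.add continuousOn_const)) ?_ ?_
    · exact ((hbu.aestronglyMeasurable S.isOpen.measurableSet).add
        S.f_meas.aestronglyMeasurable).mul (hsm n).continuous.aestronglyMeasurable
    · intro n
      filter_upwards [ae_restrict_mem S.isOpen.measurableSet] with x hx
      by_cases hxK : x ∈ K
      · rw [indicator_of_mem hxK, norm_mul]
        have h1 : ‖b (u x) + f x‖ ≤ b (u x) + L2 := by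
          refine (norm_add_le _ _).trans (add_le_add ?_ (S.f_bd x hx))
          rw [Real.norm_of_nonneg (S.b_nonneg _)]
        gcongr
        · exact (norm_nonneg _).trans h1
        · exact hbd0 n x
      · rw [indicator_of_notMem hxK,
          image_eq_zero_of_notMem_tsupport fun h => hxK (hsupp n h)]
        simp
    · exact Eventually.of_forall fun x => (hlim0 x).const_mul _
  refine tendsto_nhds_unique hL (hR.neg.congr fun n => ?_)
  rw [← S.sol.2 (ψn n) (htest n)]
  refine setIntegral_congr_fun S.isOpen.measurableSet fun x _ => ?_
  simp only [fluxPairing]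
  congr 1
  rw [real_inner_comm]
  exact inner_gradient_left

end IsBoundedSol

/-! ### Testing the equation with functions of the solution -/

/-- Young-type inequality used to absorb the term in which the gradient falls on the cutoff: with
`z` the value of the cutoff and `t = |∇u|`, either `t z ≥ 2 c` and the left side is at most half the
energy density, or `t z ≤ 2 c` and it is bounded. The exponent `k ≥ q - 1` of the cutoff is an
integer, so that its powers are smooth. -/
theorem flux_mul_le_energy_add {t q z c : ℝ} {k : ℕ} (ht : 0 ≤ t) (hq : 1 < q)
    (hqk : q ≤ k + 1) (hz0 : 0 ≤ z) (hz1 : z ≤ 1) (hc : 0 ≤ c) :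
    c * z ^ k * t ^ (q - 1) ≤ 1 / 2 * (t ^ q * z ^ (k + 1)) + c * (2 * c + 1) ^ k := by
  have ht1 : 0 ≤ t ^ (q - 1) := Real.rpow_nonneg ht _
  have htq : t ^ q = t ^ (q - 1) * t := by
    rcases ht.eq_or_lt with rfl | h
    · rw [mul_zero, Real.zero_rpow (by linarith)]
    · rw [← Real.rpow_add_one h.ne']
      congr 1
      ring
  have hp : 0 ≤ c * (2 * c + 1) ^ k := by positivity
  rcases le_total (2 * c) (t * z) with h | h
  · have h1 : 2 * c * (z ^ k * t ^ (q - 1)) ≤ t * z * (z ^ k * t ^ (q - 1)) := by gcongr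
    rw [htq, pow_succ]
    linarith
  · have hk : (k : ℝ) ≠ 0 := by
      intro h0
      rw [h0] at hqk
      linarith
    have h1 : z ^ k ≤ z ^ (q - 1) := by
      rw [← Real.rpow_natCast]
      rcases hz0.eq_or_lt with rfl | hz
      · rw [Real.zero_rpow hk]
        exact Real.rpow_nonneg le_rfl _
      · exact Real.rpow_le_rpow_of_exponent_ge hz hz1 (by linarith)
    have h2 : (t * z) ^ (q - 1) ≤ (2 * c + 1) ^ k := by
      rw [← Real.rpow_natCast]
      calc (t * z) ^ (q - 1) ≤ (2 * c + 1) ^ (q - 1) :=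
            Real.rpow_le_rpow (by positivity) (by linarith) (by linarith)
        _ ≤ (2 * c + 1) ^ (k : ℝ) :=
            Real.rpow_le_rpow_of_exponent_le (by linarith) (by linarith)
    have h3 : 0 ≤ 1 / 2 * (t ^ q * z ^ (k + 1)) := by positivity
    calc c * z ^ k * t ^ (q - 1) ≤ c * z ^ (q - 1) * t ^ (q - 1) := by gcongr
      _ = c * (t * z) ^ (q - 1) := by rw [Real.mul_rpow ht hz0]; ring
      _ ≤ c * (2 * c + 1) ^ k := by gcongr
      _ ≤ _ := by linarith

theorem rpow_sub_one_le_one_add {t q : ℝ} (ht : 0 ≤ t) (hq : 1 < q) :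
    t ^ (q - 1) ≤ 1 + t ^ q := by
  rcases le_total t 1 with h | h
  · linarith [Real.rpow_le_one ht h (by linarith : 0 ≤ q - 1), Real.rpow_nonneg ht q]
  · linarith [Real.rpow_le_rpow_of_exponent_le h (by linarith : q - 1 ≤ q)]

theorem le_one_add_rpow {t q : ℝ} (ht : 0 ≤ t) (hq : 1 < q) : t ≤ 1 + t ^ q := by
  rcases le_total t 1 with h | h
  · linarith [Real.rpow_nonneg ht q]
  · have := Real.rpow_le_rpow_of_exponent_le h hq.le
    rw [Real.rpow_one] at this
    linarith

/-- Splits the flux according to whether `t` exceeds a small threshold `l`. -/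
theorem rpow_sub_one_le_split {t q pmin l : ℝ} (ht : 0 ≤ t) (hp : 1 < pmin) (hq : pmin ≤ q)
    (hl : 0 < l) (hl1 : l ≤ 1) : t ^ (q - 1) ≤ l ^ (pmin - 1) + t ^ q / l := by
  rcases le_total t l with h | h
  · have h1 : t ^ (q - 1) ≤ l ^ (q - 1) := Real.rpow_le_rpow ht h (by linarith)
    have h2 : l ^ (q - 1) ≤ l ^ (pmin - 1) :=
      Real.rpow_le_rpow_of_exponent_ge hl hl1 (by linarith)
    have : 0 ≤ t ^ q / l := by positivity
    linarith
  · have ht0 : 0 < t := hl.trans_le h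
    have h1 : t ^ (q - 1) ≤ t ^ q / l := by
      rw [Real.rpow_sub_one ht0.ne']
      gcongr
    have : 0 ≤ l ^ (pmin - 1) := by positivity
    linarith

namespace IsBoundedSol

variable {N : ℕ} {Ω : Set (Euc N)} {pmin pmax L1 L2 : ℝ} {q u f : Euc N → ℝ} {b : ℝ → ℝ}

theorem contDiff_comp_mul (S : IsBoundedSol Ω pmin pmax L1 L2 q u f b) {G : ℝ → ℝ}
    (hG : ContDiff ℝ 1 G) {η : Euc N → ℝ} (hη : IsTest Ω η) :
    ContDiff ℝ 1 (fun x => G (u x) * η x) := by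
  rw [contDiff_iff_contDiffAt]
  intro x
  by_cases hx : x ∈ tsupport η
  · have hu : ContDiffAt ℝ 1 u x := S.sol.1.contDiffAt (S.isOpen.mem_nhds (hη.2.2 hx))
    exact (hG.contDiffAt.comp x hu).mul (hη.1.of_le (by exact_mod_cast le_top)).contDiffAt
  · have h0 : (fun x => G (u x) * η x) =ᶠ[𝓝 x] fun _ => 0 := by
      filter_upwards [(isClosed_tsupport η).isOpen_compl.mem_nhds hx] with y hy
      rw [image_eq_zero_of_notMem_tsupport hy, mul_zero]
    exact contDiffAt_const.congr_of_eventuallyEq h0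

theorem tsupport_comp_mul_subset (G : ℝ → ℝ) (η : Euc N → ℝ) :
    tsupport (fun x => G (u x) * η x) ⊆ tsupport η :=
  closure_mono fun x hx h => hx (by simp [h])

theorem fderiv_gradient_self (u : Euc N → ℝ) (x : Euc N) :
    fderiv ℝ u x (gradient u x) = ‖gradient u x‖ ^ 2 := by
  rw [← real_inner_self_eq_norm_sq]
  exact inner_gradient_left.symm

/-- Product and chain rule for the test function `G(u) η`: the energy `|∇u|^q` appears with the
factor `G'(u) η`. -/
theorem fluxPairing_comp_mul (S : IsBoundedSol Ω pmin pmax L1 L2 q u f b) {G G' : ℝ → ℝ}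
    (hG : ∀ s, HasDerivAt G (G' s) s) {η : Euc N → ℝ} (hη : IsTest Ω η) {x : Euc N}
    (hx : x ∈ Ω) : fluxPairing q u (fun x => G (u x) * η x) x =
      ‖gradient u x‖ ^ q x * (G' (u x) * η x) + fluxPairing q u η x * G (u x) := by
  have h1 : HasFDerivAt (fun x => G (u x)) (G' (u x) • fderiv ℝ u x) x :=
    (hG (u x)).comp_hasFDerivAt x (S.u_diffAt hx).hasFDerivAt
  have h2 : HasFDerivAt η (fderiv ℝ η x) x :=
    (hη.1.differentiable (by simp)).differentiableAt.hasFDerivAt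
  have h3 := (h1.mul h2).fderiv
  have h4 := fderiv_gradient_self u x
  rw [fluxPairing, fluxPairing]
  erw [h3]
  simp only [add_apply, smul_apply, smul_eq_mul, h4]
  rw [← rpow_sub_two_mul_sq (norm_nonneg _) (S.one_lt_q hx)]
  ring

theorem fluxPairing_mul_integrable (S : IsBoundedSol Ω pmin pmax L1 L2 q u f b)
    {G : ℝ → ℝ} (hG : Continuous G) {η : Euc N → ℝ} (hη : IsTest Ω η) :
    IntegrableOn (fun x => fluxPairing q u η x * G (u x)) Ω ∧
    IntegrableOn (fun x => ‖gradient u x‖ ^ (q x - 1) * |G (u x)| * ‖fderiv ℝ η x‖) Ω := by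
  have hη1 : ContDiff ℝ 1 η := hη.1.of_le (by exact_mod_cast le_top)
  have hGu : ContinuousOn (fun x => G (u x)) Ω := hG.comp_continuousOn S.u_cont
  have h1 : IntegrableOn
      (fun x => ‖gradient u x‖ ^ (q x - 1) * |G (u x)| * ‖fderiv ℝ η x‖) Ω := by
    refine integrableOn_mul_of_tsupport_subset (S.flux_cont.mul hGu.abs)
      (hη1.continuous_fderiv one_ne_zero).norm (hη.2.1.fderiv ℝ).norm ?_
    refine (closure_mono ?_).trans ((tsupport_fderiv_subset ℝ (f := η)).trans hη.2.2)
    intro x hx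
    simpa using hx
  refine ⟨h1.mono' ((S.fluxPairing_meas hη1).mul
    (hGu.aestronglyMeasurable S.isOpen.measurableSet)) ?_, h1⟩
  filter_upwards [ae_restrict_mem S.isOpen.measurableSet] with x hx
  have := S.norm_fluxPairing_le hx η
  rw [norm_mul, Real.norm_eq_abs (G (u x))]
  calc ‖fluxPairing q u η x‖ * |G (u x)|
      ≤ ‖gradient u x‖ ^ (q x - 1) * ‖fderiv ℝ η x‖ * |G (u x)| := by gcongr
    _ = _ := by ring

theorem mul_test_integrable {F : Euc N → ℝ}
    (hF : ContinuousOn F Ω) {η : Euc N → ℝ} (hη : IsTest Ω η) :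
    IntegrableOn (fun x => F x * η x) Ω :=
  integrableOn_mul_of_tsupport_subset hF hη.1.continuous hη.2.1 hη.2.2

/-- The inequality obtained by testing the equation with `G(u) η`. -/
theorem test_comp_le (S : IsBoundedSol Ω pmin pmax L1 L2 q u f b) {G G' : ℝ → ℝ}
    (hG : ∀ s, HasDerivAt G (G' s) s) (hG' : Continuous G') {η : Euc N → ℝ}
    (hη : IsTest Ω η) :
    (∫ x in Ω, ‖gradient u x‖ ^ q x * G' (u x) * η x) + ∫ x in Ω, b (u x) * G (u x) * η x ≤
      (∫ x in Ω, ‖gradient u x‖ ^ (q x - 1) * |G (u x)| * ‖fderiv ℝ η x‖)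
        - ∫ x in Ω, f x * (G (u x) * η x) := by
  have hm := S.isOpen.measurableSet
  have hGd : deriv G = G' := funext fun s => (hG s).deriv
  have hGc : ContDiff ℝ 1 G := contDiff_one_iff_deriv.2
    ⟨fun s => (hG s).differentiableAt, hGd ▸ hG'⟩
  have hGcont := hGc.continuous
  have hGu : ContinuousOn (fun x => G (u x)) Ω := hGcont.comp_continuousOn S.u_cont
  have hGu' : ContinuousOn (fun x => G' (u x)) Ω := hG'.comp_continuousOn S.u_cont
  have hbu : ContinuousOn (fun x => b (u x)) Ω := S.b_cont.comp_continuousOn S.u_cont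
  have hts := tsupport_comp_mul_subset (u := u) G η
  have hw := S.weak_C1 (S.contDiff_comp_mul hGc hη)
    (hη.2.1.of_isClosed_subset (isClosed_tsupport _) hts) (hts.trans hη.2.2)
  rw [setIntegral_congr_fun hm fun x hx => S.fluxPairing_comp_mul hG hη hx] at hw
  have hI1 : IntegrableOn (fun x => ‖gradient u x‖ ^ q x * G' (u x) * η x) Ω :=
     mul_test_integrable (S.energy_cont.mul hGu') hη
  have hI2 : IntegrableOn (fun x => b (u x) * G (u x) * η x) Ω :=
     mul_test_integrable (hbu.mul hGu) hη
  have hI3 := S.f_mul_integrable hGu hη.1.continuous hη.2.1 hη.2.2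
  obtain ⟨hI4, hI5⟩ := S.fluxPairing_mul_integrable hGcont hη
  have e1 : ∫ x in Ω, (‖gradient u x‖ ^ q x * (G' (u x) * η x) + fluxPairing q u η x * G (u x))
      = (∫ x in Ω, ‖gradient u x‖ ^ q x * G' (u x) * η x)
        + ∫ x in Ω, fluxPairing q u η x * G (u x) := by
    rw [← integral_add hI1 hI4]
    congr 1 with x
    ring
  have e2 : ∫ x in Ω, (b (u x) + f x) * (G (u x) * η x) =
      (∫ x in Ω, b (u x) * G (u x) * η x) + ∫ x in Ω, f x * (G (u x) * η x) := by
    rw [← integral_add hI2 hI3]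
    congr 1 with x
    ring
  rw [e1, e2] at hw
  have h5 : -∫ x in Ω, fluxPairing q u η x * G (u x) ≤
      ∫ x in Ω, ‖gradient u x‖ ^ (q x - 1) * |G (u x)| * ‖fderiv ℝ η x‖ := by
    rw [← integral_neg]
    refine setIntegral_mono_on hI4.neg hI5 hm fun x hx => ?_
    refine (neg_le_abs _).trans ?_
    rw [abs_mul, ← Real.norm_eq_abs (fluxPairing q u η x)]
    calc ‖fluxPairing q u η x‖ * |G (u x)|
        ≤ ‖gradient u x‖ ^ (q x - 1) * ‖fderiv ℝ η x‖ * |G (u x)| := by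
          gcongr
          exact S.norm_fluxPairing_le hx η
      _ = _ := by ring
  linarith

end IsBoundedSol

/-! ### Uniform energy and flux estimates -/

theorem setIntegral_le_integral_mul_cutoff {N : ℕ} {Ω K : Set (Euc N)} {F η : Euc N → ℝ}
    (hΩ : IsOpen Ω) (hK : IsCompact K) (hKΩ : K ⊆ Ω) (hF : ContinuousOn F Ω)
    (hF0 : ∀ x ∈ Ω, 0 ≤ F x) (hη : IsTest Ω η) (hη0 : ∀ x, 0 ≤ η x)
    (hη1 : ∀ x ∈ K, η x = 1) : ∫ x in K, F x ≤ ∫ x in Ω, F x * η x := by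
  rw [setIntegral_congr_fun hK.measurableSet
    (g := fun x => F x * η x) fun x hx => by simp [hη1 x hx]]
  refine setIntegral_mono_set
    (integrableOn_mul_of_tsupport_subset hF hη.1.continuous hη.2.1 hη.2.2) ?_
    (Eventually.of_forall hKΩ)
  filter_upwards [ae_restrict_mem hΩ.measurableSet] with x hx
  exact mul_nonneg (hF0 x hx) (hη0 x)

namespace IsBoundedSol

variable {N : ℕ} {Ω : Set (Euc N)} {pmin pmax L1 L2 : ℝ} {q u f : Euc N → ℝ} {b : ℝ → ℝ}

theorem integral_flux_mul_le (S : IsBoundedSol Ω pmin pmax L1 L2 q u f b) {G : ℝ → ℝ}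
    (hG : Continuous G) {η : Euc N → ℝ} (hη : IsTest Ω η) {A D : ℝ}
    (hA : ∀ x ∈ tsupport η, |G (u x)| ≤ A) (hA0 : 0 ≤ A) (hD : ∀ x, ‖fderiv ℝ η x‖ ≤ D) :
    ∫ x in Ω, ‖gradient u x‖ ^ (q x - 1) * |G (u x)| * ‖fderiv ℝ η x‖ ≤
      A * D * ∫ x in tsupport η, ‖gradient u x‖ ^ (q x - 1) := by
  have hm := (isClosed_tsupport η).measurableSet
  rw [← integral_const_mul, setIntegral_eq_of_subset_of_forall_sdiff_eq_zero
    S.isOpen.measurableSet hη.2.2 fun x hx => ?_]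
  · refine setIntegral_mono_on ((S.fluxPairing_mul_integrable hG hη).2.mono_set hη.2.2)
      (((S.flux_cont.mono hη.2.2).integrableOn_compact hη.2.1).const_mul _) hm fun x hx => ?_
    have h0 : 0 ≤ ‖gradient u x‖ ^ (q x - 1) := Real.rpow_nonneg (norm_nonneg _) _
    calc ‖gradient u x‖ ^ (q x - 1) * |G (u x)| * ‖fderiv ℝ η x‖
        ≤ ‖gradient u x‖ ^ (q x - 1) * A * D := by
          gcongr
          · exact hA x hx
          · exact hD x
      _ = _ := by ring
  · have : fderiv ℝ η x = 0 := image_eq_zero_of_notMem_tsupport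
      fun h => hx.2 (tsupport_fderiv_subset ℝ h)
    simp [this]

theorem neg_integral_f_mul_le (S : IsBoundedSol Ω pmin pmax L1 L2 q u f b) {G : ℝ → ℝ}
    (hG : Continuous G) {η : Euc N → ℝ} (hη : IsTest Ω η) (hη1 : ∀ x, 0 ≤ η x ∧ η x ≤ 1)
    {A : ℝ} (hA : ∀ x ∈ tsupport η, |G (u x)| ≤ A) :
    -∫ x in Ω, f x * (G (u x) * η x) ≤ L2 * A * volume.real (tsupport η) := by
  have hm := (isClosed_tsupport η).measurableSet
  have hI : IntegrableOn (fun x => f x * (G (u x) * η x)) Ω :=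
    S.f_mul_integrable (hG.comp_continuousOn S.u_cont) hη.1.continuous hη.2.1 hη.2.2
  rw [← integral_neg, setIntegral_eq_of_subset_of_forall_sdiff_eq_zero
    S.isOpen.measurableSet hη.2.2 fun x hx => ?_]
  · calc ∫ x in tsupport η, -(f x * (G (u x) * η x)) ≤ ∫ x in tsupport η, L2 * A := by
          refine setIntegral_mono_on (hI.mono_set hη.2.2).neg
            (continuousOn_const.integrableOn_compact hη.2.1) hm fun x hx => ?_
          refine (neg_le_abs _).trans ?_
          have h1 := hA x hx
          have h2 := S.f_bd x (hη.2.2 hx)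
          rw [abs_mul, abs_mul, abs_of_nonneg (hη1 x).1]
          have h3 := S.L2_nonneg
          have h4 := (abs_nonneg _).trans h1
          calc |f x| * (|G (u x)| * η x) ≤ L2 * (A * 1) := by
                gcongr
                · exact mul_nonneg (abs_nonneg _) (hη1 x).1
                · exact (hη1 x).1
                · exact (hη1 x).2
            _ = L2 * A := by ring
      _ = _ := by
          rw [setIntegral_const, smul_eq_mul, mul_comm]
  · simp [image_eq_zero_of_notMem_tsupport hx.2]

/-- Caccioppoli estimate: the energy `∫_K |∇u|^{q}` is bounded on compact sets by a constant which
does not depend on the solution. It comes from testing with `u ζ^m`, where `ζ` is a cutoff function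
and `m ≥ pmax`, and absorbing the gradient term. -/
theorem exists_energy_bound (hΩ : IsOpen Ω) (pmin pmax L1 L2 : ℝ) {K : Set (Euc N)}
    (hK : IsCompact K) (hKΩ : K ⊆ Ω) :
    ∃ C, ∀ {q u f : Euc N → ℝ} {b : ℝ → ℝ}, IsBoundedSol Ω pmin pmax L1 L2 q u f b →
      ∫ x in K, ‖gradient u x‖ ^ q x ≤ C := by
  obtain ⟨ζ, hζ, hζ01, hζK⟩ := exists_cutoff hΩ hK hKΩ
  obtain ⟨k, hk⟩ := exists_nat_ge (max pmax 1)
  have hζd : Differentiable ℝ ζ := hζ.1.differentiable (by simp)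
  obtain ⟨D, hD⟩ := (hζ.2.1.fderiv ℝ).exists_bound_of_continuous
    (hζ.1.continuous_fderiv (by simp))
  have hD0 : 0 ≤ D := (norm_nonneg _).trans (hD 0)
  set η : Euc N → ℝ := fun x => ζ x ^ (k + 1) with hηdef
  have hηs : tsupport η ⊆ tsupport ζ := closure_mono fun x hx h => hx (by simp [hηdef, h])
  have hη : IsTest Ω η := ⟨hζ.1.pow _, hζ.2.1.of_isClosed_subset (isClosed_tsupport _) hηs,
    hηs.trans hζ.2.2⟩
  have hη01 : ∀ x, 0 ≤ η x ∧ η x ≤ 1 := fun x =>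
    ⟨pow_nonneg (hζ01 x).1 _, pow_le_one₀ (hζ01 x).1 (hζ01 x).2⟩
  have hηK : ∀ x ∈ K, η x = 1 := fun x hx => by simp [hηdef, hζK x hx]
  have hηD : ∀ x, ‖fderiv ℝ η x‖ ≤ (k + 1) * D * ζ x ^ k := by
    intro x
    have h1 : fderiv ℝ η x = ((k + 1 : ℕ) * ζ x ^ k) • fderiv ℝ ζ x := by
      have := ((hζd x).hasFDerivAt.pow (k + 1)).fderiv
      simpa using this
    rw [h1, norm_smul, norm_mul, norm_pow, Real.norm_of_nonneg (hζ01 x).1]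
    have h2 : ‖((k + 1 : ℕ) : ℝ)‖ = k + 1 := by
      rw [Real.norm_of_nonneg (by positivity)]
      push_cast
      rfl
    rw [h2]
    have h3 : 0 ≤ ζ x ^ k := pow_nonneg (hζ01 x).1 _
    calc ((k : ℝ) + 1) * ζ x ^ k * ‖fderiv ℝ ζ x‖ ≤ (k + 1) * ζ x ^ k * D := by
          gcongr
          exact hD x
      _ = _ := by ring
  set c : ℝ := |L1| * ((k + 1) * D) with hcdef
  have hc : 0 ≤ c := by positivity
  set V := volume.real (tsupport ζ) with hV
  refine ⟨2 * (c * (2 * c + 1) ^ k * V + L2 * |L1| * volume.real (tsupport η)), ?_⟩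
  intro q u f b S
  have hm := S.isOpen.measurableSet
  have hts := (isClosed_tsupport ζ).measurableSet
  have hu : ∀ x ∈ Ω, |u x| ≤ |L1| := fun x hx =>
    abs_le_abs_of_nonneg (S.u_bd x hx).1 (S.u_bd x hx).2
  have h1 := S.test_comp_le (G := id) (G' := fun _ => 1) (fun s => hasDerivAt_id s)
    continuous_const hη
  have h2 := S.neg_integral_f_mul_le continuous_id hη hη01 (A := |L1|)
    fun x hx => hu x (hη.2.2 hx)
  have h3 : 0 ≤ ∫ x in Ω, b (u x) * id (u x) * η x := setIntegral_nonneg hm fun x hx =>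
    mul_nonneg (mul_nonneg (S.b_nonneg _) (S.u_bd x hx).1) (hη01 x).1
  simp only [id, mul_one] at h1 h2 h3
  have hIE := mul_test_integrable S.energy_cont hη
  have hIC : IntegrableOn ((tsupport ζ).indicator fun _ => c * (2 * c + 1) ^ k) Ω := by
    have : IntegrableOn ((tsupport ζ).indicator fun _ => c * (2 * c + 1) ^ k) univ :=
      ((continuousOn_const.integrableOn_compact hζ.2.1).integrable_indicator hts).integrableOn
    exact this.mono_set (subset_univ _)
  have h4 : ∫ x in Ω, ‖gradient u x‖ ^ (q x - 1) * |u x| * ‖fderiv ℝ η x‖ ≤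
      ∫ x in Ω, (1 / 2 * (‖gradient u x‖ ^ q x * η x)
        + (tsupport ζ).indicator (fun _ => c * (2 * c + 1) ^ k) x) := by
    refine setIntegral_mono_on (S.fluxPairing_mul_integrable continuous_id hη).2
      ((hIE.const_mul _).add hIC) hm fun x hx => ?_
    have h0 : 0 ≤ ‖gradient u x‖ ^ (q x - 1) := Real.rpow_nonneg (norm_nonneg _) _
    by_cases hxs : x ∈ tsupport ζ
    · rw [indicator_of_mem hxs]
      refine le_trans ?_ (flux_mul_le_energy_add (norm_nonneg _) (S.one_lt_q hx) ?_
        (hζ01 x).1 (hζ01 x).2 hc)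
      · calc ‖gradient u x‖ ^ (q x - 1) * |u x| * ‖fderiv ℝ η x‖
            ≤ ‖gradient u x‖ ^ (q x - 1) * |L1| * ((k + 1) * D * ζ x ^ k) :=
              mul_le_mul (mul_le_mul_of_nonneg_left (hu x hx) h0) (hηD x) (norm_nonneg _)
                (mul_nonneg h0 (abs_nonneg _))
          _ = _ := by rw [hcdef]; ring
      · linarith [(S.q_bd x hx).2, le_max_left pmax 1]
    · have : fderiv ℝ η x = 0 := image_eq_zero_of_notMem_tsupport
        fun h => hxs (hηs (tsupport_fderiv_subset ℝ h))
      rw [indicator_of_notMem hxs, this, norm_zero, mul_zero, add_zero]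
      exact mul_nonneg (by norm_num)
        (mul_nonneg (Real.rpow_nonneg (norm_nonneg _) _) (hη01 x).1)
  rw [integral_add (hIE.const_mul _) hIC, integral_const_mul, setIntegral_indicator hts,
    inter_eq_right.2 hζ.2.2, setIntegral_const, smul_eq_mul] at h4
  have h5 := setIntegral_le_integral_mul_cutoff S.isOpen hK hKΩ S.energy_cont
    (fun x _ => Real.rpow_nonneg (norm_nonneg _) _) hη (fun x => (hη01 x).1) hηK
  rw [← hV] at h4
  linarith

/-- Local `L¹` bound for the flux `|∇u|^{q-1}`, uniform over all solutions. -/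
theorem exists_flux_bound (hΩ : IsOpen Ω) (pmin pmax L1 L2 : ℝ) {K : Set (Euc N)}
    (hK : IsCompact K) (hKΩ : K ⊆ Ω) :
    ∃ C, ∀ {q u f : Euc N → ℝ} {b : ℝ → ℝ}, IsBoundedSol Ω pmin pmax L1 L2 q u f b →
      ∫ x in K, ‖gradient u x‖ ^ (q x - 1) ≤ C := by
  obtain ⟨C, hC⟩ := exists_energy_bound hΩ pmin pmax L1 L2 hK hKΩ
  refine ⟨volume.real K + C, fun {q u f b} S => ?_⟩
  have hI1 : IntegrableOn (fun _ => (1 : ℝ)) K := continuousOn_const.integrableOn_compact hK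
  have hI2 := (S.energy_cont.mono hKΩ).integrableOn_compact hK (μ := volume)
  calc ∫ x in K, ‖gradient u x‖ ^ (q x - 1) ≤ ∫ x in K, (1 + ‖gradient u x‖ ^ q x) :=
        setIntegral_mono_on ((S.flux_cont.mono hKΩ).integrableOn_compact hK) (hI1.add hI2)
          hK.measurableSet fun x hx =>
            rpow_sub_one_le_one_add (norm_nonneg _) (S.one_lt_q (hKΩ hx))
    _ = volume.real K + ∫ x in K, ‖gradient u x‖ ^ q x := by
        rw [integral_add hI1 hI2, setIntegral_const, smul_eq_mul, mul_one]
    _ ≤ _ := by linarith [hC S]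

/-- Testing with `(1 + B(u)) η`, where `B' = b` and `0 ≤ B ≤ M`, controls
`∫ b(u) (1 + |∇u|^{q}) η` by the flux on the support of the cutoff `η`. -/
theorem reaction_energy_le (S : IsBoundedSol Ω pmin pmax L1 L2 q u f b) {B : ℝ → ℝ} {M : ℝ}
    (hB : ∀ s, HasDerivAt B (b s) s) (hB01 : ∀ s, 0 ≤ B s ∧ B s ≤ M) {η : Euc N → ℝ}
    (hη : IsTest Ω η) (hη0 : ∀ x, 0 ≤ η x) {D : ℝ} (hD : ∀ x, ‖fderiv ℝ η x‖ ≤ D) :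
    ∫ x in Ω, b (u x) * (1 + ‖gradient u x‖ ^ q x) * η x ≤
      (1 + M) * D * (∫ x in tsupport η, ‖gradient u x‖ ^ (q x - 1))
        - ∫ x in Ω, f x * ((1 + B (u x)) * η x) := by
  have hm := S.isOpen.measurableSet
  have hBc : Continuous B := continuous_iff_continuousAt.2 fun s => (hB s).continuousAt
  have hbu : ContinuousOn (fun x => b (u x)) Ω := S.b_cont.comp_continuousOn S.u_cont
  have hBu : ContinuousOn (fun x => B (u x)) Ω := hBc.comp_continuousOn S.u_cont
  have hM : 0 ≤ M := (hB01 0).1.trans (hB01 0).2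
  have h1 := S.test_comp_le (G := fun s => 1 + B s) (G' := b)
    (fun s => (hB s).const_add 1) S.b_cont hη
  have h2 := S.integral_flux_mul_le (G := fun s => 1 + B s) (continuous_const.add hBc) hη
    (A := 1 + M) (fun x _ => by
      rw [abs_of_nonneg (by linarith [(hB01 (u x)).1])]
      linarith [(hB01 (u x)).2]) (by linarith) hD
  have hI1 : IntegrableOn (fun x => ‖gradient u x‖ ^ q x * b (u x) * η x) Ω :=
    mul_test_integrable (S.energy_cont.mul hbu) hη
  have hI2 : IntegrableOn (fun x => b (u x) * (1 + B (u x)) * η x) Ω :=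
    mul_test_integrable (hbu.mul (continuousOn_const.add hBu)) hη
  have hI3 : IntegrableOn (fun x => b (u x) * (1 + ‖gradient u x‖ ^ q x) * η x) Ω :=
    mul_test_integrable (hbu.mul (continuousOn_const.add S.energy_cont)) hη
  have h3 : ∫ x in Ω, b (u x) * (1 + ‖gradient u x‖ ^ q x) * η x ≤
      (∫ x in Ω, ‖gradient u x‖ ^ q x * b (u x) * η x)
        + ∫ x in Ω, b (u x) * (1 + B (u x)) * η x := by
    rw [← integral_add hI1 hI2]
    refine setIntegral_mono_on hI3 (hI1.add hI2) hm fun x hx => ?_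
    have := mul_nonneg (mul_nonneg (S.b_nonneg (u x)) (hB01 (u x)).1) (hη0 x)
    linarith
  linarith

/-- Uniform local bound for `b(u) (1 + |∇u|^q)`, depending on `b` only through the bound `M` for its
primitive. -/
theorem exists_reaction_energy_bound (hΩ : IsOpen Ω) (pmin pmax L1 L2 M : ℝ) {K : Set (Euc N)}
    (hK : IsCompact K) (hKΩ : K ⊆ Ω) :
    ∃ C, ∀ {q u f : Euc N → ℝ} {b B : ℝ → ℝ}, IsBoundedSol Ω pmin pmax L1 L2 q u f b →
      (∀ s, HasDerivAt B (b s) s) → (∀ s, 0 ≤ B s ∧ B s ≤ M) →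
      ∫ x in K, b (u x) * (1 + ‖gradient u x‖ ^ q x) ≤ C := by
  obtain ⟨η, hη, hη01, hηK⟩ := exists_cutoff hΩ hK hKΩ
  obtain ⟨D, hD⟩ := (hη.2.1.fderiv ℝ).exists_bound_of_continuous
    (hη.1.continuous_fderiv (by simp))
  have hD0 : 0 ≤ D := (norm_nonneg _).trans (hD 0)
  obtain ⟨C, hC⟩ := exists_flux_bound hΩ pmin pmax L1 L2 hη.2.1 hη.2.2
  refine ⟨(1 + M) * D * C + L2 * (1 + M) * volume.real (tsupport η),
    fun {q u f b B} S hB hB01 => ?_⟩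
  have hBc : Continuous B := continuous_iff_continuousAt.2 fun s => (hB s).continuousAt
  have hbu : ContinuousOn (fun x => b (u x)) Ω := S.b_cont.comp_continuousOn S.u_cont
  have hM : 0 ≤ M := (hB01 0).1.trans (hB01 0).2
  have h1 := S.reaction_energy_le hB hB01 hη (fun x => (hη01 x).1) hD
  have h2 := S.neg_integral_f_mul_le (G := fun s => 1 + B s) (continuous_const.add hBc) hη hη01
    (A := 1 + M) (fun x _ => by
      rw [abs_of_nonneg (by linarith [(hB01 (u x)).1])]
      linarith [(hB01 (u x)).2])
  have h3 := setIntegral_le_integral_mul_cutoff S.isOpen hK hKΩ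
    (F := fun x => b (u x) * (1 + ‖gradient u x‖ ^ q x))
    (hbu.mul (continuousOn_const.add S.energy_cont))
    (fun x _ => mul_nonneg (S.b_nonneg _)
      (add_nonneg zero_le_one (Real.rpow_nonneg (norm_nonneg _) _))) hη
    (fun x => (hη01 x).1) hηK
  have h4 : (1 + M) * D * (∫ x in tsupport η, ‖gradient u x‖ ^ (q x - 1)) ≤
      (1 + M) * D * C := by
    gcongr
    exact hC S
  linarith

/-- Where `u` is uniformly small, so is its energy. -/
theorem exists_energy_le_of_small {U : Set (Euc N)} (hΩ : IsOpen Ω) (hU : IsOpen U) (hUΩ : U ⊆ Ω)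
    (pmin pmax L1 L2 : ℝ) {K : Set (Euc N)} (hK : IsCompact K) (hKU : K ⊆ U) :
    ∃ K', IsCompact K' ∧ K' ⊆ U ∧ ∃ C, ∀ {q u f : Euc N → ℝ} {b : ℝ → ℝ} {σ : ℝ},
      IsBoundedSol Ω pmin pmax L1 L2 q u f b → 0 ≤ σ → (∀ x ∈ K', u x ≤ σ) →
      ∫ x in K, ‖gradient u x‖ ^ q x ≤ σ * C := by
  obtain ⟨η, hηU, hη01, hηK⟩ := exists_cutoff hU hK hKU
  have hη : IsTest Ω η := ⟨hηU.1, hηU.2.1, hηU.2.2.trans hUΩ⟩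
  obtain ⟨D, hD⟩ := (hη.2.1.fderiv ℝ).exists_bound_of_continuous
    (hη.1.continuous_fderiv (by simp))
  have hD0 : 0 ≤ D := (norm_nonneg _).trans (hD 0)
  obtain ⟨C, hC⟩ := exists_flux_bound hΩ pmin pmax L1 L2 hη.2.1 hη.2.2
  refine ⟨tsupport η, hηU.2.1, hηU.2.2, D * C + L2 * volume.real (tsupport η),
    fun {q u f b σ} S hσ hu => ?_⟩
  have hm := S.isOpen.measurableSet
  have hA : ∀ x ∈ tsupport η, |id (u x)| ≤ σ := fun x hx => by
    rw [id, abs_of_nonneg (S.u_bd x (hη.2.2 hx)).1]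
    exact hu x hx
  have h1 := S.test_comp_le (G := id) (G' := fun _ => 1) (fun s => hasDerivAt_id s)
    continuous_const hη
  have h2 := S.neg_integral_f_mul_le continuous_id hη hη01 hA
  have h3 := S.integral_flux_mul_le continuous_id hη hA hσ hD
  have h4 : 0 ≤ ∫ x in Ω, b (u x) * id (u x) * η x := setIntegral_nonneg hm fun x hx =>
    mul_nonneg (mul_nonneg (S.b_nonneg _) (S.u_bd x hx).1) (hη01 x).1
  simp only [mul_one] at h1
  have h5 := setIntegral_le_integral_mul_cutoff S.isOpen hK (hKU.trans hUΩ) S.energy_cont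
    (fun x _ => Real.rpow_nonneg (norm_nonneg _) _) hη (fun x => (hη01 x).1) hηK
  have h6 : σ * D * (∫ x in tsupport η, ‖gradient u x‖ ^ (q x - 1)) ≤ σ * D * C := by
    gcongr
    exact hC S
  linarith

/-- Where `u` is uniformly small, so is its flux: split according to whether `|∇u|` exceeds
`√σ`. -/
theorem exists_flux_le_of_small {U : Set (Euc N)} (hΩ : IsOpen Ω) (hU : IsOpen U) (hUΩ : U ⊆ Ω)
    (pmin pmax L1 L2 : ℝ) {K : Set (Euc N)} (hK : IsCompact K) (hKU : K ⊆ U) :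
    ∃ K', IsCompact K' ∧ K' ⊆ U ∧ ∃ C, ∀ {q u f : Euc N → ℝ} {b : ℝ → ℝ} {σ : ℝ},
      IsBoundedSol Ω pmin pmax L1 L2 q u f b → 0 < σ → σ ≤ 1 → (∀ x ∈ K', u x ≤ σ) →
      ∫ x in K, ‖gradient u x‖ ^ (q x - 1) ≤
        √σ ^ (pmin - 1) * volume.real K + √σ * C := by
  obtain ⟨K', hK', hK'U, C, hC⟩ := exists_energy_le_of_small hΩ hU hUΩ pmin pmax L1 L2 hK hKU
  refine ⟨K', hK', hK'U, C, fun {q u f b σ} S hσ hσ1 hu => ?_⟩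
  have hs : 0 < √σ := Real.sqrt_pos.2 hσ
  have hs1 : √σ ≤ 1 := Real.sqrt_le_one.2 hσ1
  have hKΩ := hKU.trans hUΩ
  have hI1 : IntegrableOn (fun _ => √σ ^ (pmin - 1)) K :=
    continuousOn_const.integrableOn_compact hK
  have hI2 := ((S.energy_cont.mono hKΩ).integrableOn_compact hK (μ := volume)).div_const √σ
  calc ∫ x in K, ‖gradient u x‖ ^ (q x - 1)
      ≤ ∫ x in K, (√σ ^ (pmin - 1) + ‖gradient u x‖ ^ q x / √σ) :=
        setIntegral_mono_on ((S.flux_cont.mono hKΩ).integrableOn_compact hK) (hI1.add hI2)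
          hK.measurableSet fun x hx => rpow_sub_one_le_split (norm_nonneg _) S.one_lt
            (S.q_bd x (hKΩ hx)).1 hs hs1
    _ = √σ ^ (pmin - 1) * volume.real K + (∫ x in K, ‖gradient u x‖ ^ q x) / √σ := by
        rw [integral_add hI1 hI2, setIntegral_const, smul_eq_mul, integral_div, mul_comm]
    _ ≤ √σ ^ (pmin - 1) * volume.real K + σ * C / √σ := by
        gcongr
        exact hC S hσ.le hu
    _ = _ := by
        congr 1
        rw [div_eq_iff hs.ne']
        nth_rewrite 1 [← Real.mul_self_sqrt hσ.le]
        ring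

/-- Translates of `B(u)` are controlled by `∫ b(u) (1 + |∇u|^{q})`, since
`|∇(B(u))| = b(u) |∇u| ≤ b(u) (1 + |∇u|^{q})`. -/
theorem lintegral_translate_le (S : IsBoundedSol Ω pmin pmax L1 L2 q u f b) {B : ℝ → ℝ}
    (hB : ∀ s, HasDerivAt B (b s) s) {K : Set (Euc N)} {δ : ℝ} (hK : IsCompact K)
    (hKδ : cthickening δ K ⊆ Ω) {h : Euc N} (hh : ‖h‖ ≤ δ) :
    ∫⁻ x in K, ‖B (u (x + h)) - B (u x)‖ₑ ≤ ‖h‖ₑ *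
      ENNReal.ofReal (∫ x in cthickening δ K, b (u x) * (1 + ‖gradient u x‖ ^ q x)) := by
  have hBd : deriv B = b := funext fun s => (hB s).deriv
  have hBc : ContDiff ℝ 1 B := contDiff_one_iff_deriv.2
    ⟨fun s => (hB s).differentiableAt, hBd ▸ S.b_cont⟩
  have hF : ContDiffOn ℝ 1 (fun x => B (u x)) Ω := hBc.comp_contDiffOn S.sol.1
  have hbu : ContinuousOn (fun x => b (u x)) Ω := S.b_cont.comp_continuousOn S.u_cont
  have hK' : IsCompact (cthickening δ K) := hK.cthickening
  refine (lintegral_translate_sub_le S.isOpen hF hKδ hh).trans ?_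
  have h0 : ∀ x, 0 ≤ b (u x) * (1 + ‖gradient u x‖ ^ q x) := fun x =>
    mul_nonneg (S.b_nonneg _) (add_nonneg zero_le_one (Real.rpow_nonneg (norm_nonneg _) _))
  have hI : IntegrableOn (fun x => b (u x) * (1 + ‖gradient u x‖ ^ q x)) (cthickening δ K) :=
    ((hbu.mul (continuousOn_const.add S.energy_cont)).mono hKδ).integrableOn_compact hK'
  rw [ofReal_integral_eq_lintegral_ofReal hI (Eventually.of_forall h0)]
  refine mul_le_mul_right (setLIntegral_mono' hK'.measurableSet fun x hx => ?_) _
  have h1 : fderiv ℝ (fun x => B (u x)) x = b (u x) • fderiv ℝ u x :=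
    ((hB (u x)).comp_hasFDerivAt x (S.u_diffAt (hKδ hx)).hasFDerivAt).fderiv
  rw [← ofReal_norm, h1, norm_smul, Real.norm_of_nonneg (S.b_nonneg _)]
  have h2 : ‖fderiv ℝ u x‖ = ‖gradient u x‖ :=
    ((InnerProductSpace.toDual ℝ (Euc N)).symm.norm_map _).symm
  rw [h2]
  exact ENNReal.ofReal_le_ofReal (mul_le_mul_of_nonneg_left
    (le_one_add_rpow (norm_nonneg _) (S.one_lt_q (hKδ hx))) (S.b_nonneg _))

end IsBoundedSol

/-! ### The reaction term and its primitive -/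

namespace IsBeta

variable {β : ℝ → ℝ} {M : ℝ}

theorem continuous (h : IsBeta β M) : Continuous β :=
  h.lipschitz.choose_spec.continuous

theorem nonneg (h : IsBeta β M) (s : ℝ) : 0 ≤ β s := by
  by_cases hs : s ∈ Ioo (0 : ℝ) 1
  · exact (h.pos s hs).le
  · exact (h.vanish s hs).ge

theorem betaEps_continuous (h : IsBeta β M) (ε : ℝ) : Continuous (betaEps β ε) :=
  continuous_const.mul (h.continuous.comp (continuous_id.div_const ε))

theorem betaEps_nonneg (h : IsBeta β M) {ε : ℝ} (hε : 0 < ε) (s : ℝ) : 0 ≤ betaEps β ε s :=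
  mul_nonneg (by positivity) (h.nonneg _)

theorem hasDerivAt_Bfun (h : IsBeta β M) (ε s : ℝ) :
    HasDerivAt (Bfun β ε) (betaEps β ε s) s :=
  intervalIntegral.integral_hasDerivAt_right ((h.betaEps_continuous ε).intervalIntegrable _ _)
    ((h.betaEps_continuous ε).stronglyMeasurableAtFilter _ _) (h.betaEps_continuous ε).continuousAt

theorem Bfun_continuous (h : IsBeta β M) (ε : ℝ) : Continuous (Bfun β ε) :=
  continuous_iff_continuousAt.2 fun s => (h.hasDerivAt_Bfun ε s).continuousAt

theorem Bfun_eq {ε : ℝ} (hε : 0 < ε) (s : ℝ) :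
    Bfun β ε s = Bfun β 1 (s / ε) := by
  simp only [Bfun, betaEps, div_one, one_mul]
  rw [intervalIntegral.integral_const_mul, intervalIntegral.integral_comp_div _ hε.ne', zero_div,
    smul_eq_mul, ← mul_assoc, one_div, inv_mul_cancel₀ hε.ne', one_mul]

theorem Bfun_mono (h : IsBeta β M) {ε : ℝ} (hε : 0 < ε) : Monotone (Bfun β ε) :=
  monotone_of_hasDerivAt_nonneg (h.hasDerivAt_Bfun ε) (h.betaEps_nonneg hε)

theorem Bfun_one_zero : Bfun β 1 0 = 0 := by simp [Bfun]

theorem Bfun_one_one (h : IsBeta β M) : Bfun β 1 1 = M := by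
  simpa [Bfun, betaEps] using h.integral

theorem Bfun_one_of_nonpos (h : IsBeta β M) {s : ℝ} (hs : s ≤ 0) : Bfun β 1 s = 0 := by
  rw [Bfun, intervalIntegral.integral_congr (g := fun _ => (0 : ℝ)),
    intervalIntegral.integral_zero]
  intro t ht
  rw [uIcc_of_ge hs] at ht
  simp [betaEps, h.vanish t fun h0 => h0.1.not_ge ht.2]

theorem Bfun_one_of_one_le (h : IsBeta β M) {s : ℝ} (hs : 1 ≤ s) : Bfun β 1 s = M := by
  have hc := h.betaEps_continuous 1
  have h1 : Bfun β 1 s = Bfun β 1 1 + ∫ t in (1 : ℝ)..s, betaEps β 1 t :=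
    (intervalIntegral.integral_add_adjacent_intervals (hc.intervalIntegrable _ _)
      (hc.intervalIntegrable _ _)).symm
  rw [h1, h.Bfun_one_one, intervalIntegral.integral_congr (g := fun _ => (0 : ℝ)),
    intervalIntegral.integral_zero, add_zero]
  intro t ht
  rw [uIcc_of_le hs] at ht
  simp [betaEps, h.vanish t fun h0 => h0.2.not_ge ht.1]

theorem Bfun_mem (h : IsBeta β M) {ε : ℝ} (hε : 0 < ε) (s : ℝ) :
    0 ≤ Bfun β ε s ∧ Bfun β ε s ≤ M := by
  have hm := h.Bfun_mono one_pos
  rw [Bfun_eq hε]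
  constructor
  · rw [← h.Bfun_one_of_nonpos (min_le_right (s / ε) 0)]
    exact hm (min_le_left _ _)
  · rw [← h.Bfun_one_of_one_le (le_max_right (s / ε) 1)]
    exact hm (le_max_left _ _)

theorem Bfun_eq_of_le (h : IsBeta β M) {ε s : ℝ} (hε : 0 < ε) (hs : ε ≤ s) :
    Bfun β ε s = M := by
  rw [Bfun_eq hε]
  exact h.Bfun_one_of_one_le ((one_le_div hε).2 hs)

/-- If the values `∫₀^{v_j} β` converge to a number strictly between `0` and `M`, then `v_j`
eventually stays in a compact subinterval of `(0,1)`, on which `β` is bounded below. -/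
theorem exists_eventually_le (h : IsBeta β M) {v : ℕ → ℝ} {c : ℝ} (hc0 : 0 < c) (hcM : c < M)
    (hv : Tendsto (fun j => Bfun β 1 (v j)) atTop (𝓝 c)) :
    ∃ m, 0 < m ∧ ∀ᶠ j in atTop, m ≤ β (v j) := by
  have hcont := (h.Bfun_continuous 1).continuousOn (s := Icc 0 1)
  have hivt : Icc (0 : ℝ) M ⊆ Bfun β 1 '' Icc 0 1 := by
    have := intermediate_value_Icc zero_le_one hcont
    rwa [Bfun_one_zero, h.Bfun_one_one] at this
  obtain ⟨a, ha, hav⟩ := hivt ⟨by linarith, by linarith⟩ (a := c / 2)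
  obtain ⟨d, hd, hdv⟩ := hivt ⟨by linarith, by linarith⟩ (a := (c + M) / 2)
  have hmono := h.Bfun_mono one_pos
  have ha0 : 0 < a := ha.1.lt_of_ne fun h0 => by
    rw [← h0, Bfun_one_zero] at hav
    linarith
  have hd1 : d < 1 := hd.2.lt_of_ne fun h0 => by
    rw [h0, h.Bfun_one_one] at hdv
    linarith
  have had : a ≤ d := by
    by_contra! hlt
    have := hmono hlt.le
    linarith
  obtain ⟨s, hs, hmin⟩ := isCompact_Icc.exists_isMinOn (nonempty_Icc.2 had)
    h.continuous.continuousOn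
  refine ⟨β s, h.pos s ⟨ha0.trans_le hs.1, hs.2.trans_lt hd1⟩, ?_⟩
  filter_upwards [hv.eventually (Ioo_mem_nhds (by linarith : c / 2 < c)
    (by linarith : c < (c + M) / 2))] with j hj
  refine hmin ⟨?_, ?_⟩
  · by_contra! hlt
    have := hmono hlt.le
    linarith [hj.1]
  · by_contra! hlt
    have := hmono hlt.le
    linarith [hj.2]

end IsBeta

/-! ### Passage to the limit -/

namespace LimitHyp

variable {N : ℕ} {Ω : Set (Euc N)} {β : ℝ → ℝ} {M pmin pmax L L1 L2 : ℝ} {ε : ℕ → ℝ}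
  {pe fe ue : ℕ → Euc N → ℝ} {u f p : Euc N → ℝ}

theorem boundedSol (H : LimitHyp Ω β M pmin pmax L L1 L2 ε pe fe ue u f p) (j : ℕ) :
    IsBoundedSol Ω pmin pmax L1 L2 (pe j) (ue j) (fe j) (betaEps β (ε j)) where
  isOpen := H.open_Ω
  one_lt := H.h_pmin
  q_cont := (H.pe_lip j).continuousOn
  q_bd := H.pe_bd j
  b_cont := H.beta.betaEps_continuous _
  b_nonneg := H.beta.betaEps_nonneg (H.eps_pos j)
  f_meas := H.fe_meas j
  L2_nonneg := by
    obtain ⟨x, hx⟩ := H.conn_Ω.nonempty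
    exact (abs_nonneg _).trans (H.fe_bd j x hx)
  f_bd := H.fe_bd j
  u_bd := fun x hx => ⟨(H.sol j).1 x hx, (le_abs_self _).trans (H.ue_bd j x hx)⟩
  sol := (H.sol j).2

theorem Bfun_ue_continuousOn (H : LimitHyp Ω β M pmin pmax L L1 L2 ε pe fe ue u f p) (j : ℕ) :
    ContinuousOn (fun x => Bfun β (ε j) (ue j x)) Ω :=
  (H.beta.Bfun_continuous _).comp_continuousOn (H.boundedSol j).u_cont

theorem exists_phase_bound (H : LimitHyp Ω β M pmin pmax L L1 L2 ε pe fe ue u f p)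
    {K : Set (Euc N)} (hK : IsCompact K) (hKΩ : K ⊆ Ω) :
    ∃ C, ∀ j, ∫ x in K,
      betaEps β (ε j) (ue j x) * (1 + ‖gradient (ue j) x‖ ^ pe j x) ≤ C := by
  obtain ⟨C, hC⟩ := IsBoundedSol.exists_reaction_energy_bound H.open_Ω pmin pmax L1 L2 M hK hKΩ
  exact ⟨C, fun j => hC (H.boundedSol j) (H.beta.hasDerivAt_Bfun _)
    (H.beta.Bfun_mem (H.eps_pos j))⟩

/-- `B_{ε_j}(u^{ε_j})` on `Ω`, extended by zero to the whole space: the values of `u^{ε_j}` outside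
`Ω` are irrelevant and need not be measurable. -/
def phase (Ω : Set (Euc N)) (β : ℝ → ℝ) (ε : ℕ → ℝ) (ue : ℕ → Euc N → ℝ) (j : ℕ) : Euc N → ℝ :=
  Ω.indicator fun x => Bfun β (ε j) (ue j x)

theorem phase_of_mem (β : ℝ → ℝ) (ε : ℕ → ℝ) (ue : ℕ → Euc N → ℝ) (j : ℕ) {x : Euc N}
    (hx : x ∈ Ω) : phase Ω β ε ue j x = Bfun β (ε j) (ue j x) :=
  indicator_of_mem hx _

theorem phase_measurable (H : LimitHyp Ω β M pmin pmax L L1 L2 ε pe fe ue u f p) (j : ℕ) :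
    Measurable (phase Ω β ε ue j) := by
  classical
  have := (H.Bfun_ue_continuousOn j).measurable_piecewise
    (continuousOn_const (c := (0 : ℝ)) (s := Ωᶜ)) H.open_Ω.measurableSet
  rw [phase, ← piecewise_eq_indicator]
  exact this

theorem phase_mem (H : LimitHyp Ω β M pmin pmax L L1 L2 ε pe fe ue u f p) (j : ℕ) (x : Euc N) :
    0 ≤ phase Ω β ε ue j x ∧ phase Ω β ε ue j x ≤ M := by
  by_cases hx : x ∈ Ω
  · rw [phase_of_mem β ε ue j hx]
    exact H.beta.Bfun_mem (H.eps_pos j) _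
  · rw [phase, indicator_of_notMem hx]
    exact ⟨le_rfl, H.beta.M_pos.le⟩

theorem lintegral_phase_translate_le (H : LimitHyp Ω β M pmin pmax L L1 L2 ε pe fe ue u f p)
    (j : ℕ) {K : Set (Euc N)} {δ : ℝ} (hK : IsCompact K) (hKδ : cthickening δ K ⊆ Ω)
    {h : Euc N} (hh : ‖h‖ ≤ δ) :
    ∫⁻ x in K, ‖phase Ω β ε ue j (x + h) - phase Ω β ε ue j x‖ₑ ≤ ‖h‖ₑ *
      ENNReal.ofReal (∫ x in cthickening δ K,
        betaEps β (ε j) (ue j x) * (1 + ‖gradient (ue j) x‖ ^ pe j x)) := by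
  refine le_trans (le_of_eq ?_) ((H.boundedSol j).lintegral_translate_le
    (H.beta.hasDerivAt_Bfun (ε j)) hK hKδ hh)
  refine setLIntegral_congr_fun hK.measurableSet fun x hx => ?_
  have h1 : x + h ∈ Ω := hKδ (mem_cthickening_of_dist_le _ x _ _ hx (by simpa using hh))
  have h2 : x ∈ Ω := hKδ (self_subset_cthickening _ hx)
  simp only [phase_of_mem β ε ue j h1, phase_of_mem β ε ue j h2]

/-- Compactness: the gradients of `B_{ε_j}(u^{ε_j})` are bounded in `L¹_loc`. -/
theorem exists_subseq (H : LimitHyp Ω β M pmin pmax L L1 L2 ε pe fe ue u f p) :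
    ∃ φ : ℕ → ℕ, StrictMono φ ∧ ∃ χ : Euc N → ℝ, Measurable χ ∧ (∀ x, 0 ≤ χ x ∧ χ x ≤ M) ∧
      ∀ᵐ x ∂volume.restrict Ω,
        Tendsto (fun j => Bfun β (ε (φ j)) (ue (φ j) x)) atTop (𝓝 (χ x)) := by
  obtain ⟨φ, hφ, χ, h1, h2, h3⟩ := exists_subseq_ae_tendsto H.open_Ω (phase Ω β ε ue)
    H.phase_measurable H.phase_mem fun K hK hKΩ => by
      obtain ⟨δ, hδ, hδΩ⟩ := hK.exists_cthickening_subset_open H.open_Ω hKΩ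
      obtain ⟨C, hC⟩ := H.exists_phase_bound hK.cthickening hδΩ
      refine ⟨δ, hδ, C.toNNReal, fun j h hh => ?_⟩
      exact (H.lintegral_phase_translate_le j hK hδΩ hh).trans
        (mul_le_mul_right (ENNReal.ofReal_le_ofReal (hC j)) _)
  refine ⟨φ, hφ, χ, h1, h2, ?_⟩
  filter_upwards [h3, ae_restrict_mem H.open_Ω.measurableSet] with x hx hxΩ
  simpa only [phase_of_mem β ε ue _ hxΩ] using hx

theorem tendsto_L1 (H : LimitHyp Ω β M pmin pmax L L1 L2 ε pe fe ue u f p) {φ : ℕ → ℕ}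
    {χ : Euc N → ℝ} (hχ : Measurable χ) (hχM : ∀ x, 0 ≤ χ x ∧ χ x ≤ M)
    (hlim : ∀ᵐ x ∂volume.restrict Ω,
      Tendsto (fun j => Bfun β (ε (φ j)) (ue (φ j) x)) atTop (𝓝 (χ x)))
    {K : Set (Euc N)} (hK : IsCompact K) (hKΩ : K ⊆ Ω) :
    Tendsto (fun j => ∫ x in K, |Bfun β (ε (φ j)) (ue (φ j) x) - χ x|) atTop (𝓝 0) := by
  have h0 : ∫ x in K, (0 : ℝ) = 0 := by simp
  rw [← h0]
  refine tendsto_integral_of_dominated_convergence (fun _ => M) (fun j => ?_)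
    (continuousOn_const.integrableOn_compact hK) (fun j => ?_) ?_
  · exact ((((H.Bfun_ue_continuousOn _).mono hKΩ).aestronglyMeasurable hK.measurableSet).sub
      hχ.aestronglyMeasurable).norm
  · refine Eventually.of_forall fun x => ?_
    have h1 := H.beta.Bfun_mem (H.eps_pos (φ j)) (ue (φ j) x)
    have h2 := hχM x
    rw [Real.norm_eq_abs, abs_abs, abs_le]
    constructor <;> linarith [h1.1, h1.2, h2.1, h2.2]
  · filter_upwards [ae_restrict_of_ae_restrict_of_subset hKΩ hlim] with x hx
    have := (hx.sub_const (χ x)).abs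
    simpa using this

theorem tendsto_ue (H : LimitHyp Ω β M pmin pmax L L1 L2 ε pe fe ue u f p) {x : Euc N}
    (hx : x ∈ Ω) : Tendsto (fun j => ue j x) atTop (𝓝 (u x)) :=
  (H.u_lim {x} isCompact_singleton (singleton_subset_iff.2 hx)).tendsto_at (mem_singleton x)

theorem u_continuousOn (H : LimitHyp Ω β M pmin pmax L L1 L2 ε pe fe ue u f p) :
    ContinuousOn u Ω :=
  ((tendstoLocallyUniformlyOn_iff_forall_isCompact H.open_Ω).2 fun K hKΩ hK =>
    H.u_lim K hK hKΩ).continuousOn (Frequently.of_forall fun j => (H.boundedSol j).u_cont)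

theorem ae_eq_of_pos (H : LimitHyp Ω β M pmin pmax L L1 L2 ε pe fe ue u f p) {φ : ℕ → ℕ}
    (hφ : StrictMono φ) {χ : Euc N → ℝ}
    (hlim : ∀ᵐ x ∂volume.restrict Ω,
      Tendsto (fun j => Bfun β (ε (φ j)) (ue (φ j) x)) atTop (𝓝 (χ x))) :
    ∀ᵐ x ∂volume.restrict {x | x ∈ Ω ∧ 0 < u x}, χ x = M := by
  have hopen : IsOpen {x | x ∈ Ω ∧ 0 < u x} :=
    H.u_continuousOn.isOpen_inter_preimage H.open_Ω isOpen_Ioi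
  filter_upwards [ae_restrict_of_ae_restrict_of_subset (fun x hx => hx.1) hlim,
    ae_restrict_mem hopen.measurableSet] with x hx hxu
  have h1 : ∀ᶠ j in atTop, ε (φ j) ≤ ue (φ j) x := by
    have h2 := (H.tendsto_ue hxu.1).comp hφ.tendsto_atTop
    have h3 := H.eps_lim.comp hφ.tendsto_atTop
    exact (h3.eventually_lt h2 hxu.2).mono fun j hj => le_of_lt hj
  refine tendsto_nhds_unique hx (tendsto_const_nhds.congr' ?_)
  filter_upwards [h1] with j hj
  exact (H.beta.Bfun_eq_of_le (H.eps_pos _) hj).symm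

/-- `∫_K β(u^{ε_j}/ε_j) = ε_j ∫_K β_{ε_j}(u^{ε_j}) = O(ε_j)`. -/
theorem tendsto_lintegral_beta (H : LimitHyp Ω β M pmin pmax L L1 L2 ε pe fe ue u f p)
    {K : Set (Euc N)} (hK : IsCompact K) (hKΩ : K ⊆ Ω) :
    Tendsto (fun j => ∫⁻ x in K, ENNReal.ofReal (β (ue j x / ε j))) atTop (𝓝 0) := by
  obtain ⟨C, hC⟩ := H.exists_phase_bound hK hKΩ
  have hlim : Tendsto (fun j => ENNReal.ofReal (ε j * C)) atTop (𝓝 0) := by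
    have := ENNReal.tendsto_ofReal (H.eps_lim.mul_const C)
    simpa using this
  refine tendsto_of_tendsto_of_tendsto_of_le_of_le tendsto_const_nhds hlim
    (fun _ => zero_le) fun j => ?_
  have S := H.boundedSol j
  have hε := H.eps_pos j
  have hbu : ContinuousOn (fun x => betaEps β (ε j) (ue j x)) Ω :=
    S.b_cont.comp_continuousOn S.u_cont
  have hI : IntegrableOn
      (fun x => betaEps β (ε j) (ue j x) * (1 + ‖gradient (ue j) x‖ ^ pe j x)) K :=
    ((hbu.mul (continuousOn_const.add S.energy_cont)).mono hKΩ).integrableOn_compact hK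
  have h0 : ∀ x, 0 ≤ ‖gradient (ue j) x‖ ^ pe j x := fun x =>
    Real.rpow_nonneg (norm_nonneg _) _
  calc ∫⁻ x in K, ENNReal.ofReal (β (ue j x / ε j))
      ≤ ∫⁻ x in K, ENNReal.ofReal
          (ε j * (betaEps β (ε j) (ue j x) * (1 + ‖gradient (ue j) x‖ ^ pe j x))) := by
        refine lintegral_mono fun x => ENNReal.ofReal_le_ofReal ?_
        have h1 : β (ue j x / ε j) = ε j * betaEps β (ε j) (ue j x) := by
          rw [betaEps, ← mul_assoc, mul_one_div_cancel hε.ne', one_mul]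
        rw [h1, ← mul_assoc]
        exact le_mul_of_one_le_right (mul_nonneg hε.le (S.b_nonneg _)) (by linarith [h0 x])
    _ = ENNReal.ofReal (∫ x in K,
          ε j * (betaEps β (ε j) (ue j x) * (1 + ‖gradient (ue j) x‖ ^ pe j x))) := by
        rw [ofReal_integral_eq_lintegral_ofReal (hI.const_mul _)]
        exact Eventually.of_forall fun x => mul_nonneg hε.le
          (mul_nonneg (S.b_nonneg _) (by linarith [h0 x]))
    _ ≤ ENNReal.ofReal (ε j * C) := by
        rw [integral_const_mul]
        exact ENNReal.ofReal_le_ofReal (mul_le_mul_of_nonneg_left (hC j) hε.le)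

/-- The limit takes only the values `0` and `M`: where it takes another value, `β(u^{ε_j}/ε_j)` is
eventually bounded below, while by Fatou's lemma its lower limit vanishes almost everywhere. -/
theorem ae_zero_or_M (H : LimitHyp Ω β M pmin pmax L L1 L2 ε pe fe ue u f p) {φ : ℕ → ℕ}
    (hφ : StrictMono φ) {χ : Euc N → ℝ} (hχM : ∀ x, 0 ≤ χ x ∧ χ x ≤ M)
    (hlim : ∀ᵐ x ∂volume.restrict Ω,
      Tendsto (fun j => Bfun β (ε (φ j)) (ue (φ j) x)) atTop (𝓝 (χ x))) :
    ∀ᵐ x ∂volume.restrict Ω, χ x = 0 ∨ χ x = M := by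
  obtain ⟨K, -, hKc, hcov⟩ := exists_compact_exhaustion H.open_Ω
  have hK := fun n => (hKc n).1
  have hKΩ := fun n => (hKc n).2
  have hF : ∀ n, ∀ᵐ x ∂volume.restrict (K n),
      liminf (fun j => ENNReal.ofReal (β (ue (φ j) x / ε (φ j)))) atTop = 0 := by
    intro n
    have hmeas : ∀ j, AEMeasurable (fun x => ENNReal.ofReal (β (ue (φ j) x / ε (φ j))))
        (volume.restrict (K n)) := fun j => by
      have h1 : ContinuousOn (fun x => β (ue (φ j) x / ε (φ j))) (K n) :=
        H.beta.continuous.comp_continuousOn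
          (((H.boundedSol (φ j)).u_cont.mono (hKΩ n)).div_const _)
      exact (h1.aemeasurable (hK n).measurableSet).ennreal_ofReal
    have h2 := lintegral_liminf_le' (u := atTop) hmeas
    have hT : Tendsto (fun j => ∫⁻ x in K n, ENNReal.ofReal (β (ue (φ j) x / ε (φ j))))
        atTop (𝓝 0) := (H.tendsto_lintegral_beta (hK n) (hKΩ n)).comp hφ.tendsto_atTop
    rw [hT.liminf_eq] at h2
    have hmlim : AEMeasurable
        (fun x => liminf (fun j => ENNReal.ofReal (β (ue (φ j) x / ε (φ j)))) atTop)
        (volume.restrict (K n)) := by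
      refine ⟨fun x => liminf (fun j => (hmeas j).mk _ x) atTop,
        Measurable.liminf fun j => (hmeas j).measurable_mk, ?_⟩
      filter_upwards [ae_all_iff.2 fun j => (hmeas j).ae_eq_mk] with x hx
      simp only [hx]
    exact (lintegral_eq_zero_iff' hmlim).1 (le_antisymm h2 zero_le)
  rw [← hcov] at hlim ⊢
  rw [ae_restrict_iUnion_iff] at hlim ⊢
  intro n
  filter_upwards [hlim n, hF n] with x hx hliminf
  by_contra! hne
  have hc0 : 0 < χ x := lt_of_le_of_ne (hχM x).1 (Ne.symm hne.1)
  have hcM : χ x < M := lt_of_le_of_ne (hχM x).2 hne.2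
  have hx' : Tendsto (fun j => Bfun β 1 (ue (φ j) x / ε (φ j))) atTop (𝓝 (χ x)) :=
    hx.congr fun j => IsBeta.Bfun_eq (H.eps_pos _) _
  obtain ⟨m, hm, hev⟩ := H.beta.exists_eventually_le hc0 hcM hx'
  have h1 : ENNReal.ofReal m ≤
      liminf (fun j => ENNReal.ofReal (β (ue (φ j) x / ε (φ j)))) atTop :=
    le_liminf_of_le (by isBoundedDefault) (hev.mono fun j hj => ENNReal.ofReal_le_ofReal hj)
  rw [hliminf] at h1
  exact (ENNReal.ofReal_pos.2 hm).not_ge h1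

/-- On an open set where `u = 0`, the fluxes `|∇u^{ε_j}|^{p_{ε_j} - 1}` tend to zero in `L¹_loc`. -/
theorem tendsto_flux (H : LimitHyp Ω β M pmin pmax L L1 L2 ε pe fe ue u f p)
    {U K : Set (Euc N)} (hU : IsOpen U) (hUΩ : U ⊆ Ω) (hu0 : ∀ x ∈ U, u x = 0)
    (hK : IsCompact K) (hKU : K ⊆ U) :
    Tendsto (fun j => ∫ x in K, ‖gradient (ue j) x‖ ^ (pe j x - 1)) atTop (𝓝 0) := by
  obtain ⟨K', hK', hK'U, C, hC⟩ := IsBoundedSol.exists_flux_le_of_small H.open_Ω hU hUΩ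
    pmin pmax L1 L2 hK hKU
  have hg : Tendsto (fun σ : ℝ => √σ ^ (pmin - 1) * volume.real K + √σ * C) (𝓝 0) (𝓝 0) := by
    have h1 : Continuous fun σ : ℝ => √σ ^ (pmin - 1) * volume.real K + √σ * C :=
      ((Real.continuous_sqrt.rpow_const fun _ => Or.inr
        (by linarith [H.h_pmin])).mul_const _).add (Real.continuous_sqrt.mul_const _)
    have h2 := h1.tendsto 0
    simpa [Real.zero_rpow (show pmin - 1 ≠ 0 by linarith [H.h_pmin])] using h2
  rw [Metric.tendsto_atTop]
  intro e he
  obtain ⟨d, hd, hdg⟩ := Metric.tendsto_nhds_nhds.1 hg e he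
  set σ := min (d / 2) 1 with hσdef
  have hσ : 0 < σ := by positivity
  have hσd : dist σ 0 < d := by
    rw [dist_zero_right, Real.norm_of_nonneg hσ.le]
    exact (min_le_left _ _).trans_lt (half_lt_self hd)
  obtain ⟨n, hn⟩ := eventually_atTop.1
    (Metric.tendstoUniformlyOn_iff.1 (H.u_lim K' hK' (hK'U.trans hUΩ)) σ hσ)
  refine ⟨n, fun j hj => ?_⟩
  have h1 := hC (H.boundedSol j) hσ (min_le_right _ _) fun x hx => by
    have := hn j hj x hx
    rw [hu0 x (hK'U hx), dist_zero_left] at this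
    exact (le_abs_self _).trans this.le
  have h2 := hdg hσd
  rw [dist_zero_right, Real.norm_eq_abs] at h2 ⊢
  rw [abs_of_nonneg (integral_nonneg fun x => Real.rpow_nonneg (norm_nonneg _) _)]
  exact (h1.trans (le_abs_self _)).trans_lt h2

/-- If `f = 0` on `U`, the source contributes nothing in the limit to the equation tested with
`(1 + B_{ε_j}(u^{ε_j})) η`: a weakly-* convergent factor `f^{ε_j}` meets a strongly convergent one. -/
theorem tendsto_integral_f (H : LimitHyp Ω β M pmin pmax L L1 L2 ε pe fe ue u f p) {φ : ℕ → ℕ}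
    (hφ : StrictMono φ) {χ : Euc N → ℝ} (hχ : Measurable χ) (hχM : ∀ x, 0 ≤ χ x ∧ χ x ≤ M)
    (hlim : ∀ᵐ x ∂volume.restrict Ω,
      Tendsto (fun j => Bfun β (ε (φ j)) (ue (φ j) x)) atTop (𝓝 (χ x)))
    {U : Set (Euc N)} (hUΩ : U ⊆ Ω)
    (hf0 : ∀ᵐ x ∂volume.restrict U, f x = 0) {η : Euc N → ℝ} (hη : IsTest U η)
    (hη01 : ∀ x, 0 ≤ η x ∧ η x ≤ 1) :
    Tendsto (fun j => ∫ x in Ω,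
      fe (φ j) x * ((1 + Bfun β (ε (φ j)) (ue (φ j) x)) * η x)) atTop (𝓝 0) := by
  have hηΩ : IsTest Ω η := ⟨hη.1, hη.2.1, hη.2.2.trans hUΩ⟩
  have hmη := (isClosed_tsupport η).measurableSet
  have hηI : IntegrableOn η Ω := (hη.1.continuous.integrable_of_hasCompactSupport
    hη.2.1).integrableOn
  have hgI : IntegrableOn (fun x => (1 + χ x) * η x) Ω := by
    refine hηI.bdd_mul (c := 1 + M) (measurable_const.add hχ).aestronglyMeasurable
      (Eventually.of_forall fun x => ?_)
    rw [Real.norm_of_nonneg (by linarith [(hχM x).1])]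
    linarith [(hχM x).2]
  have h1 : Tendsto (fun j => ∫ x in Ω, fe (φ j) x * ((1 + χ x) * η x)) atTop (𝓝 0) := by
    have h2 := (H.f_lim _ hgI).comp hφ.tendsto_atTop
    have h3 : ∫ x in Ω, f x * ((1 + χ x) * η x) = 0 := by
      rw [setIntegral_eq_of_subset_of_forall_sdiff_eq_zero H.open_Ω.measurableSet hUΩ
        fun x hx => by
          simp [image_eq_zero_of_notMem_tsupport fun h => hx.2 (hη.2.2 h)]]
      refine integral_eq_zero_of_ae ?_
      filter_upwards [hf0] with x hx
      simp [hx]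
    rwa [h3] at h2
  have h4 : Tendsto (fun j => (∫ x in Ω,
      fe (φ j) x * ((1 + Bfun β (ε (φ j)) (ue (φ j) x)) * η x))
        - ∫ x in Ω, fe (φ j) x * ((1 + χ x) * η x)) atTop (𝓝 0) := by
    have h5 := (H.tendsto_L1 hχ hχM hlim hη.2.1 hηΩ.2.2).const_mul L2
    rw [mul_zero] at h5
    refine squeeze_zero_norm (fun j => ?_) h5
    have S := H.boundedSol (φ j)
    have hBI := (H.Bfun_ue_continuousOn (φ j))
    have hI1 : IntegrableOn (fun x =>
        fe (φ j) x * ((1 + Bfun β (ε (φ j)) (ue (φ j) x)) * η x)) Ω :=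
      S.f_mul_integrable (continuousOn_const.add hBI) hη.1.continuous hη.2.1 hηΩ.2.2
    have hI2 : IntegrableOn (fun x => fe (φ j) x * ((1 + χ x) * η x)) Ω := by
      refine hgI.bdd_mul (c := L2) (H.fe_meas _).aestronglyMeasurable ?_
      filter_upwards [ae_restrict_mem H.open_Ω.measurableSet] with x hx
      exact H.fe_bd _ x hx
    rw [← integral_sub hI1 hI2, setIntegral_eq_of_subset_of_forall_sdiff_eq_zero
      H.open_Ω.measurableSet hηΩ.2.2
      fun x hx => by simp [image_eq_zero_of_notMem_tsupport hx.2], ← integral_const_mul]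
    refine norm_integral_le_of_norm_le ?_ ?_
    · refine Integrable.const_mul (Integrable.abs ?_) _
      refine ((hBI.mono hηΩ.2.2).integrableOn_compact hη.2.1).sub ?_
      exact Measure.integrableOn_of_bounded (M := M) hη.2.1.measure_lt_top.ne
        hχ.aestronglyMeasurable (Eventually.of_forall fun x => by
          rw [Real.norm_of_nonneg (hχM x).1]
          exact (hχM x).2)
    · filter_upwards [ae_restrict_mem hmη] with x hx
      have h6 := H.fe_bd (φ j) x (hηΩ.2.2 hx)
      have h7 : fe (φ j) x * ((1 + Bfun β (ε (φ j)) (ue (φ j) x)) * η x)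
          - fe (φ j) x * ((1 + χ x) * η x)
          = fe (φ j) x * (Bfun β (ε (φ j)) (ue (φ j) x) - χ x) * η x := by ring
      rw [h7, norm_mul, norm_mul, Real.norm_of_nonneg (hη01 x).1, Real.norm_eq_abs,
        Real.norm_eq_abs]
      refine (mul_le_of_le_one_right (by positivity) (hη01 x).2).trans ?_
      gcongr
  have h8 := h4.add h1
  simpa using h8

/-- On an open set where both `u` and `f` vanish, the weighted energy
`∫ β_{ε_j}(u^{ε_j}) (1 + |∇u^{ε_j}|^{p_{ε_j}})` tends to zero locally. -/
theorem tendsto_phase_energy (H : LimitHyp Ω β M pmin pmax L L1 L2 ε pe fe ue u f p)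
    {φ : ℕ → ℕ} (hφ : StrictMono φ) {χ : Euc N → ℝ} (hχ : Measurable χ)
    (hχM : ∀ x, 0 ≤ χ x ∧ χ x ≤ M)
    (hlim : ∀ᵐ x ∂volume.restrict Ω,
      Tendsto (fun j => Bfun β (ε (φ j)) (ue (φ j) x)) atTop (𝓝 (χ x)))
    {U K : Set (Euc N)} (hU : IsOpen U) (hUΩ : U ⊆ Ω) (hu0 : ∀ x ∈ U, u x = 0)
    (hf0 : ∀ᵐ x ∂volume.restrict U, f x = 0) (hK : IsCompact K) (hKU : K ⊆ U) :
    Tendsto (fun j => ∫ x in K, betaEps β (ε (φ j)) (ue (φ j) x) *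
      (1 + ‖gradient (ue (φ j)) x‖ ^ pe (φ j) x)) atTop (𝓝 0) := by
  obtain ⟨η, hη, hη01, hηK⟩ := exists_cutoff hU hK hKU
  have hηΩ : IsTest Ω η := ⟨hη.1, hη.2.1, hη.2.2.trans hUΩ⟩
  obtain ⟨D, hD⟩ := (hη.2.1.fderiv ℝ).exists_bound_of_continuous
    (hη.1.continuous_fderiv (by simp))
  have h1 := (((H.tendsto_flux hU hUΩ hu0 hη.2.1 hη.2.2).comp hφ.tendsto_atTop).const_mul
    ((1 + M) * D)).sub (H.tendsto_integral_f hφ hχ hχM hlim hUΩ hf0 hη hη01)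
  rw [mul_zero, sub_zero] at h1
  have h0 : ∀ j x, 0 ≤ betaEps β (ε j) (ue j x) * (1 + ‖gradient (ue j) x‖ ^ pe j x) :=
    fun j x => mul_nonneg ((H.boundedSol j).b_nonneg _)
      (add_nonneg zero_le_one (Real.rpow_nonneg (norm_nonneg _) _))
  refine squeeze_zero (fun j => integral_nonneg (h0 (φ j))) (fun j => ?_) h1
  have S := H.boundedSol (φ j)
  have hbu : ContinuousOn (fun x => betaEps β (ε (φ j)) (ue (φ j) x)) Ω :=
    S.b_cont.comp_continuousOn S.u_cont
  exact (setIntegral_le_integral_mul_cutoff S.isOpen hK (hKU.trans hUΩ)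
    (hbu.mul (continuousOn_const.add S.energy_cont)) (fun x _ => h0 (φ j) x) hηΩ
    (fun x => (hη01 x).1) hηK).trans
    (S.reaction_energy_le (H.beta.hasDerivAt_Bfun _) (H.beta.Bfun_mem (H.eps_pos _)) hηΩ
      (fun x => (hη01 x).1) hD)

/-- On an open set where both `u` and `f` vanish, the translates of `B_{ε_j}(u^{ε_j})` differ from it
by a quantity tending to zero in `L¹_loc`, so `χ` is locally, hence on components, constant. -/
theorem ae_const_component (H : LimitHyp Ω β M pmin pmax L L1 L2 ε pe fe ue u f p)
    {φ : ℕ → ℕ} (hφ : StrictMono φ) {χ : Euc N → ℝ} (hχ : Measurable χ)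
    (hχM : ∀ x, 0 ≤ χ x ∧ χ x ≤ M)
    (hlim : ∀ᵐ x ∂volume.restrict Ω,
      Tendsto (fun j => Bfun β (ε (φ j)) (ue (φ j) x)) atTop (𝓝 (χ x)))
    {U : Set (Euc N)} (hU : IsOpen U) (hUΩ : U ⊆ Ω) (hu0 : ∀ x ∈ U, u x = 0)
    (hf0 : ∀ᵐ x ∂volume.restrict U, f x = 0) (x₀ : Euc N) :
    (∀ᵐ x ∂volume.restrict (connectedComponentIn U x₀), χ x = M) ∨
      (∀ᵐ x ∂volume.restrict (connectedComponentIn U x₀), χ x = 0) := by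
  have hval := H.ae_zero_or_M hφ hχM hlim
  have hlim' : ∀ᵐ x ∂volume.restrict Ω,
      Tendsto (fun j => phase Ω β ε ue (φ j) x) atTop (𝓝 (χ x)) := by
    filter_upwards [hlim, ae_restrict_mem H.open_Ω.measurableSet] with x hx hxΩ
    simpa only [phase_of_mem β ε ue _ hxΩ] using hx
  refine _root_.ae_const_component H.beta.M_pos.ne' hU (fun y hy => ?_) x₀
  obtain ⟨R, hR, hRU⟩ := Metric.nhds_basis_closedBall.mem_iff.1 (hU.mem_nhds hy)
  set r := R / 3 with hr
  have hr0 : 0 < r := by positivity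
  have hsub : closedBall y r ⊆ closedBall y R := closedBall_subset_closedBall (by linarith)
  have hthick : cthickening (2 * r) (closedBall y r) ⊆ U := by
    rw [cthickening_closedBall (by positivity) hr0.le]
    refine (closedBall_subset_closedBall ?_).trans hRU
    linarith
  have hcomp : IsCompact (closedBall y r) := isCompact_closedBall y r
  refine ⟨r, hr0, ae_const_closedBall hχ hr0 (fun h hh => ?_)
    (ae_restrict_of_ae_restrict_of_subset ((hsub.trans hRU).trans hUΩ) hval)⟩
  have hadd : ∀ x ∈ closedBall y r, x + h ∈ Ω := fun x hx =>
    hUΩ (hthick (mem_cthickening_of_dist_le _ x _ _ hx (by simpa using hh)))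
  refine ae_translate_eq (U := Ω) (b := fun j => phase Ω β ε ue (φ j))
    hcomp.measurableSet (fun j => H.phase_measurable (φ j)) hlim'
    ((hsub.trans hRU).trans hUΩ) hadd ?_
  have hE := H.tendsto_phase_energy hφ hχ hχM hlim hU hUΩ hu0 hf0 hcomp.cthickening hthick
  have hE' := ENNReal.Tendsto.const_mul (a := ‖h‖ₑ) (ENNReal.tendsto_ofReal hE)
    (Or.inr enorm_ne_top)
  rw [ENNReal.ofReal_zero, mul_zero] at hE'
  exact tendsto_of_tendsto_of_tendsto_of_le_of_le tendsto_const_nhds hE' (fun _ => zero_le)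
    fun j => H.lintegral_phase_translate_le (φ j) hcomp (hthick.trans hUΩ) hh

end LimitHyp

/-- **Lemma 4.1**: `B_{ε_j}(u^{ε_j}) → χ` in `L¹_loc(Ω)` (along a subsequence), `χ = M` on
`{u > 0}`, `χ ∈ {0, M}` a.e., and if `f = 0` a.e. on the interior of `{u = 0}` then `χ` is a.e.
constant (`0` or `M`) on each connected component of that interior. -/
theorem basic_limits
    (N : ℕ) (hN : 1 ≤ N) (Ω : Set (Euc N)) (β : ℝ → ℝ)
    (M pmin pmax L L1 L2 : ℝ) (ε : ℕ → ℝ) (pe fe ue : ℕ → Euc N → ℝ)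
    (u f p : Euc N → ℝ)
    (H : LimitHyp Ω β M pmin pmax L L1 L2 ε pe fe ue u f p) :
    ∃ φ : ℕ → ℕ, StrictMono φ ∧
      ∃ χ : Euc N → ℝ, Measurable χ ∧
        (∀ x, 0 ≤ χ x ∧ χ x ≤ M) ∧
        (∀ K : Set (Euc N), IsCompact K → K ⊆ Ω →
          Tendsto (fun j => ∫ x in K, |Bfun β (ε (φ j)) (ue (φ j) x) - χ x|)
            atTop (𝓝 0)) ∧
        (∀ᵐ x ∂(volume.restrict {x | x ∈ Ω ∧ 0 < u x}), χ x = M) ∧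
        (∀ᵐ x ∂(volume.restrict Ω), χ x = 0 ∨ χ x = M) ∧
        ((∀ᵐ x ∂(volume.restrict (interior {x | x ∈ Ω ∧ u x = 0})), f x = 0) →
          ∀ x₀ ∈ interior {x | x ∈ Ω ∧ u x = 0},
            (∀ᵐ x ∂(volume.restrict
                (connectedComponentIn (interior {x | x ∈ Ω ∧ u x = 0}) x₀)), χ x = M) ∨
            (∀ᵐ x ∂(volume.restrict
                (connectedComponentIn (interior {x | x ∈ Ω ∧ u x = 0}) x₀)), χ x = 0)) := by
  obtain ⟨φ, hφ, χ, hχ, hχM, hlim⟩ := H.exists_subseq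
  have hUΩ : interior {x | x ∈ Ω ∧ u x = 0} ⊆ Ω := fun x hx => (interior_subset hx).1
  exact ⟨φ, hφ, χ, hχ, hχM, fun K hK hKΩ => H.tendsto_L1 hχ hχM hlim hK hKΩ,
    H.ae_eq_of_pos hφ hlim, H.ae_zero_or_M hφ hχM hlim, fun hf0 x₀ _ =>
      H.ae_const_component hφ hχ hχM hlim isOpen_interior hUΩ
        (fun x hx => (interior_subset hx).2) hf0 x₀⟩
end
end
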